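/- Let q ≥ 3 be an integer and let β(n) = β_s(q) − ξ(n) where ξ(n) ≥ 0 satisfies 0 ≤ liminf_{n→∞} n^{2/3} ξ(n) ≤ limsup_{n→∞} n^{2/3} ξ(n) < ∞. Then for every ε ∈ (0,1) there exist constants c_ε, C_ε > 0 such that for all sufficiently large n, c_ε n^{4/3} ≤ t_mix(ε)(n) ≤ C_ε n^{4/3}; moreover the family of chains does not exhibit cutoff, i.e., there exist 0 < δ < ε < 1 such that limsup_{n→∞} t_mix(δ)(n)/t_mix(ε)(n) > 1. -/

import Mathlib

open Finset Filter

/-- The (unnormalized) Curie–Weiss Potts weight of a configuration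
`σ : Fin n → Fin q` at inverse temperature `β`:
`exp((β/n) * Σ_{u,v} 1[σ u = σ v])`. -/
noncomputable def pottsWeight (q n : ℕ) (β : ℝ) (σ : Fin n → Fin q) : ℝ :=
  Real.exp ((β / (n : ℝ)) * ∑ u : Fin n, ∑ v : Fin n, if σ u = σ v then (1 : ℝ) else 0)

/-- The Curie–Weiss Potts probability measure `μ_n` on configurations. -/
noncomputable def pottsMeasure (q n : ℕ) (β : ℝ) (σ : Fin n → Fin q) : ℝ :=
  pottsWeight q n β σ / ∑ τ : Fin n → Fin q, pottsWeight q n β τ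

/-- The transition matrix `P_n` of the Glauber dynamics: pick a uniform vertex `u`
and resample its color according to the conditional Potts distribution given the
colors of all other vertices. -/
noncomputable def glauberKernel (q n : ℕ) (β : ℝ) :
    Matrix (Fin n → Fin q) (Fin n → Fin q) ℝ :=
  fun σ τ =>
    (1 / (n : ℝ)) * ∑ u : Fin n,
      if ∀ v : Fin n, v ≠ u → τ v = σ v then
        pottsMeasure q n β τ / ∑ k : Fin q, pottsMeasure q n β (Function.update σ u k)
      else 0

/-- Total-variation distance between two (probability) functions on a finite set:
`max_{A ⊆ S} |ν(A) − ν'(A)|`. -/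
noncomputable def tvDist {S : Type*} [Fintype S] (ν ν' : S → ℝ) : ℝ :=
  ⨆ A : Finset S, |∑ x ∈ A, ν x - ∑ x ∈ A, ν' x|

/-- Worst-case total-variation distance to stationarity after `t` steps:
`d_t(n) = max_{σ₀} ‖P_n^t(σ₀,·) − μ_n‖_TV`. -/
noncomputable def glauberDist (q n : ℕ) (β : ℝ) (t : ℕ) : ℝ :=
  ⨆ σ₀ : Fin n → Fin q,
    tvDist (fun τ => (glauberKernel q n β ^ t) σ₀ τ) (pottsMeasure q n β)

/-- The `ε`-mixing time `t_mix(ε)(n) = inf {t : d_t(n) ≤ ε}`. -/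
noncomputable def mixingTime (q n : ℕ) (β : ℝ) (ε : ℝ) : ℕ :=
  sInf {t : ℕ | glauberDist q n β t ≤ ε}

/-- The drift function `D_β(x) = −x + (1 + (q−1) e^{2β(1−qx)/(q−1)})⁻¹`. -/
noncomputable def Dfun (q : ℕ) (β x : ℝ) : ℝ :=
  -x + (1 + ((q : ℝ) - 1) * Real.exp (2 * β * (1 - (q : ℝ) * x) / ((q : ℝ) - 1)))⁻¹

/-- The dynamical (spinodal) critical inverse temperature
`β_s(q) = sup {β ≥ 0 : D_β(x) ≠ 0 for all x ∈ (1/q,1)}`. -/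
noncomputable def betaS (q : ℕ) : ℝ :=
  sSup {β : ℝ | 0 ≤ β ∧ ∀ x ∈ Set.Ioo (1 / (q : ℝ)) 1, Dfun q β x ≠ 0}

/-- The constant `α₁(β,q) = 1/(2(1 − 2β/q))`. -/
noncomputable def alpha1 (β : ℝ) (q : ℕ) : ℝ := 1 / (2 * (1 - 2 * β / (q : ℝ)))

/-- The static critical inverse temperature `β_c(q) = (q−1)log(q−1)/(q−2)`
for `q ≥ 3`, with `β_c(2) = 1`. -/
noncomputable def betaC (q : ℕ) : ℝ :=
  if q = 2 then 1 else ((q : ℝ) - 1) * Real.log ((q : ℝ) - 1) / ((q : ℝ) - 2)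

/-!
Under the Glauber dynamics the proportion `x` of a single color is a nearest neighbor walk with
steps of size `1 / n`. When the other colors are balanced its drift is `Dfun q β x / n`. At
`β = betaS q` the drift is nonpositive on `[1 / q, 1]` and has a degenerate zero `a`, near which
`Dfun` is comparable to `-(x - a) ^ 2`; lowering `β` by `ξ` only adds `O(ξ)`. Write `n = ν ^ 3`. On
the scale `x - a = O(1 / ν)` a step has mean of order `ν ^ (-5)` and variance of order `ν ^ (-6)`,
so that over `ν ^ 4 = n ^ (4 / 3)` steps both drift and diffusion move `x` by order `1 / ν`, the
width of this bottleneck.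

For the upper bound, a bounded function which contracts by a factor `1 - θ / ν ^ 4` per step and is
at least `1` on unbalanced configurations shows that from any start all proportions are close to
`1 / q` after `O(ν ^ 4)` steps; from there a greedy coupling contracts the Hamming distance.

For the lower bound, `arctan (κ * ν * (x - a)) + π / 4`, penalized by the imbalance of the other
colors, decays at most by a factor `1 - Λ / ν ^ 4` per step where it is positive. Started from a
constant configuration the chain therefore stays, up to time `T * ν ^ 4`, with probability at least
`exp (-2 * Λ * T) - o(1)` in a set whose stationary mass vanishes. Since this probability is less
than one but never vanishes on the scale `n ^ (4 / 3)`, small values of `ε` cost a multiple of the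
mixing time and there is no cutoff.
-/

section ProbabilityVectors

open scoped Matrix

variable {ι : Type*} [Fintype ι] {p p' : ι → ℝ}

theorem dotProduct_const_of_mem_stdSimplex (hp : p ∈ stdSimplex ℝ ι) (c : ℝ) :
    p ⬝ᵥ Function.const ι c = c := by
  simp only [dotProduct, Function.const_apply, ← Finset.sum_mul, hp.2, one_mul]

theorem dotProduct_add_const_of_mem_stdSimplex (hp : p ∈ stdSimplex ℝ ι) (f : ι → ℝ) (c : ℝ) :
    (p ⬝ᵥ fun x => f x + c) = p ⬝ᵥ f + c := by
  have h := dotProduct_add p f (Function.const ι c)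
  rwa [dotProduct_const_of_mem_stdSimplex hp] at h

theorem dotProduct_mono_of_mem_stdSimplex (hp : p ∈ stdSimplex ℝ ι) {f g : ι → ℝ} (h : f ≤ g) :
    p ⬝ᵥ f ≤ p ⬝ᵥ g :=
  dotProduct_le_dotProduct_of_nonneg_left h hp.1

theorem dotProduct_le_of_mem_stdSimplex (hp : p ∈ stdSimplex ℝ ι) {f : ι → ℝ} {c : ℝ}
    (h : ∀ x, f x ≤ c) : p ⬝ᵥ f ≤ c :=
  (dotProduct_mono_of_mem_stdSimplex hp (g := Function.const ι c) h).trans_eq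
    (dotProduct_const_of_mem_stdSimplex hp c)

theorem le_dotProduct_of_mem_stdSimplex (hp : p ∈ stdSimplex ℝ ι) {f : ι → ℝ} {c : ℝ}
    (h : ∀ x, c ≤ f x) : c ≤ p ⬝ᵥ f :=
  (dotProduct_const_of_mem_stdSimplex hp c).symm.trans_le
    (dotProduct_mono_of_mem_stdSimplex hp (f := Function.const ι c) h)

theorem dotProduct_affine_of_mem_stdSimplex (hp : p ∈ stdSimplex ℝ ι) (f : ι → ℝ) (a b : ℝ) :
    (p ⬝ᵥ fun x => a * f x + b) = a * p ⬝ᵥ f + b := by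
  rw [dotProduct_add_const_of_mem_stdSimplex hp (fun x => a * f x)]
  exact congrArg (· + b) (dotProduct_smul a p f)

theorem dotProduct_sub_dotProduct_le (hp : p ∈ stdSimplex ℝ ι) (hp' : p' ∈ stdSimplex ℝ ι)
    {f g b c : ι → ℝ} {K : ℝ} (h : ∀ x y, f x - g y ≤ K + b x + c y) :
    p ⬝ᵥ f - p' ⬝ᵥ g ≤ K + p ⬝ᵥ b + p' ⬝ᵥ c := by
  have hfix : ∀ y, p ⬝ᵥ f - (K + p ⬝ᵥ b) ≤ g y + c y := fun y => by
    have := dotProduct_mono_of_mem_stdSimplex hp (f := f) (g := fun x => b x + (K + g y + c y))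
      fun x => by linarith [h x y]
    rw [dotProduct_add_const_of_mem_stdSimplex hp] at this
    linarith
  have := le_dotProduct_of_mem_stdSimplex hp' hfix
  rw [show (fun y => g y + c y) = g + c from rfl, dotProduct_add] at this
  linarith

/-- The total-variation mass by which `p` exceeds `p'`, in the form in which couplings use it. -/
noncomputable def excessMass (p p' : ι → ℝ) : ℝ := ∑ k, max (p k - p' k) 0

-- The maximal coupling of `p` and `p'`, in dual form: on the common mass `min p p'` the two
-- copies agree, the excess mass is matched arbitrarily.
theorem dotProduct_sub_dotProduct_le_excessMass (hp : p ∈ stdSimplex ℝ ι)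
    (hp' : p' ∈ stdSimplex ℝ ι) {f g : ι → ℝ} {D r : ℝ} (hdiag : ∀ k, f k - g k ≤ D)
    (hoff : ∀ k l, f k - g l ≤ D + r) :
    p ⬝ᵥ f - p' ⬝ᵥ g ≤ D + r * excessMass p p' := by
  have hne : Nonempty ι := by
    by_contra! hempty
    simpa [univ_eq_empty] using hp.2
  obtain ⟨l₀, hl₀⟩ := Finite.exists_min g
  have hterm : ∀ k, p k * f k - p' k * g k
      ≤ p k * (D + g l₀) - p' k * g l₀ + r * max (p k - p' k) 0 := fun k => by
    rcases le_total (p k) (p' k) with h | h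
    · rw [max_eq_right (by linarith)]
      linarith [mul_le_mul_of_nonneg_left (hdiag k) (hp.1 k),
        mul_le_mul_of_nonneg_left (hl₀ k) (sub_nonneg.2 h)]
    · rw [max_eq_left (by linarith)]
      linarith [mul_le_mul_of_nonneg_left (hdiag k) (hp'.1 k),
        mul_le_mul_of_nonneg_left (hoff k l₀) (sub_nonneg.2 h)]
  calc p ⬝ᵥ f - p' ⬝ᵥ g = ∑ k, (p k * f k - p' k * g k) := (sum_sub_distrib _ _).symm
    _ ≤ ∑ k, (p k * (D + g l₀) - p' k * g l₀ + r * max (p k - p' k) 0) :=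
        sum_le_sum fun k _ => hterm k
    _ = D + r * excessMass p p' := by
        rw [sum_add_distrib, sum_sub_distrib, ← Finset.sum_mul, ← Finset.sum_mul, hp.2, hp'.2,
          ← mul_sum, excessMass]
        ring

theorem dotProduct_indicator_one (f : ι → ℝ) (A : Finset ι) :
    f ⬝ᵥ (A : Set ι).indicator 1 = ∑ x ∈ A, f x := by
  classical
  simp [dotProduct, Set.indicator_apply]

theorem dotProduct_indicator_sub_le_tvDist (ν ν' : ι → ℝ) (A : Set ι) :
    ν ⬝ᵥ A.indicator 1 - ν' ⬝ᵥ A.indicator 1 ≤ tvDist ν ν' := by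
  classical
  rw [← Set.coe_toFinset A, dotProduct_indicator_one, dotProduct_indicator_one]
  exact (le_abs_self _).trans
    (le_ciSup (f := fun B : Finset ι => |∑ x ∈ B, ν x - ∑ x ∈ B, ν' x|)
      (Set.finite_range _).bddAbove A.toFinset)

end ProbabilityVectors

section MarkovChains

open scoped Matrix

variable {S : Type*} [Fintype S] {P : Matrix S S ℝ} {μ Ψ : S → ℝ} {θ δ : ℝ}

theorem tvDist_row_le_of_forall_sub_le (hμ : μ ∈ stdSimplex ℝ S) (hμP : μ ᵥ* P = μ) {ε : ℝ}
    (hosc : ∀ g : S → ℝ, 0 ≤ g → g ≤ 1 → ∀ x y, (P *ᵥ g) x - (P *ᵥ g) y ≤ ε) (x : S) :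
    tvDist (P x) μ ≤ ε := by
  refine ciSup_le fun A => ?_
  set g := P *ᵥ (A : Set S).indicator 1
  have hg : ∀ x y, g x - g y ≤ ε := hosc _ (Set.indicator_nonneg fun _ _ => zero_le_one)
    (Set.indicator_le_self' fun _ _ => zero_le_one)
  have hμg : ∑ y ∈ A, μ y = μ ⬝ᵥ g := by
    rw [Matrix.dotProduct_mulVec, hμP, dotProduct_indicator_one]
  rw [← dotProduct_indicator_one (P x) A, hμg, abs_le]
  change -ε ≤ g x - μ ⬝ᵥ g ∧ g x - μ ⬝ᵥ g ≤ ε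
  constructor
  · linarith [dotProduct_le_of_mem_stdSimplex hμ (f := g) (c := g x + ε)
      fun y => by linarith [hg y x]]
  · linarith [le_dotProduct_of_mem_stdSimplex hμ (f := g) (c := g x - ε)
      fun y => by linarith [hg x y]]

theorem dotProduct_le_of_vecMul_eq_of_drift (hμ : μ ∈ stdSimplex ℝ S) (hμP : μ ᵥ* P = μ)
    (hθ : 0 < θ) (h : ∀ x, (P *ᵥ Ψ) x ≤ (1 - θ) * Ψ x + δ) : μ ⬝ᵥ Ψ ≤ δ / θ := by
  have hstep : μ ⬝ᵥ (P *ᵥ Ψ) ≤ (1 - θ) * μ ⬝ᵥ Ψ + δ :=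
    (dotProduct_mono_of_mem_stdSimplex hμ h).trans_eq
      (dotProduct_affine_of_mem_stdSimplex hμ Ψ _ _)
  rw [Matrix.dotProduct_mulVec, hμP] at hstep
  rw [le_div_iff₀ hθ]
  linarith

variable [DecidableEq S]

theorem row_mem_stdSimplex_of_mem_rowStochastic (hP : P ∈ Matrix.rowStochastic ℝ S) (x : S) :
    P x ∈ stdSimplex ℝ S :=
  ⟨fun _ => Matrix.nonneg_of_mem_rowStochastic hP, Matrix.sum_row_of_mem_rowStochastic hP x⟩

theorem mulVec_mono_of_mem_rowStochastic (hP : P ∈ Matrix.rowStochastic ℝ S) {f g : S → ℝ}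
    (h : f ≤ g) : P *ᵥ f ≤ P *ᵥ g := fun x =>
  dotProduct_mono_of_mem_stdSimplex (row_mem_stdSimplex_of_mem_rowStochastic hP x) h

theorem mulVec_sub_mulVec_le_one_of_mem_rowStochastic (hP : P ∈ Matrix.rowStochastic ℝ S)
    {f : S → ℝ} (hf0 : 0 ≤ f) (hf1 : f ≤ 1) (x y : S) : (P *ᵥ f) x - (P *ᵥ f) y ≤ 1 := by
  have hup : (P *ᵥ f) x ≤ 1 :=
    dotProduct_le_of_mem_stdSimplex (row_mem_stdSimplex_of_mem_rowStochastic hP x) hf1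
  have hlow : 0 ≤ (P *ᵥ f) y :=
    le_dotProduct_of_mem_stdSimplex (row_mem_stdSimplex_of_mem_rowStochastic hP y) hf0
  linarith

theorem mulVec_inf_le_of_drift (hP : P ∈ Matrix.rowStochastic ℝ S) {f g : S → ℝ} {x : S}
    (hf : f x ≤ g x → (P *ᵥ f) x ≤ (1 - θ) * f x + δ)
    (hg : g x < f x → (P *ᵥ g) x ≤ (1 - θ) * g x + δ) :
    (P *ᵥ (f ⊓ g)) x ≤ (1 - θ) * (f ⊓ g) x + δ := by
  rw [Pi.inf_apply]
  rcases le_or_gt (f x) (g x) with h | h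
  · rw [inf_eq_left.2 h]
    exact (mulVec_mono_of_mem_rowStochastic hP inf_le_left x).trans (hf h)
  · rw [inf_eq_right.2 h.le]
    exact (mulVec_mono_of_mem_rowStochastic hP inf_le_right x).trans (hg h)

theorem le_mulVec_sup_zero_of_drift (hP : P ∈ Matrix.rowStochastic ℝ S) (hδ : 0 ≤ δ)
    {f : S → ℝ} {x : S} (hf : 0 < f x → (1 - θ) * f x - δ ≤ (P *ᵥ f) x) :
    (1 - θ) * (f ⊔ 0) x - δ ≤ (P *ᵥ (f ⊔ 0)) x := by
  rw [Pi.sup_apply, Pi.zero_apply]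
  rcases le_or_gt (f x) 0 with h | h
  · rw [sup_eq_right.2 h]
    have := mulVec_mono_of_mem_rowStochastic hP (le_sup_right : 0 ≤ f ⊔ 0) x
    rw [Matrix.mulVec_zero, Pi.zero_apply] at this
    linarith
  · rw [sup_eq_left.2 h.le]
    exact (hf h).trans (mulVec_mono_of_mem_rowStochastic hP le_sup_left x)

theorem vecMul_pow_eq_of_vecMul_eq (hμ : μ ᵥ* P = μ) (t : ℕ) : μ ᵥ* P ^ t = μ := by
  induction t with
  | zero => simp
  | succ t ih => rw [pow_succ, ← Matrix.vecMul_vecMul, ih, hμ]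

theorem pow_mulVec_le_of_drift (hP : P ∈ Matrix.rowStochastic ℝ S) (hθ : 0 < θ) (hθ1 : θ ≤ 1)
    (hδ : 0 ≤ δ) (h : ∀ x, (P *ᵥ Ψ) x ≤ (1 - θ) * Ψ x + δ) (t : ℕ) (x : S) :
    (P ^ t *ᵥ Ψ) x ≤ (1 - θ) ^ t * Ψ x + δ / θ := by
  have hexact : ∀ x, (P ^ t *ᵥ Ψ) x ≤ (1 - θ) ^ t * Ψ x + δ / θ * (1 - (1 - θ) ^ t) := by
    induction t with
    | zero => simp
    | succ t ih =>
      intro x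
      have hrow := row_mem_stdSimplex_of_mem_rowStochastic hP x
      rw [pow_succ', ← Matrix.mulVec_mulVec]
      calc (P *ᵥ (P ^ t *ᵥ Ψ)) x
          ≤ (1 - θ) ^ t * (P *ᵥ Ψ) x + δ / θ * (1 - (1 - θ) ^ t) :=
            (dotProduct_mono_of_mem_stdSimplex hrow ih).trans_eq
              (dotProduct_affine_of_mem_stdSimplex hrow _ _ _)
        _ ≤ (1 - θ) ^ t * ((1 - θ) * Ψ x + δ) + δ / θ * (1 - (1 - θ) ^ t) := by
            have := pow_nonneg (sub_nonneg.2 hθ1) t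
            gcongr
            exact h x
        _ = _ := by field_simp; ring
  refine (hexact x).trans ?_
  have : 0 ≤ δ / θ * (1 - θ) ^ t := mul_nonneg (by positivity) (pow_nonneg (by linarith) t)
  linarith

theorem le_pow_mulVec_of_drift (hP : P ∈ Matrix.rowStochastic ℝ S) (hθ : 0 ≤ θ) (hθ1 : θ ≤ 1)
    (hδ : 0 ≤ δ) (h : ∀ x, (1 - θ) * Ψ x - δ ≤ (P *ᵥ Ψ) x) (t : ℕ) (x : S) :
    (1 - θ) ^ t * Ψ x - t * δ ≤ (P ^ t *ᵥ Ψ) x := by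
  induction t generalizing x with
  | zero => simp
  | succ t ih =>
    have hrow := row_mem_stdSimplex_of_mem_rowStochastic hP x
    have hpow : (1 - θ) ^ t * δ ≤ δ :=
      mul_le_of_le_one_left hδ (pow_le_one₀ (by linarith) (by linarith))
    rw [pow_succ' P, ← Matrix.mulVec_mulVec]
    calc (1 - θ) ^ (t + 1) * Ψ x - (t + 1 : ℕ) * δ
        ≤ (1 - θ) ^ t * ((1 - θ) * Ψ x - δ) + -(t * δ) := by
          rw [pow_succ]; push_cast; linarith
      _ ≤ (1 - θ) ^ t * (P *ᵥ Ψ) x + -(t * δ) := by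
          have := pow_nonneg (sub_nonneg.2 hθ1) t
          gcongr
          exact h x
      _ ≤ (P *ᵥ (P ^ t *ᵥ Ψ)) x :=
          (dotProduct_affine_of_mem_stdSimplex hrow _ _ _).symm.trans_le
            (dotProduct_mono_of_mem_stdSimplex hrow fun y => by linarith [ih y])

end MarkovChains

section Softmax

open scoped Matrix

variable {ι : Type*} [Fintype ι]

/-- The probability vector proportional to `exp ∘ a`; the conditional law of one color under the
Potts measure has this form. -/
noncomputable def softmax (a : ι → ℝ) (k : ι) : ℝ := Real.exp (a k) / ∑ j, Real.exp (a j)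

theorem sum_exp_pos [Nonempty ι] (a : ι → ℝ) : 0 < ∑ j, Real.exp (a j) :=
  sum_pos (fun _ _ => Real.exp_pos _) univ_nonempty

theorem softmax_mem_stdSimplex [Nonempty ι] (a : ι → ℝ) : softmax a ∈ stdSimplex ℝ ι :=
  ⟨fun _ => div_nonneg (Real.exp_pos _).le (sum_exp_pos a).le, by
    simp only [softmax, ← Finset.sum_div, div_self (sum_exp_pos a).ne']⟩

theorem softmax_pos [Nonempty ι] (a : ι → ℝ) (k : ι) : 0 < softmax a k :=
  div_pos (Real.exp_pos _) (sum_exp_pos a)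

theorem softmax_le_one [Nonempty ι] (a : ι → ℝ) (k : ι) : softmax a k ≤ 1 :=
  (single_le_sum (fun i _ => (softmax_pos a i).le) (mem_univ k)).trans_eq
    (softmax_mem_stdSimplex a).2

theorem softmax_const [Nonempty ι] (c : ℝ) (k : ι) :
    softmax (Function.const ι c) k = 1 / Fintype.card ι := by
  simp only [softmax, Function.const_apply, sum_const, card_univ, nsmul_eq_mul]
  field_simp

theorem softmax_le_exp_mul_softmax {a b : ι → ℝ} {δ : ℝ} (h : ∀ j, |a j - b j| ≤ δ) (k : ι) :
    softmax a k ≤ Real.exp (2 * δ) * softmax b k := by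
  have : Nonempty ι := ⟨k⟩
  have hnum : Real.exp (a k) ≤ Real.exp δ * Real.exp (b k) := by
    rw [← Real.exp_add, Real.exp_le_exp]
    linarith [(abs_le.mp (h k)).2]
  have hden : ∑ j, Real.exp (b j) ≤ Real.exp δ * ∑ j, Real.exp (a j) := by
    rw [mul_sum]
    refine sum_le_sum fun j _ => ?_
    rw [← Real.exp_add, Real.exp_le_exp]
    linarith [(abs_le.mp (h j)).1]
  have hA := sum_exp_pos a
  have hB := sum_exp_pos b
  rw [softmax, softmax, div_le_iff₀ hA, ← mul_div_assoc, div_mul_eq_mul_div, le_div_iff₀ hB]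
  calc Real.exp (a k) * ∑ j, Real.exp (b j)
      ≤ (Real.exp δ * Real.exp (b k)) * (Real.exp δ * ∑ j, Real.exp (a j)) := by gcongr
    _ = _ := by rw [two_mul, Real.exp_add]; ring

theorem exp_le_one_add_two_mul {x : ℝ} (h0 : 0 ≤ x) (h1 : x ≤ 1) : Real.exp x ≤ 1 + 2 * x := by
  have := (abs_le.mp (Real.abs_exp_sub_one_sub_id_le (abs_le.2 ⟨by linarith, h1⟩))).2
  nlinarith

theorem abs_softmax_sub_softmax_le {a b : ι → ℝ} {δ : ℝ} (hδ : 0 ≤ δ) (hδ1 : 2 * δ ≤ 1)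
    (h : ∀ j, |a j - b j| ≤ δ) (k : ι) : |softmax a k - softmax b k| ≤ 4 * δ := by
  have : Nonempty ι := ⟨k⟩
  have hexp := exp_le_one_add_two_mul (by linarith : 0 ≤ 2 * δ) hδ1
  have hone_sided : ∀ {a b : ι → ℝ}, (∀ j, |a j - b j| ≤ δ) →
      softmax a k - softmax b k ≤ 4 * δ := fun {a b} h => by
    have := softmax_le_exp_mul_softmax h k
    nlinarith [softmax_pos b k, softmax_le_one b k]
  rw [abs_le]
  constructor
  · linarith [hone_sided fun j => (abs_sub_comm (b j) (a j)).trans_le (h j)]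
  · exact hone_sided h

theorem exp_neg_two_mul_div_card_le_softmax {a : ι → ℝ} {δ : ℝ} (h : ∀ j, |a j| ≤ δ) (k : ι) :
    Real.exp (-(2 * δ)) / Fintype.card ι ≤ softmax a k := by
  have : Nonempty ι := ⟨k⟩
  have hle := softmax_le_exp_mul_softmax (a := Function.const ι 0) (b := a)
    (fun j => by simpa using h j) k
  rw [softmax_const, ← div_le_iff₀' (Real.exp_pos _)] at hle
  rwa [Real.exp_neg, ← one_div, div_right_comm]

theorem softmax_sub_softmax_le_mul {a b : ι → ℝ} (hab : ∀ j, |b j - a j| ≤ 1) (k : ι) :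
    softmax a k - softmax b k
      ≤ softmax a k * (softmax a ⬝ᵥ (b - a) + softmax a ⬝ᵥ (b - a) ^ 2 - (b k - a k)) := by
  have : Nonempty ι := ⟨k⟩
  set p := softmax a
  set M := p ⬝ᵥ fun j => Real.exp (b j - a j) with hM
  have hA := sum_exp_pos a
  have hMsum : M = (∑ j, Real.exp (b j)) / ∑ j, Real.exp (a j) := by
    rw [hM, Finset.sum_div]
    refine sum_congr rfl fun j _ => ?_
    change Real.exp (a j) / _ * Real.exp (b j - a j) = _
    rw [div_mul_eq_mul_div, ← Real.exp_add, add_sub_cancel]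
  have hMpos : 0 < M := hMsum ▸ div_pos (sum_exp_pos b) hA
  have htilt : softmax b k = p k * (Real.exp (b k - a k) / M) := by
    have : Real.exp (b k) = Real.exp (a k) * Real.exp (b k - a k) := by
      rw [← Real.exp_add]; ring_nf
    change Real.exp (b k) / _ = Real.exp (a k) / _ * _
    have := sum_exp_pos b
    rw [hMsum, ‹Real.exp (b k) = _›]
    field_simp
  have hMle : M ≤ 1 + p ⬝ᵥ (b - a) + p ⬝ᵥ (b - a) ^ 2 := by
    have hp := softmax_mem_stdSimplex a
    rw [add_assoc, add_comm 1, ← dotProduct_add,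
      ← dotProduct_add_const_of_mem_stdSimplex (p := p) hp]
    refine dotProduct_mono_of_mem_stdSimplex hp fun j => ?_
    have := (abs_le.mp (Real.abs_exp_sub_one_sub_id_le (hab j))).2
    simp only [Pi.add_apply, Pi.sub_apply, Pi.pow_apply]
    linarith
  have hexp : 1 + (b k - a k) - (M - 1) ≤ Real.exp (b k - a k) / M := by
    rw [le_div_iff₀ hMpos]
    calc (1 + (b k - a k) - (M - 1)) * M ≤ Real.exp (b k - a k - (M - 1)) * Real.exp (M - 1) := by
          gcongr
          · linarith [Real.add_one_le_exp (b k - a k - (M - 1))]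
          · linarith [Real.add_one_le_exp (M - 1)]
      _ = _ := by rw [← Real.exp_add]; ring_nf
  rw [htilt, ← mul_one_sub]
  exact mul_le_mul_of_nonneg_left (by linarith) (softmax_pos a k).le

theorem abs_dotProduct_le_of_sum_eq_zero {p v : ι → ℝ} {c κ : ℝ} (hp : ∀ j, |p j - c| ≤ κ)
    (hv : ∑ j, v j = 0) : |p ⬝ᵥ v| ≤ κ * ∑ j, |v j| := by
  have hcentered : p ⬝ᵥ v = ∑ j, (p j - c) * v j := by
    simp only [sub_mul, sum_sub_distrib, ← mul_sum, hv, mul_zero, sub_zero]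
    rfl
  rw [hcentered, mul_sum]
  refine (abs_sum_le_sum_abs _ _).trans (sum_le_sum fun j _ => ?_)
  rw [abs_mul]
  exact mul_le_mul_of_nonneg_right (hp j) (abs_nonneg _)

theorem softmax_dotProduct_sq_le (a : ι → ℝ) {v : ι → ℝ} {κ : ℝ} (hv : ∀ j, |v j| ≤ κ) :
    softmax a ⬝ᵥ v ^ 2 ≤ κ * ∑ j, |v j| := by
  rw [mul_sum]
  refine sum_le_sum fun j _ => ?_
  have : Nonempty ι := ⟨j⟩
  calc softmax a j * v j ^ 2 ≤ 1 * (|v j| * |v j|) := by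
        rw [abs_mul_abs_self, ← sq]
        exact mul_le_mul_of_nonneg_right (softmax_le_one a j) (sq_nonneg _)
    _ ≤ κ * |v j| := by
        rw [one_mul]
        exact mul_le_mul_of_nonneg_right (hv j) (abs_nonneg _)

theorem excessMass_softmax_le {a b : ι → ℝ} {c κ : ℝ} (hκ : 2 * κ ≤ 1)
    (ha : ∀ j, |a j - c| ≤ κ) (hb : ∀ j, |b j - c| ≤ κ) (hsum : ∑ j, (b j - a j) = 0) :
    excessMass (softmax a) (softmax b)
      ≤ (1 / (2 * Fintype.card ι) + 8 * κ) * ∑ j, |b j - a j| := by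
  rcases isEmpty_or_nonempty ι with _ | _
  · simp [excessMass]
  have hκ0 : 0 ≤ κ := (abs_nonneg _).trans (ha (Classical.arbitrary ι))
  set p := softmax a
  set N := ∑ j, |b j - a j|
  have hN0 : 0 ≤ N := sum_nonneg fun _ _ => abs_nonneg _
  have hps := softmax_mem_stdSimplex a
  have hunif : ∀ j, |p j - 1 / Fintype.card ι| ≤ 4 * κ := fun j => by
    rw [← softmax_const (ι := ι) c j]
    exact abs_softmax_sub_softmax_le hκ0 hκ ha j
  have hincr : ∀ j, |b j - a j| ≤ 2 * κ := fun j => by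
    have ⟨_, _⟩ := abs_le.mp (ha j)
    have ⟨_, _⟩ := abs_le.mp (hb j)
    rw [abs_le]
    constructor <;> linarith
  have hmean : |p ⬝ᵥ (b - a)| ≤ 4 * κ * N := abs_dotProduct_le_of_sum_eq_zero hunif hsum
  have hsq : p ⬝ᵥ (b - a) ^ 2 ≤ 2 * κ * N := softmax_dotProduct_sq_le a hincr
  have hterm : ∀ k, max (p k - softmax b k) 0
      ≤ p k * (6 * κ * N) + (1 / Fintype.card ι + 4 * κ) * ((|b k - a k| - (b k - a k)) / 2) :=
    fun k => by
    have hpk := softmax_pos a k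
    have hneg : 0 ≤ (|b k - a k| - (b k - a k)) / 2 := by linarith [le_abs_self (b k - a k)]
    have hpart : p k * ((|b k - a k| - (b k - a k)) / 2)
        ≤ (1 / Fintype.card ι + 4 * κ) * ((|b k - a k| - (b k - a k)) / 2) := by
      gcongr
      linarith [(abs_le.mp (hunif k)).2]
    refine max_le ((softmax_sub_softmax_le_mul (fun j => (hincr j).trans hκ) k).trans ?_) ?_
    · refine le_trans (mul_le_mul_of_nonneg_left (c := 6 * κ * N +
        (|b k - a k| - (b k - a k)) / 2) ?_ hpk.le) (by rw [mul_add]; linarith)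
      linarith [(abs_le.mp hmean).2, neg_abs_le (b k - a k)]
    · have : 0 ≤ p k * (6 * κ * N) := mul_nonneg hpk.le (mul_nonneg (by linarith) hN0)
      linarith [mul_nonneg hpk.le hneg]
  calc excessMass p (softmax b) ≤ _ := sum_le_sum fun k _ => hterm k
    _ = 6 * κ * N + (1 / Fintype.card ι + 4 * κ) * (N / 2) := by
        rw [sum_add_distrib, ← Finset.sum_mul, hps.2, ← mul_sum, ← Finset.sum_div,
          sum_sub_distrib, hsum, sub_zero, one_mul]
    _ = (1 / (2 * Fintype.card ι) + 8 * κ) * N := by field_simp; ring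

theorem softmax_eq_inv [DecidableEq ι] (a : ι → ℝ) (k : ι) (m : ℝ) :
    softmax a k = (1 + Real.exp (m - a k) * ∑ j ∈ univ.erase k, Real.exp (a j - m))⁻¹ := by
  have hterm : ∀ j, Real.exp (m - a k) * Real.exp (a j - m) = Real.exp (a j) / Real.exp (a k) :=
    fun j => by rw [← Real.exp_add, ← Real.exp_sub]; congr 1; ring
  rw [softmax, ← add_sum_erase _ _ (mem_univ k), mul_sum]
  simp_rw [hterm]
  rw [← Finset.sum_div, ← inv_div, add_div, div_self (Real.exp_pos _).ne']

theorem card_le_sum_exp_of_sum_eq_zero {α : Type*} {s : Finset α} {x : α → ℝ}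
    (hx : ∑ j ∈ s, x j = 0) : (#s : ℝ) ≤ ∑ j ∈ s, Real.exp (x j) :=
  calc (#s : ℝ) = ∑ j ∈ s, (x j + 1) := by simp [sum_add_distrib, hx]
    _ ≤ _ := sum_le_sum fun j _ => Real.add_one_le_exp (x j)

theorem sum_exp_le_of_sum_eq_zero {α : Type*} {s : Finset α} {x : α → ℝ}
    (hx : ∑ j ∈ s, x j = 0) (hx1 : ∀ j ∈ s, |x j| ≤ 1) :
    ∑ j ∈ s, Real.exp (x j) ≤ #s + ∑ j ∈ s, x j ^ 2 :=
  calc ∑ j ∈ s, Real.exp (x j) ≤ ∑ j ∈ s, (x j + 1 + x j ^ 2) := sum_le_sum fun j hj => by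
        linarith [(abs_le.mp (Real.abs_exp_sub_one_sub_id_le (hx1 j hj))).2]
    _ = _ := by simp [sum_add_distrib, hx]

theorem inv_one_add_mul_sub_le {E N V : ℝ} (hE : 0 ≤ E) (hN : 1 ≤ N) (hV : 0 ≤ V) :
    (1 + E * N)⁻¹ - V ≤ (1 + E * (N + V))⁻¹ := by
  have hEN : E ≤ E * N := le_mul_of_one_le_right hE hN
  have hEV : 0 ≤ E * V := mul_nonneg hE hV
  rw [mul_add, sub_le_iff_le_add', ← sub_le_iff_le_add,
    inv_sub_inv (by linarith) (by linarith), div_le_iff₀ (by nlinarith)]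
  nlinarith [mul_nonneg hV (sub_nonneg.mpr hEN), mul_nonneg hV hEV,
    mul_nonneg (mul_nonneg hV hEV) (hE.trans hEN)]

-- Jensen: for given average `m` of the other entries, `∑ exp` is smallest when they are all equal.
theorem softmax_le_inv_of_sum_eq_zero [DecidableEq ι] {a : ι → ℝ} {k : ι} {m : ℝ}
    (h : ∑ j ∈ univ.erase k, (a j - m) = 0) :
    softmax a k ≤ (1 + Real.exp (m - a k) * #(univ.erase k))⁻¹ := by
  rw [softmax_eq_inv a k m]
  gcongr
  exact card_le_sum_exp_of_sum_eq_zero h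

theorem inv_sub_le_softmax_of_sum_eq_zero [DecidableEq ι] [Nontrivial ι] {a : ι → ℝ} {k : ι}
    {m : ℝ} (h : ∑ j ∈ univ.erase k, (a j - m) = 0) (h1 : ∀ j ≠ k, |a j - m| ≤ 1) :
    (1 + Real.exp (m - a k) * #(univ.erase k))⁻¹ - ∑ j ∈ univ.erase k, (a j - m) ^ 2
      ≤ softmax a k := by
  have hcard : (1 : ℝ) ≤ #(univ.erase k) := by
    obtain ⟨j, hj⟩ := exists_ne k
    exact_mod_cast card_pos.mpr ⟨j, mem_erase.mpr ⟨hj, mem_univ j⟩⟩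
  rw [softmax_eq_inv a k m]
  refine (inv_one_add_mul_sub_le (Real.exp_pos _).le hcard
    (sum_nonneg fun _ _ => sq_nonneg _)).trans ?_
  gcongr
  exact sum_exp_le_of_sum_eq_zero h fun j hj => h1 j (ne_of_mem_erase hj)

end Softmax

section ColorCounts

open scoped Matrix

variable {q n : ℕ}

/-- The vector whose `k`-th entry is the number of vertices of `s` with color `k`. -/
noncomputable def colorCount (s : Finset (Fin n)) (σ : Fin n → Fin q) : Fin q → ℝ :=
  ∑ v ∈ s, Pi.single (σ v) 1

/-- The vector of color proportions of a configuration. -/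
noncomputable def colorFrac (σ : Fin n → Fin q) (k : Fin q) : ℝ := colorCount univ σ k / n

theorem single_one_apply_mem_Icc {ι : Type*} [DecidableEq ι] (i j : ι) :
    (Pi.single i 1 : ι → ℝ) j ∈ Set.Icc 0 1 := by
  rw [Pi.single_apply]
  split_ifs <;> simp

theorem colorCount_apply (s : Finset (Fin n)) (σ : Fin n → Fin q) (k : Fin q) :
    colorCount s σ k = ∑ v ∈ s, (Pi.single (σ v) 1 : Fin q → ℝ) k :=
  Finset.sum_apply _ _ _

theorem colorCount_nonneg (s : Finset (Fin n)) (σ : Fin n → Fin q) (k : Fin q) :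
    0 ≤ colorCount s σ k := by
  rw [colorCount_apply]
  exact sum_nonneg fun v _ => (single_one_apply_mem_Icc (σ v) k).1

theorem colorCount_le_card (s : Finset (Fin n)) (σ : Fin n → Fin q) (k : Fin q) :
    colorCount s σ k ≤ #s := by
  rw [colorCount_apply]
  exact (sum_le_card_nsmul s _ 1 fun v _ => (single_one_apply_mem_Icc (σ v) k).2).trans_eq
    (by simp)

theorem sum_colorCount (s : Finset (Fin n)) (σ : Fin n → Fin q) :
    ∑ k, colorCount s σ k = #s := by
  simp_rw [colorCount_apply]
  rw [sum_comm]
  simp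

theorem colorCount_congr {s : Finset (Fin n)} {σ τ : Fin n → Fin q} (h : ∀ v ∈ s, σ v = τ v) :
    colorCount s σ = colorCount s τ :=
  sum_congr rfl fun v hv => by rw [h v hv]

theorem colorCount_erase_add (σ : Fin n → Fin q) (u : Fin n) :
    colorCount (univ.erase u) σ + Pi.single (σ u) 1 = colorCount univ σ :=
  sum_erase_add univ _ (mem_univ u)

theorem colorCount_update (σ : Fin n → Fin q) (u : Fin n) (k : Fin q) :
    colorCount univ (Function.update σ u k) =
      colorCount (univ.erase u) σ + Pi.single k 1 := by
  rw [← colorCount_erase_add _ u, Function.update_self]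
  congr 1
  exact colorCount_congr fun v hv => Function.update_of_ne (ne_of_mem_erase hv) _ _

theorem colorFrac_nonneg (σ : Fin n → Fin q) (k : Fin q) : 0 ≤ colorFrac σ k :=
  div_nonneg (colorCount_nonneg _ σ k) n.cast_nonneg

theorem colorFrac_le_one (σ : Fin n → Fin q) (k : Fin q) : colorFrac σ k ≤ 1 :=
  div_le_one_of_le₀ ((colorCount_le_card _ σ k).trans_eq (by simp)) n.cast_nonneg

theorem sum_colorFrac (hn : 0 < n) (σ : Fin n → Fin q) : ∑ k, colorFrac σ k = 1 := by
  simp_rw [colorFrac, ← Finset.sum_div, sum_colorCount, card_univ, Fintype.card_fin]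
  exact div_self (by positivity)

/-- The change of `n` times the proportion of color `k` caused by the move `m = (u, j)`, which
gives vertex `u` the color `j`. -/
noncomputable def moveIncr (σ : Fin n → Fin q) (k : Fin q) (m : Fin n × Fin q) : ℝ :=
  (Pi.single m.2 1 : Fin q → ℝ) k - (Pi.single (σ m.1) 1 : Fin q → ℝ) k

theorem abs_moveIncr_le_one (σ : Fin n → Fin q) (k : Fin q) (m : Fin n × Fin q) :
    |moveIncr σ k m| ≤ 1 := by
  have ⟨_, _⟩ := single_one_apply_mem_Icc m.2 k
  have ⟨_, _⟩ := single_one_apply_mem_Icc (σ m.1) k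
  rw [moveIncr, abs_le]
  constructor <;> linarith

theorem colorFrac_update (σ : Fin n → Fin q) (m : Fin n × Fin q) (k : Fin q) :
    colorFrac (Function.update σ m.1 m.2) k = colorFrac σ k + moveIncr σ k m / n := by
  rw [colorFrac, colorFrac, colorCount_update, ← colorCount_erase_add σ m.1, moveIncr, ← add_div]
  simp only [Pi.add_apply]
  ring

end ColorCounts

section GlauberDynamics

open scoped Matrix

variable {q n : ℕ} {β : ℝ}

theorem pottsWeight_update (β : ℝ) (σ : Fin n → Fin q) (u : Fin n) (k : Fin q) :
    pottsWeight q n β (Function.update σ u k) =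
      Real.exp (β / n * (colorCount (univ.erase u) σ ⬝ᵥ colorCount (univ.erase u) σ + 1)) *
        Real.exp (2 * β / n * colorCount (univ.erase u) σ k) := by
  have hpairs : ∀ τ : Fin n → Fin q, ∑ u, ∑ v, (if τ u = τ v then (1 : ℝ) else 0) =
      colorCount univ τ ⬝ᵥ colorCount univ τ := fun τ => by
    simp_rw [colorCount, sum_dotProduct, dotProduct_sum]
    simp [Pi.single_apply, eq_comm]
  rw [pottsWeight, hpairs, colorCount_update, ← Real.exp_add]
  congr 1
  simp only [add_dotProduct, dotProduct_add, single_dotProduct, dotProduct_single,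
    Pi.add_apply, Pi.single_eq_same, mul_one, one_mul]
  ring

/-- The conditional law of the color of vertex `u` given the colors of all other vertices. -/
noncomputable def resampleProb (β : ℝ) (σ : Fin n → Fin q) (u : Fin n) : Fin q → ℝ :=
  softmax fun j => 2 * β / n * colorCount (univ.erase u) σ j

theorem resampleProb_mem_stdSimplex (β : ℝ) (σ : Fin n → Fin q) (u : Fin n) :
    resampleProb β σ u ∈ stdSimplex ℝ (Fin q) :=
  have : Nonempty (Fin q) := ⟨σ u⟩
  softmax_mem_stdSimplex _

theorem pottsMeasure_update_div_sum (β : ℝ) (σ : Fin n → Fin q) (u : Fin n) (k : Fin q) :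
    pottsMeasure q n β (Function.update σ u k) /
      ∑ j, pottsMeasure q n β (Function.update σ u j) = resampleProb β σ u k := by
  have hZ : 0 < ∑ τ, pottsWeight q n β τ :=
    sum_pos (fun _ _ => Real.exp_pos _) ⟨σ, mem_univ σ⟩
  simp_rw [pottsMeasure, ← Finset.sum_div]
  rw [div_div_div_cancel_right₀ hZ.ne']
  simp_rw [pottsWeight_update, ← mul_sum]
  exact mul_div_mul_left _ _ (Real.exp_pos _).ne'

/-- The law of the move `(u, j)` (vertex and new color) made by the Glauber dynamics at `σ`. -/
noncomputable def stepProb (β : ℝ) (σ : Fin n → Fin q) (m : Fin n × Fin q) : ℝ :=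
  resampleProb β σ m.1 m.2 / n

theorem stepProb_dotProduct (β : ℝ) (σ : Fin n → Fin q) (f : Fin n × Fin q → ℝ) :
    stepProb β σ ⬝ᵥ f = (∑ u, resampleProb β σ u ⬝ᵥ fun j => f (u, j)) / n := by
  simp_rw [dotProduct, Fintype.sum_prod_type, Finset.sum_div, stepProb, div_mul_eq_mul_div]

theorem stepProb_mem_stdSimplex (hn : 0 < n) (β : ℝ) (σ : Fin n → Fin q) :
    stepProb β σ ∈ stdSimplex ℝ (Fin n × Fin q) := by
  refine ⟨fun m => div_nonneg ((resampleProb_mem_stdSimplex β σ m.1).1 m.2) n.cast_nonneg, ?_⟩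
  simp_rw [Fintype.sum_prod_type, stepProb, ← Finset.sum_div,
    (resampleProb_mem_stdSimplex β σ _).2]
  simp [hn.ne']

theorem sum_ite_forall_ne_eq (σ : Fin n → Fin q) (u : Fin n) (F : (Fin n → Fin q) → ℝ) :
    (∑ τ, if ∀ v, v ≠ u → τ v = σ v then F τ else 0) = ∑ k, F (Function.update σ u k) := by
  have himage : univ.filter (fun τ : Fin n → Fin q => ∀ v, v ≠ u → τ v = σ v) =
      univ.image (Function.update σ u) := by
    ext τ
    simp only [mem_filter_univ, mem_image, mem_univ, true_and]
    constructor
    · exact fun h => ⟨τ u, (Function.eq_update_iff.2 ⟨rfl, h⟩).symm⟩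
    · rintro ⟨k, rfl⟩ v hv
      exact Function.update_of_ne hv k σ
  rw [← sum_filter, himage, sum_image (Function.update_injective σ u).injOn]

theorem glauberKernel_mulVec_apply (β : ℝ) (σ : Fin n → Fin q) (f : (Fin n → Fin q) → ℝ) :
    (glauberKernel q n β *ᵥ f) σ = stepProb β σ ⬝ᵥ fun m => f (Function.update σ m.1 m.2) := by
  rw [stepProb_dotProduct]
  simp only [Matrix.mulVec, dotProduct, glauberKernel, mul_sum, sum_mul]
  rw [sum_comm, Finset.sum_div]
  refine sum_congr rfl fun u _ => ?_
  simp_rw [mul_assoc, ite_mul, zero_mul]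
  rw [← mul_sum, sum_ite_forall_ne_eq, one_div_mul_eq_div]
  simp_rw [pottsMeasure_update_div_sum]

theorem pottsMeasure_mem_stdSimplex (hq : 0 < q) (n : ℕ) (β : ℝ) :
    pottsMeasure q n β ∈ stdSimplex ℝ (Fin n → Fin q) := by
  have : Nonempty (Fin q) := ⟨⟨0, hq⟩⟩
  have hZ : 0 < ∑ τ, pottsWeight q n β τ := sum_pos (fun _ _ => Real.exp_pos _) univ_nonempty
  refine ⟨fun σ => div_nonneg (Real.exp_pos _).le hZ.le, ?_⟩
  simp_rw [pottsMeasure, ← Finset.sum_div]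
  exact div_self hZ.ne'

theorem glauberKernel_mem_rowStochastic (hn : 0 < n) (β : ℝ) :
    glauberKernel q n β ∈ Matrix.rowStochastic ℝ (Fin n → Fin q) := by
  rw [Matrix.mem_rowStochastic]
  constructor
  · have hnonneg : ∀ σ : Fin n → Fin q, 0 ≤ pottsMeasure q n β σ := fun σ =>
      (pottsMeasure_mem_stdSimplex (σ ⟨0, hn⟩).pos n β).1 σ
    intro σ τ
    refine mul_nonneg (by positivity) (sum_nonneg fun u _ => ?_)
    split_ifs
    · exact div_nonneg (hnonneg τ) (sum_nonneg fun _ _ => hnonneg _)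
    · rfl
  · ext σ
    rw [glauberKernel_mulVec_apply]
    exact dotProduct_const_of_mem_stdSimplex (stepProb_mem_stdSimplex hn β σ) 1

theorem pottsMeasure_mul_glauberKernel (β : ℝ) (σ τ : Fin n → Fin q) :
    pottsMeasure q n β σ * glauberKernel q n β σ τ =
      pottsMeasure q n β τ * glauberKernel q n β τ σ := by
  rw [glauberKernel, glauberKernel, mul_left_comm, mul_left_comm _ (1 / (n : ℝ))]
  refine congrArg (1 / (n : ℝ) * ·) ?_
  rw [mul_sum, mul_sum]
  refine sum_congr rfl fun u _ => ?_
  by_cases h : ∀ v, v ≠ u → τ v = σ v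
  · have hupdate : Function.update τ u = Function.update σ u := by
      ext k v
      by_cases hv : v = u
      · rw [hv, Function.update_self, Function.update_self]
      · rw [Function.update_of_ne hv, Function.update_of_ne hv, h v hv]
    rw [if_pos h, if_pos fun v hv => (h v hv).symm, hupdate, mul_div_left_comm]
  · rw [if_neg h, if_neg fun h' => h fun v hv => (h' v hv).symm, mul_zero, mul_zero]

theorem pottsMeasure_vecMul_glauberKernel (hn : 0 < n) (β : ℝ) :
    pottsMeasure q n β ᵥ* glauberKernel q n β = pottsMeasure q n β := by
  ext τ
  calc ∑ σ, pottsMeasure q n β σ * glauberKernel q n β σ τ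
      = pottsMeasure q n β τ * ∑ σ, glauberKernel q n β τ σ := by
        rw [mul_sum]
        exact sum_congr rfl fun σ _ => pottsMeasure_mul_glauberKernel β σ τ
    _ = pottsMeasure q n β τ := by
        rw [Matrix.sum_row_of_mem_rowStochastic (glauberKernel_mem_rowStochastic hn β), mul_one]

theorem glauberDist_le (hq : 0 < q) (hn : 0 < n) {t : ℕ} {ε : ℝ}
    (hosc : ∀ g : (Fin n → Fin q) → ℝ, 0 ≤ g → g ≤ 1 → ∀ σ τ,
      (glauberKernel q n β ^ t *ᵥ g) σ - (glauberKernel q n β ^ t *ᵥ g) τ ≤ ε) :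
    glauberDist q n β t ≤ ε := by
  have : Nonempty (Fin q) := ⟨⟨0, hq⟩⟩
  exact ciSup_le fun σ => tvDist_row_le_of_forall_sub_le (pottsMeasure_mem_stdSimplex hq n β)
    (vecMul_pow_eq_of_vecMul_eq (pottsMeasure_vecMul_glauberKernel hn β) t) hosc σ

theorem indicator_sub_le_glauberDist (β : ℝ) (t : ℕ) (σ : Fin n → Fin q)
    (A : Set (Fin n → Fin q)) :
    (glauberKernel q n β ^ t *ᵥ A.indicator 1) σ - pottsMeasure q n β ⬝ᵥ A.indicator 1
      ≤ glauberDist q n β t :=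
  (dotProduct_indicator_sub_le_tvDist _ _ A).trans
    (le_ciSup (f := fun σ => tvDist (fun τ => (glauberKernel q n β ^ t) σ τ) (pottsMeasure q n β))
      (Set.finite_range _).bddAbove σ)

end GlauberDynamics

section OneStepMoments

open scoped Matrix

variable {q n : ℕ} {β : ℝ}

/-- The conditional law of one color in the mean-field approximation, in which the configuration
enters only through its color proportions. -/
noncomputable def meanFieldProb (β : ℝ) (σ : Fin n → Fin q) : Fin q → ℝ :=
  softmax fun j => 2 * β * colorFrac σ j

/-- The expected change of `n` times the proportion of color `k` in one step. -/
noncomputable def meanIncr (β : ℝ) (σ : Fin n → Fin q) (k : Fin q) : ℝ :=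
  stepProb β σ ⬝ᵥ moveIncr σ k

/-- The expected square of the change of `n` times the proportion of color `k` in one step. -/
noncomputable def meanSqIncr (β : ℝ) (σ : Fin n → Fin q) (k : Fin q) : ℝ :=
  stepProb β σ ⬝ᵥ moveIncr σ k ^ 2

theorem abs_resampleProb_sub_meanFieldProb_le (hβ : 0 ≤ β) (hβq : 2 * β ≤ q) (hn : 2 * q ≤ n)
    (σ : Fin n → Fin q) (u : Fin n) (k : Fin q) :
    |resampleProb β σ u k - meanFieldProb β σ k| ≤ 4 * q / n := by
  have hn0 : (0 : ℝ) < n := by exact_mod_cast u.pos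
  have hnq : 2 * (q : ℝ) ≤ n := by exact_mod_cast hn
  rw [mul_div_assoc]
  refine abs_softmax_sub_softmax_le (by positivity) ?_ (fun j => ?_) k
  · rwa [← mul_div_assoc, div_le_one hn0]
  · have ⟨h0, h1⟩ := single_one_apply_mem_Icc (σ u) j
    have hdiff : 2 * β / n * colorCount (univ.erase u) σ j - 2 * β * colorFrac σ j =
        -(2 * β * (Pi.single (σ u) 1 : Fin q → ℝ) j / n) := by
      rw [colorFrac, ← colorCount_erase_add σ u, Pi.add_apply]
      ring
    rw [hdiff, abs_neg, abs_of_nonneg (by positivity)]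
    gcongr
    nlinarith

theorem meanIncr_eq (β : ℝ) (σ : Fin n → Fin q) (k : Fin q) :
    meanIncr β σ k = (∑ u, resampleProb β σ u k) / n - colorFrac σ k := by
  have hvertex : ∀ u, (resampleProb β σ u ⬝ᵥ fun j => moveIncr σ k (u, j)) =
      resampleProb β σ u k - (Pi.single (σ u) 1 : Fin q → ℝ) k := fun u => by
    simp_rw [moveIncr, sub_eq_add_neg]
    rw [dotProduct_add_const_of_mem_stdSimplex (resampleProb_mem_stdSimplex β σ u)]
    simp [dotProduct, Pi.single_apply]
  rw [meanIncr, stepProb_dotProduct, colorFrac, colorCount_apply, ← sub_div, ← sum_sub_distrib]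
  simp_rw [hvertex]

theorem abs_meanIncr_sub_le (hβ : 0 ≤ β) (hβq : 2 * β ≤ q) (hn : 2 * q ≤ n) (hn0 : 0 < n)
    (σ : Fin n → Fin q) (k : Fin q) :
    |meanIncr β σ k - (meanFieldProb β σ k - colorFrac σ k)| ≤ 4 * q / n := by
  have havg : meanIncr β σ k - (meanFieldProb β σ k - colorFrac σ k) =
      (∑ u, (resampleProb β σ u k - meanFieldProb β σ k)) / n := by
    rw [meanIncr_eq, sum_sub_distrib]
    simp
    field_simp
  rw [havg, abs_div, Nat.abs_cast, div_le_iff₀ (by positivity)]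
  calc |∑ u, (resampleProb β σ u k - meanFieldProb β σ k)|
      ≤ ∑ _u : Fin n, 4 * (q : ℝ) / n := (abs_sum_le_sum_abs _ _).trans
        (sum_le_sum fun u _ => abs_resampleProb_sub_meanFieldProb_le hβ hβq hn σ u k)
    _ = 4 * q / n * n := by simp; ring

theorem meanSqIncr_le_one (hn : 0 < n) (β : ℝ) (σ : Fin n → Fin q) (k : Fin q) :
    meanSqIncr β σ k ≤ 1 :=
  dotProduct_le_of_mem_stdSimplex (stepProb_mem_stdSimplex hn β σ) fun m =>
    (sq_le_one_iff_abs_le_one _).2 (abs_moveIncr_le_one σ k m)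

theorem exp_neg_div_le_resampleProb (hβ : 0 ≤ β) (hβq : 2 * β ≤ q) (σ : Fin n → Fin q)
    (u : Fin n) (k : Fin q) : Real.exp (-(2 * q)) / q ≤ resampleProb β σ u k := by
  have hn : (n : ℝ) ≠ 0 := by exact_mod_cast u.pos.ne'
  have := exp_neg_two_mul_div_card_le_softmax
    (a := fun j => 2 * β / n * colorCount (univ.erase u) σ j) (δ := q) (fun j => ?_) k
  · rwa [Fintype.card_fin] at this
  have h0 := colorCount_nonneg (univ.erase u) σ j
  have h1 : colorCount (univ.erase u) σ j ≤ n :=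
    (colorCount_le_card _ σ j).trans (by exact_mod_cast (card_le_univ _).trans_eq (by simp))
  rw [abs_of_nonneg (by positivity)]
  calc 2 * β / n * colorCount (univ.erase u) σ j ≤ 2 * β / n * n := by gcongr
    _ = 2 * β := div_mul_cancel₀ _ hn
    _ ≤ q := hβq

theorem exp_neg_div_le_meanSqIncr (hq : 2 ≤ q) (hβ : 0 ≤ β) (hβq : 2 * β ≤ q) (hn : 0 < n)
    (σ : Fin n → Fin q) (k : Fin q) : Real.exp (-(2 * q)) / q ≤ meanSqIncr β σ k := by
  have hvertex : ∀ u, Real.exp (-(2 * q)) / q ≤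
      resampleProb β σ u ⬝ᵥ fun j => (moveIncr σ k ^ 2) (u, j) := fun u => by
    obtain ⟨j, hj⟩ : ∃ j : Fin q, moveIncr σ k (u, j) ^ 2 = 1 := by
      by_cases hu : σ u = k
      · have : Nontrivial (Fin q) := Fin.nontrivial_iff_two_le.mpr hq
        obtain ⟨j, hj⟩ := exists_ne k
        exact ⟨j, by simp [moveIncr, hu, hj.symm]⟩
      · exact ⟨k, by simp [moveIncr, Ne.symm hu]⟩
    calc _ ≤ resampleProb β σ u j := exp_neg_div_le_resampleProb hβ hβq σ u j
      _ = resampleProb β σ u j * moveIncr σ k (u, j) ^ 2 := by rw [hj, mul_one]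
      _ ≤ _ := single_le_sum (f := fun j => resampleProb β σ u j * moveIncr σ k (u, j) ^ 2)
        (fun i _ => mul_nonneg ((resampleProb_mem_stdSimplex β σ u).1 i) (sq_nonneg _))
        (mem_univ j)
  rw [meanSqIncr, stepProb_dotProduct, le_div_iff₀ (by positivity)]
  calc Real.exp (-(2 * q)) / q * n = ∑ _u : Fin n, Real.exp (-(2 * q)) / q := by simp; ring
    _ ≤ _ := sum_le_sum fun u _ => hvertex u

theorem glauberKernel_mulVec_comp_colorFrac_le (hn : 0 < n) (β : ℝ) (σ : Fin n → Fin q)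
    (k : Fin q) {φ : ℝ → ℝ} {A B R : ℝ}
    (hφ : ∀ h : ℝ, |h| ≤ 1 / n →
      φ (colorFrac σ k + h) ≤ φ (colorFrac σ k) + A * h + B * h ^ 2 + R) :
    (glauberKernel q n β *ᵥ fun τ => φ (colorFrac τ k)) σ
      ≤ φ (colorFrac σ k) + A * meanIncr β σ k / n + B * meanSqIncr β σ k / n ^ 2 + R := by
  have hstep := stepProb_mem_stdSimplex hn β σ
  rw [glauberKernel_mulVec_apply]
  calc _ ≤ stepProb β σ ⬝ᵥ fun m => ((A / n) • moveIncr σ k + (B / n ^ 2) • moveIncr σ k ^ 2) m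
          + (φ (colorFrac σ k) + R) := by
        refine dotProduct_mono_of_mem_stdSimplex hstep fun m => ?_
        rw [colorFrac_update]
        refine (hφ (moveIncr σ k m / n) ?_).trans_eq ?_
        · rw [abs_div, Nat.abs_cast]
          gcongr
          exact abs_moveIncr_le_one σ k m
        · simp only [Pi.add_apply, Pi.smul_apply, Pi.pow_apply, smul_eq_mul]
          ring
    _ = _ := by
        rw [dotProduct_add_const_of_mem_stdSimplex hstep, dotProduct_add, dotProduct_smul,
          dotProduct_smul, meanIncr, meanSqIncr, smul_eq_mul, smul_eq_mul]
        ring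

theorem le_glauberKernel_mulVec_comp_colorFrac (hn : 0 < n) (β : ℝ) (σ : Fin n → Fin q)
    (k : Fin q) {φ : ℝ → ℝ} {A B R : ℝ}
    (hφ : ∀ h : ℝ, |h| ≤ 1 / n →
      φ (colorFrac σ k) + A * h + B * h ^ 2 - R ≤ φ (colorFrac σ k + h)) :
    φ (colorFrac σ k) + A * meanIncr β σ k / n + B * meanSqIncr β σ k / n ^ 2 - R
      ≤ (glauberKernel q n β *ᵥ fun τ => φ (colorFrac τ k)) σ := by
  have hneg := glauberKernel_mulVec_comp_colorFrac_le hn β σ k (φ := fun x => -φ x)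
    (A := -A) (B := -B) (R := R) fun h hh => by linarith [hφ h hh]
  rw [show (fun τ : Fin n → Fin q => -φ (colorFrac τ k)) = -fun τ => φ (colorFrac τ k) from rfl,
    Matrix.mulVec_neg, Pi.neg_apply, neg_mul, neg_mul, neg_div, neg_div] at hneg
  linarith

end OneStepMoments

section Calculus

open scoped Topology

theorem sigmoid_sub_sigmoid_le {x y : ℝ} (h : x ≤ y) :
    Real.sigmoid y - Real.sigmoid x ≤ y - x := by
  have hderiv (t : ℝ) : deriv Real.sigmoid t ≤ 1 := by
    rw [Real.deriv_sigmoid]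
    nlinarith [Real.sigmoid_pos t, Real.sigmoid_lt_one t]
  simpa using image_sub_le_mul_sub_of_deriv_le differentiable_sigmoid hderiv h

theorem eventually_le_of_deriv_deriv_lt {f : ℝ → ℝ} {a f₂ m : ℝ} (hf : Differentiable ℝ f)
    (hf₁ : deriv f a = 0) (hf₂ : HasDerivAt (deriv f) f₂ a) (hm : f₂ < 2 * m) :
    ∀ᶠ x in 𝓝 a, f x ≤ f a + m * (x - a) ^ 2 := by
  set g : ℝ → ℝ := fun x => f x - m * (x - a) ^ 2 with hg
  have hg₁ : deriv g = fun x => deriv f x - 2 * m * (x - a) := by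
    funext x
    have hsq := (((hasDerivAt_id x).sub_const a).pow 2).const_mul m
    exact ((hf x).hasDerivAt.sub hsq).deriv.trans (by simp; ring)
  have hg₂ : deriv (deriv g) a = f₂ - 2 * m := by
    rw [hg₁]
    exact (hf₂.sub (((hasDerivAt_id a).sub_const a).const_mul (2 * m))).deriv.trans (by ring)
  have hmax : IsLocalMax g a := by
    refine isLocalMax_of_deriv_deriv_neg (by linarith) (by simp [hg₁, hf₁]) ?_
    exact (hf.continuous.sub (by fun_prop)).continuousAt
  filter_upwards [hmax] with x hx
  simp only [hg, sub_self] at hx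
  linarith

theorem eventually_ge_of_lt_deriv_deriv {f : ℝ → ℝ} {a f₂ m : ℝ} (hf : Differentiable ℝ f)
    (hf₁ : deriv f a = 0) (hf₂ : HasDerivAt (deriv f) f₂ a) (hm : 2 * m < f₂) :
    ∀ᶠ x in 𝓝 a, f a + m * (x - a) ^ 2 ≤ f x := by
  have hneg := eventually_le_of_deriv_deriv_lt (a := a) (f₂ := -f₂) (m := -m) hf.neg
    (by simp [hf₁]) (by rw [deriv.neg']; exact hf₂.neg) (by linarith)
  filter_upwards [hneg] with x hx
  simp only [Pi.neg_apply] at hx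
  linarith

theorem exists_pos_forall_le_neg_of_isCompact {α : Type*} [TopologicalSpace α] {K : Set α}
    (hK : IsCompact K) {f : α → ℝ} (hf : ContinuousOn f K) (hneg : ∀ x ∈ K, f x < 0) :
    ∃ η > 0, ∀ x ∈ K, f x ≤ -η := by
  rcases K.eq_empty_or_nonempty with rfl | hne
  · exact ⟨1, one_pos, by simp⟩
  · obtain ⟨x₀, hx₀, hmax⟩ := hK.exists_isMaxOn hne hf
    exact ⟨-f x₀, by linarith [hneg x₀ hx₀], fun x hx => by linarith [isMaxOn_iff.mp hmax x hx]⟩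

theorem abs_inv_one_add_sq_add_sub_le (u t : ℝ) :
    |1 / (1 + (u + t) ^ 2) - 1 / (1 + u ^ 2) + 2 * u * t / (1 + u ^ 2) ^ 2| ≤ 7 * t ^ 2 := by
  set A := 1 + u ^ 2 with hA
  set B := 1 + (u + t) ^ 2 with hB
  have hA1 : 1 ≤ A := by nlinarith
  have hB1 : 1 ≤ B := by nlinarith
  have hden : 0 < A ^ 2 * B := by positivity
  have hremainder : 1 / B - 1 / A + 2 * u * t / A ^ 2
      = t ^ 2 * (-A + 4 * u ^ 2 + 2 * u * t) / (A ^ 2 * B) := by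
    have hA0 : A ≠ 0 := by linarith
    have hB0 : B ≠ 0 := by linarith
    field_simp
    rw [hA, hB]
    ring
  have hnum : |-A + 4 * u ^ 2 + 2 * u * t| ≤ 6 * A + B := by
    rw [abs_le]
    constructor <;> nlinarith [sq_nonneg (2 * u + t), sq_nonneg t, sq_nonneg u]
  have hAden : A ≤ A ^ 2 * B := by nlinarith [mul_le_mul hA1 hB1 zero_le_one (by linarith)]
  have hBden : B ≤ A ^ 2 * B := le_mul_of_one_le_left (by linarith) (one_le_pow₀ hA1)
  rw [hremainder, abs_div, abs_mul, abs_of_pos hden, abs_sq, div_le_iff₀ hden]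
  nlinarith [mul_le_mul_of_nonneg_left hnum (sq_nonneg t)]

theorem abs_arctan_add_sub_le (u h : ℝ) :
    |Real.arctan (u + h) - Real.arctan u - h / (1 + u ^ 2) + u * h ^ 2 / (1 + u ^ 2) ^ 2|
      ≤ 7 * |h| ^ 3 := by
  set f : ℝ → ℝ := fun t =>
    Real.arctan (u + t) - Real.arctan u - t / (1 + u ^ 2) + u * t ^ 2 / (1 + u ^ 2) ^ 2 with hf
  have hderiv (t : ℝ) : HasDerivAt f
      (1 / (1 + (u + t) ^ 2) - 1 / (1 + u ^ 2) + 2 * u * t / (1 + u ^ 2) ^ 2) t := by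
    have h₁ := ((hasDerivAt_id t).const_add u).arctan
    have h₂ := (hasDerivAt_id t).div_const (1 + u ^ 2)
    have h₃ := (((hasDerivAt_id t).pow 2).const_mul u).div_const ((1 + u ^ 2) ^ 2)
    exact (((h₁.sub_const _).sub h₂).add h₃).congr_deriv (by simp; ring)
  have hmvt := (convex_Icc (-|h|) |h|).norm_image_sub_le_of_norm_hasDerivWithin_le
    (C := 7 * h ^ 2) (fun t _ => (hderiv t).hasDerivWithinAt)
    (fun t ht => (abs_inv_one_add_sq_add_sub_le u t).trans (by
      have := sq_le_sq.mpr ((abs_le.mpr ht).trans_eq rfl : |t| ≤ |h|)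
      linarith))
    (x := 0) (y := h) (by simp) ⟨neg_abs_le h, le_abs_self h⟩
  have hf0 : f 0 = 0 := by simp [hf]
  rw [hf0, sub_zero, sub_zero, Real.norm_eq_abs, Real.norm_eq_abs] at hmvt
  calc |f h| ≤ 7 * h ^ 2 * |h| := hmvt
    _ = 7 * |h| ^ 3 := by rw [← sq_abs h]; ring

end Calculus

section Drift

open scoped Topology

variable {q : ℕ} {β β' θ a x z : ℝ}

/-- The mean-field probability of a color of proportion `x` when the remaining mass is shared
equally by the other `q - 1` colors, i.e. the function `x + D_β(x)`. -/
noncomputable def balancedProb (q : ℕ) (β x : ℝ) : ℝ :=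
  Real.sigmoid (2 * β * (q * x - 1) / (q - 1) - Real.log (q - 1))

theorem balancedProb_eq_inv (hq : 1 < q) (β x : ℝ) :
    balancedProb q β x
      = (1 + ((q : ℝ) - 1) * Real.exp (2 * β * (1 - (q : ℝ) * x) / ((q : ℝ) - 1)))⁻¹ := by
  have hq' : (1 : ℝ) < q := mod_cast hq
  rw [balancedProb, Real.sigmoid_def, neg_sub, Real.exp_sub, Real.exp_log (by linarith),
    div_eq_mul_inv, ← Real.exp_neg]
  congr 4
  ring

theorem Dfun_eq_balancedProb_sub (hq : 1 < q) (β x : ℝ) :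
    Dfun q β x = balancedProb q β x - x := by
  rw [balancedProb_eq_inv hq, Dfun]
  ring

theorem balancedProb_mono_left (hq : 1 < q) (h : β ≤ β') (hx : 1 / (q : ℝ) ≤ x) :
    balancedProb q β x ≤ balancedProb q β' x := by
  have hq' : (1 : ℝ) < q := mod_cast hq
  rw [div_le_iff₀ (by linarith)] at hx
  refine Real.sigmoid_le ?_
  gcongr
  linarith

theorem balancedProb_sub_le (hq : 1 < q) (h : β ≤ β') (hx : 1 / (q : ℝ) ≤ x) (hx1 : x ≤ 1) :
    balancedProb q β' x - balancedProb q β x ≤ 2 * (β' - β) := by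
  have hq' : (1 : ℝ) < q := mod_cast hq
  rw [div_le_iff₀ (by linarith)] at hx
  have harg : 2 * β' * (q * x - 1) / (q - 1) - 2 * β * (q * x - 1) / (q - 1)
      = 2 * (β' - β) * ((q * x - 1) / (q - 1)) := by ring
  have hratio : 0 ≤ (q * x - 1) / ((q : ℝ) - 1) ∧ (q * x - 1) / ((q : ℝ) - 1) ≤ 1 :=
    ⟨div_nonneg (by linarith) (by linarith), (div_le_one (by linarith)).mpr (by nlinarith)⟩
  refine (sigmoid_sub_sigmoid_le ?_).trans ?_ <;> nlinarith

theorem Dfun_mono_left (hq : 1 < q) (h : β ≤ β') (hx : 1 / (q : ℝ) ≤ x) :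
    Dfun q β x ≤ Dfun q β' x := by
  rw [Dfun_eq_balancedProb_sub hq, Dfun_eq_balancedProb_sub hq]
  linarith [balancedProb_mono_left hq h hx]

theorem Dfun_sub_le (hq : 1 < q) (h : β ≤ β') (hx : 1 / (q : ℝ) ≤ x) (hx1 : x ≤ 1) :
    Dfun q β' x - Dfun q β x ≤ 2 * (β' - β) := by
  rw [Dfun_eq_balancedProb_sub hq, Dfun_eq_balancedProb_sub hq]
  linarith [balancedProb_sub_le hq h hx hx1]

theorem balancedProb_le_inv (hq : 1 < q) (hz : 2 * β * z < 1) :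
    balancedProb q β (1 / q + z) ≤ 1 / (q * (1 - 2 * β * z)) := by
  have hq' : (1 : ℝ) < q := mod_cast hq
  have hq1 : (q : ℝ) - 1 ≠ 0 := by linarith
  rw [balancedProb_eq_inv hq, ← one_div]
  refine one_div_le_one_div_of_le (mul_pos (by linarith) (by linarith)) ?_
  calc q * (1 - 2 * β * z)
      = 1 + (q - 1) * (2 * β * (1 - q * (1 / q + z)) / (q - 1) + 1) := by field_simp; ring
    _ ≤ _ := by
      gcongr
      exact Real.add_one_le_exp _

theorem Dfun_le_neg_mul (hq : 1 < q) (hβ : 0 ≤ β) (hθ : 0 ≤ θ) (hθ1 : θ < 1) (h : 2 * β ≤ θ * q)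
    (hz : 0 ≤ z) (hz' : z ≤ (1 - θ) / (2 * q)) :
    Dfun q β (1 / q + z) ≤ -((1 - θ) / 2) * z := by
  have hq' : (1 : ℝ) < q := mod_cast hq
  have hw : 2 * β * z ≤ θ * (1 - θ) / 2 := by
    rw [le_div_iff₀ (by linarith)] at hz'
    nlinarith
  have hw0 : 0 ≤ 2 * β * z := by positivity
  have hw1 : 2 * β * z < 1 := by nlinarith
  have hslope : θ ≤ (1 + θ) / 2 * (1 - 2 * β * z) := by nlinarith [mul_nonneg hθ hw0]
  have hbound : 1 / (q * (1 - 2 * β * z)) ≤ 1 / q + (1 + θ) / 2 * z := by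
    rw [div_le_iff₀ (mul_pos (by linarith) (by linarith))]
    calc (1 : ℝ) = 1 - 2 * β * z + 2 * β * z := by ring
      _ ≤ 1 - 2 * β * z + θ * q * z := by gcongr
      _ ≤ 1 - 2 * β * z + (1 + θ) / 2 * (1 - 2 * β * z) * q * z := by gcongr
      _ = (1 / q + (1 + θ) / 2 * z) * (q * (1 - 2 * β * z)) := by field_simp
  rw [Dfun_eq_balancedProb_sub hq]
  linarith [balancedProb_le_inv hq hw1]

theorem exists_forall_Dfun_le_neg_mul (hq : 1 < q) (hβ : 0 ≤ β) (hβq : 2 * β < q) :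
    ∃ β₁ > β, ∃ c > 0, ∃ r > 0, ∀ β' ∈ Set.Icc 0 β₁, ∀ x ∈ Set.Icc (1 / (q : ℝ)) (1 / q + r),
      Dfun q β' x ≤ -c * (x - 1 / q) := by
  have hq' : (1 : ℝ) < q := mod_cast hq
  obtain ⟨θ, hθ, hθ1⟩ := exists_between ((div_lt_one (by linarith)).mpr hβq)
  have hθ0 : 0 < θ := hθ.trans_le' (by positivity)
  rw [div_lt_iff₀ (by linarith)] at hθ
  refine ⟨θ * q / 2, by linarith, (1 - θ) / 2, by linarith, (1 - θ) / (2 * q),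
    div_pos (by linarith) (by linarith), fun β' hβ' x hx => ?_⟩
  have hdrift := Dfun_le_neg_mul (z := x - 1 / q) hq hβ'.1 hθ0.le hθ1 (by linarith [hβ'.2])
    (by linarith [hx.1]) (by linarith [hx.2])
  rwa [add_sub_cancel] at hdrift

theorem balancedProb_monotone (hq : 1 < q) (hβ : 0 ≤ β) : Monotone (balancedProb q β) := by
  have hq' : (1 : ℝ) < q := mod_cast hq
  intro x y hxy
  refine Real.sigmoid_le ?_
  gcongr

theorem hasDerivAt_balancedProb (q : ℕ) (β x : ℝ) :
    HasDerivAt (balancedProb q β)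
      (2 * β * q / (q - 1) * (balancedProb q β x * (1 - balancedProb q β x))) x := by
  have harg := (((((hasDerivAt_id x).const_mul (q : ℝ)).sub_const 1).const_mul
    (2 * β)).div_const ((q : ℝ) - 1)).sub_const (Real.log (q - 1))
  refine ((Real.hasDerivAt_sigmoid _).comp x harg).congr_deriv ?_
  simp only [balancedProb, id]
  ring

theorem hasDerivAt_Dfun (hq : 1 < q) (β x : ℝ) :
    HasDerivAt (Dfun q β)
      (2 * β * q / (q - 1) * (balancedProb q β x * (1 - balancedProb q β x)) - 1) x :=
  ((hasDerivAt_balancedProb q β x).sub (hasDerivAt_id x)).congr_of_eventuallyEq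
    (.of_forall (Dfun_eq_balancedProb_sub hq β))

theorem deriv_Dfun (hq : 1 < q) (β : ℝ) :
    deriv (Dfun q β) = fun x =>
      2 * β * q / (q - 1) * (balancedProb q β x * (1 - balancedProb q β x)) - 1 :=
  funext fun x => (hasDerivAt_Dfun hq β x).deriv

theorem hasDerivAt_deriv_Dfun (hq : 1 < q) (β x : ℝ) :
    HasDerivAt (deriv (Dfun q β))
      ((2 * β * q / (q - 1)) ^ 2 * (balancedProb q β x * (1 - balancedProb q β x))
        * (1 - 2 * balancedProb q β x)) x := by
  have h := hasDerivAt_balancedProb q β x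
  rw [deriv_Dfun hq]
  exact (((h.mul (h.const_sub 1)).const_mul (2 * β * q / ((q : ℝ) - 1))).sub_const 1).congr_deriv
    (by ring)

theorem differentiable_Dfun (hq : 1 < q) (β : ℝ) : Differentiable ℝ (Dfun q β) :=
  fun x => (hasDerivAt_Dfun hq β x).differentiableAt

theorem Dfun_one_neg (hq : 1 < q) (β : ℝ) : Dfun q β 1 < 0 := by
  rw [Dfun_eq_balancedProb_sub hq]
  linarith [show balancedProb q β 1 < 1 from Real.sigmoid_lt_one _]

theorem exists_Dfun_eq_zero_of_nonneg (hq : 1 < q) (hx1 : x ≤ 1) (hx : 0 ≤ Dfun q β x) :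
    ∃ y ∈ Set.Ico x 1, Dfun q β y = 0 := by
  obtain ⟨y, hy, hy0⟩ := intermediate_value_Icc' hx1
    (differentiable_Dfun hq β).continuous.continuousOn
    (Set.mem_Icc.mpr ⟨(Dfun_one_neg hq β).le, hx⟩)
  refine ⟨y, ⟨hy.1, lt_of_le_of_ne hy.2 ?_⟩, hy0⟩
  rintro rfl
  exact (Dfun_one_neg hq β).ne hy0

end Drift

section CriticalTemperature

variable {q : ℕ} {β x : ℝ}

theorem two_mul_betaC_lt (hq : 3 ≤ q) : 2 * betaC q < q := by
  have hq' : (3 : ℝ) ≤ q := mod_cast hq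
  have hsinh := Real.self_lt_sinh_iff.mpr (Real.log_pos (by linarith : (1 : ℝ) < q - 1))
  rw [Real.sinh_eq, Real.exp_neg, Real.exp_log (by linarith)] at hsinh
  rw [betaC, if_neg (by omega), ← mul_div_assoc, div_lt_iff₀ (by linarith)]
  have hq1 : (q : ℝ) - 1 ≠ 0 := by linarith
  calc 2 * (((q : ℝ) - 1) * Real.log (q - 1))
      < 2 * ((q - 1) * (((q - 1) - ((q : ℝ) - 1)⁻¹) / 2)) := by
        have := mul_lt_mul_of_pos_left hsinh (by linarith : (0 : ℝ) < q - 1)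
        linarith
    _ = q * (q - 2) := by field_simp; ring

theorem Dfun_betaC (hq : 3 ≤ q) : Dfun q (betaC q) ((q - 1) / q) = 0 := by
  have hq' : (3 : ℝ) ≤ q := mod_cast hq
  have hq0 : (q : ℝ) ≠ 0 := by linarith
  have hq1 : (q : ℝ) - 1 ≠ 0 := by linarith
  have hq2 : (q : ℝ) - 2 ≠ 0 := by linarith
  have harg : 2 * betaC q * (1 - (q : ℝ) * ((q - 1) / q)) / (q - 1)
      = -(Real.log ((q : ℝ) - 1) + Real.log ((q : ℝ) - 1)) := by
    rw [betaC, if_neg (by omega)]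
    field_simp
    ring
  rw [Dfun, harg, Real.exp_neg, Real.exp_add, Real.exp_log (by linarith)]
  have hinv : 1 + ((q : ℝ) - 1) * (((q : ℝ) - 1) * (q - 1))⁻¹ = q / (q - 1) := by
    field_simp
    ring
  rw [hinv, inv_div]
  ring

/-- The set of inverse temperatures whose supremum defines `betaS`. -/
def zeroFreeTemperatures (q : ℕ) : Set ℝ :=
  {β : ℝ | 0 ≤ β ∧ ∀ x ∈ Set.Ioo (1 / (q : ℝ)) 1, Dfun q β x ≠ 0}

theorem zero_mem_zeroFreeTemperatures (q : ℕ) : 0 ∈ zeroFreeTemperatures q := by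
  refine ⟨le_rfl, fun x hx => ne_of_lt ?_⟩
  have hx0 := hx.1
  rw [one_div] at hx0
  simp only [Dfun, mul_zero, zero_mul, zero_div, Real.exp_zero, mul_one]
  rw [add_sub_cancel]
  linarith

theorem Dfun_neg_of_mem_zeroFreeTemperatures (hq : 1 < q) (h : β ∈ zeroFreeTemperatures q)
    (hx : 1 / (q : ℝ) < x) (hx1 : x ≤ 1) : Dfun q β x < 0 := by
  by_contra! hc
  obtain ⟨y, hy, hy0⟩ := exists_Dfun_eq_zero_of_nonneg hq hx1 hc
  exact h.2 y ⟨hx.trans_le hy.1, hy.2⟩ hy0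

theorem le_betaC_of_mem_zeroFreeTemperatures (hq : 3 ≤ q) (h : β ∈ zeroFreeTemperatures q) :
    β ≤ betaC q := by
  have hq' : (3 : ℝ) ≤ q := mod_cast hq
  have hlow : 1 / (q : ℝ) < (q - 1) / q := by gcongr; linarith
  have hup : ((q : ℝ) - 1) / q ≤ 1 := (div_le_one (by linarith)).mpr (by linarith)
  by_contra! hc
  have hneg := Dfun_neg_of_mem_zeroFreeTemperatures (by omega) h hlow hup
  linarith [Dfun_mono_left (by omega) hc.le hlow.le, Dfun_betaC hq]

theorem bddAbove_zeroFreeTemperatures (hq : 3 ≤ q) : BddAbove (zeroFreeTemperatures q) :=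
  ⟨betaC q, fun _ h => le_betaC_of_mem_zeroFreeTemperatures hq h⟩

theorem le_betaS_of_mem_zeroFreeTemperatures (hq : 3 ≤ q) (h : β ∈ zeroFreeTemperatures q) :
    β ≤ betaS q :=
  le_csSup (bddAbove_zeroFreeTemperatures hq) h

theorem betaS_nonneg (hq : 3 ≤ q) : 0 ≤ betaS q :=
  le_betaS_of_mem_zeroFreeTemperatures hq (zero_mem_zeroFreeTemperatures q)

theorem betaS_le_betaC (hq : 3 ≤ q) : betaS q ≤ betaC q :=
  csSup_le ⟨0, zero_mem_zeroFreeTemperatures q⟩ fun _ h =>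
    le_betaC_of_mem_zeroFreeTemperatures hq h

theorem two_mul_betaS_lt (hq : 3 ≤ q) : 2 * betaS q < q := by
  linarith [betaS_le_betaC hq, two_mul_betaC_lt hq]

theorem Dfun_betaS_nonpos (hq : 3 ≤ q) (hx : 1 / (q : ℝ) < x) (hx1 : x ≤ 1) :
    Dfun q (betaS q) x ≤ 0 := by
  by_contra! hc
  obtain ⟨β, hβ, hlt⟩ := exists_lt_of_lt_csSup (s := zeroFreeTemperatures q)
    (b := betaS q - Dfun q (betaS q) x / 4) ⟨0, zero_mem_zeroFreeTemperatures q⟩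
    (by change _ < betaS q; linarith)
  have hneg := Dfun_neg_of_mem_zeroFreeTemperatures (by omega) hβ hx hx1
  have hle := le_betaS_of_mem_zeroFreeTemperatures hq hβ
  linarith [Dfun_sub_le (by omega) hle hx.le hx1]

theorem exists_gt_mem_zeroFreeTemperatures (hq : 1 < q) (hβ : β ∈ zeroFreeTemperatures q)
    (hβq : 2 * β < q) : ∃ β' > β, β' ∈ zeroFreeTemperatures q := by
  obtain ⟨β₁, hβ₁, c, hc, r, hr, hnear⟩ := exists_forall_Dfun_le_neg_mul hq hβ.1 hβq
  obtain ⟨η, hη, hfar⟩ := exists_pos_forall_le_neg_of_isCompact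
    (isCompact_Icc (a := 1 / (q : ℝ) + r) (b := 1))
    (differentiable_Dfun hq β).continuous.continuousOn fun x hx =>
      Dfun_neg_of_mem_zeroFreeTemperatures hq hβ (by linarith [hx.1]) hx.2
  have hgt : β < min (β + η / 4) β₁ := lt_min (by linarith) hβ₁
  refine ⟨_, hgt, hβ.1.trans hgt.le, fun x hx => ne_of_lt ?_⟩
  rcases le_or_gt x (1 / q + r) with hxr | hxr
  · have hpos := mul_pos hc (sub_pos.mpr hx.1)
    linarith [hnear _ ⟨hβ.1.trans hgt.le, min_le_right _ _⟩ x ⟨hx.1.le, hxr⟩]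
  · have hclose := min_le_left (β + η / 4) β₁
    linarith [Dfun_sub_le hq hgt.le hx.1.le hx.2.le, hfar x ⟨hxr.le, hx.2.le⟩]

theorem exists_Dfun_betaS_eq_zero (hq : 3 ≤ q) :
    ∃ a ∈ Set.Ioo (1 / (q : ℝ)) 1, Dfun q (betaS q) a = 0 := by
  by_contra! hcon
  obtain ⟨β, hβ, hmem⟩ := exists_gt_mem_zeroFreeTemperatures (by omega)
    ⟨betaS_nonneg hq, hcon⟩ (two_mul_betaS_lt hq)
  exact hβ.not_ge (le_betaS_of_mem_zeroFreeTemperatures hq hmem)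

theorem betaS_pos (hq : 3 ≤ q) : 0 < betaS q := by
  obtain ⟨a, ha, h0⟩ := exists_Dfun_betaS_eq_zero hq
  refine (betaS_nonneg hq).lt_of_ne fun h => (zero_mem_zeroFreeTemperatures q).2 a ha ?_
  rwa [← h] at h0

end CriticalTemperature

section CriticalZero

open scoped Topology

variable {q : ℕ} {a b : ℝ}

theorem balancedProb_eq_of_Dfun_eq_zero (hq : 1 < q) {β : ℝ} (h0 : Dfun q β a = 0) :
    balancedProb q β a = a := by
  rw [Dfun_eq_balancedProb_sub hq] at h0
  linarith

-- `Dfun q (betaS q)` is nonpositive on `(1/q, 1)`, so its zeros there are local maxima.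
theorem deriv_Dfun_betaS_eq_zero (hq : 3 ≤ q) (ha : a ∈ Set.Ioo (1 / (q : ℝ)) 1)
    (h0 : Dfun q (betaS q) a = 0) : deriv (Dfun q (betaS q)) a = 0 := by
  refine IsLocalMax.deriv_eq_zero ?_
  filter_upwards [Ioo_mem_nhds ha.1 ha.2] with x hx
  exact (Dfun_betaS_nonpos hq hx.1 hx.2.le).trans_eq h0.symm

theorem two_mul_betaS_mul_eq_one (hq : 3 ≤ q) (ha : a ∈ Set.Ioo (1 / (q : ℝ)) 1)
    (h0 : Dfun q (betaS q) a = 0) : 2 * betaS q * q / (q - 1) * (a * (1 - a)) = 1 := by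
  have hderiv := deriv_Dfun_betaS_eq_zero hq ha h0
  simp only [deriv_Dfun (by omega : 1 < q), balancedProb_eq_of_Dfun_eq_zero (by omega) h0]
    at hderiv
  linarith

theorem half_lt_of_Dfun_betaS_eq_zero (hq : 3 ≤ q) (ha : a ∈ Set.Ioo (1 / (q : ℝ)) 1)
    (h0 : Dfun q (betaS q) a = 0) : 1 / 2 < a := by
  have hq' : (3 : ℝ) ≤ q := mod_cast hq
  have hκ : 0 ≤ 2 * betaS q * q / (q - 1) :=
    div_nonneg (by have := betaS_pos hq; positivity) (by linarith)
  have hcrit := two_mul_betaS_mul_eq_one hq ha h0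
  have hfix := balancedProb_eq_of_Dfun_eq_zero (by omega) h0
  by_contra! hc
  have hanti : AntitoneOn (Dfun q (betaS q)) (Set.Icc (1 / (q : ℝ)) a) := by
    refine antitoneOn_of_deriv_nonpos (convex_Icc _ _)
      (differentiable_Dfun (by omega) _).continuous.continuousOn
      (differentiable_Dfun (by omega) _).differentiableOn fun x hx => ?_
    rw [interior_Icc] at hx
    have hle : balancedProb q (betaS q) x ≤ a := by
      rw [← hfix]
      exact balancedProb_monotone (by omega) (betaS_nonneg hq) hx.2.le
    simp only [deriv_Dfun (by omega : 1 < q)]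
    have hvar : balancedProb q (betaS q) x * (1 - balancedProb q (betaS q) x) ≤ a * (1 - a) := by
      nlinarith
    linarith [mul_le_mul_of_nonneg_left hvar hκ]
  obtain ⟨_, hβ₁, c, hc0, r, hr, hnear⟩ :=
    exists_forall_Dfun_le_neg_mul (by omega) (betaS_nonneg hq) (two_mul_betaS_lt hq)
  set x := min (1 / (q : ℝ) + r) a
  have hx : 1 / (q : ℝ) < x := lt_min (by linarith) ha.1
  have hneg := hnear _ ⟨betaS_nonneg hq, hβ₁.le⟩ x ⟨hx.le, min_le_left _ _⟩
  have hge := hanti ⟨hx.le, min_le_right _ _⟩ (Set.right_mem_Icc.mpr ha.1.le) (min_le_right _ _)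
  linarith [mul_pos hc0 (sub_pos.mpr hx)]

theorem Dfun_betaS_zero_unique (hq : 3 ≤ q) (ha : a ∈ Set.Ioo (1 / (q : ℝ)) 1)
    (ha0 : Dfun q (betaS q) a = 0) (hb : b ∈ Set.Ioo (1 / (q : ℝ)) 1)
    (hb0 : Dfun q (betaS q) b = 0) : b = a := by
  have hacrit := two_mul_betaS_mul_eq_one hq ha ha0
  have hbcrit := two_mul_betaS_mul_eq_one hq hb hb0
  have hfactor : (b - a) * (1 - b - a) = 0 := by
    linear_combination (a * (1 - a)) * (hbcrit - hacrit) - (b - a) * (1 - b - a) * hacrit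
  rcases mul_eq_zero.mp hfactor with h | h
  · linarith
  · linarith [half_lt_of_Dfun_betaS_eq_zero hq ha ha0, half_lt_of_Dfun_betaS_eq_zero hq hb hb0]

theorem Dfun_betaS_neg_of_ne (hq : 3 ≤ q) (ha : a ∈ Set.Ioo (1 / (q : ℝ)) 1)
    (h0 : Dfun q (betaS q) a = 0) {x : ℝ} (hx : 1 / (q : ℝ) < x) (hx1 : x ≤ 1) (hxa : x ≠ a) :
    Dfun q (betaS q) x < 0 := by
  refine (Dfun_betaS_nonpos hq hx hx1).lt_of_ne fun hx0 => hxa ?_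
  refine Dfun_betaS_zero_unique hq ha h0 ⟨hx, hx1.lt_of_ne ?_⟩ hx0
  rintro rfl
  exact (Dfun_one_neg (by omega) _).ne hx0

theorem hasDerivAt_deriv_Dfun_betaS (hq : 3 ≤ q) (ha : a ∈ Set.Ioo (1 / (q : ℝ)) 1)
    (h0 : Dfun q (betaS q) a = 0) :
    ∃ m > 0, HasDerivAt (deriv (Dfun q (betaS q))) (-m) a := by
  have hcrit := two_mul_betaS_mul_eq_one hq ha h0
  have hhalf := half_lt_of_Dfun_betaS_eq_zero hq ha h0
  have hderiv := hasDerivAt_deriv_Dfun (by omega : 1 < q) (betaS q) a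
  rw [balancedProb_eq_of_Dfun_eq_zero (by omega) h0] at hderiv
  set κ := 2 * betaS q * q / ((q : ℝ) - 1)
  have hκ : 0 < κ := by
    have ha1 := ha.2
    refine pos_of_mul_pos_left (b := a * (1 - a)) (by linarith) ?_
    exact mul_nonneg (by linarith) (by linarith)
  refine ⟨κ * (2 * a - 1), mul_pos hκ (by linarith), hderiv.congr_deriv ?_⟩
  linear_combination κ * (1 - 2 * a) * hcrit

theorem exists_forall_Dfun_betaS_ge (hq : 3 ≤ q) (ha : a ∈ Set.Ioo (1 / (q : ℝ)) 1)
    (h0 : Dfun q (betaS q) a = 0) :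
    ∃ C > 0, ∀ x ≤ 1, -C * (x - a) ^ 2 ≤ Dfun q (betaS q) x := by
  obtain ⟨m, hm, hderiv⟩ := hasDerivAt_deriv_Dfun_betaS hq ha h0
  obtain ⟨r, hr, hlocal⟩ := Metric.eventually_nhds_iff.mp (eventually_ge_of_lt_deriv_deriv
    (m := -m) (differentiable_Dfun (by omega) _) (deriv_Dfun_betaS_eq_zero hq ha h0) hderiv
    (by linarith))
  refine ⟨max m (1 / r ^ 2), lt_max_of_lt_left hm, fun x hx => ?_⟩
  rcases lt_or_ge |x - a| r with hxa | hxa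
  · have hnear := hlocal (Real.dist_eq x a ▸ hxa)
    have hcoef : m * (x - a) ^ 2 ≤ max m (1 / r ^ 2) * (x - a) ^ 2 := by
      gcongr
      exact le_max_left _ _
    linarith
  · have hone : 1 ≤ max m (1 / r ^ 2) * (x - a) ^ 2 := by
      calc 1 = 1 / r ^ 2 * r ^ 2 := by field_simp
        _ ≤ max m (1 / r ^ 2) * |x - a| ^ 2 := by gcongr; exact le_max_right _ _
        _ = _ := by rw [sq_abs]
    rw [Dfun_eq_balancedProb_sub (by omega)]
    linarith [show 0 < balancedProb q (betaS q) x from Real.sigmoid_pos _]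

theorem exists_forall_Dfun_betaS_le_neg (hq : 3 ≤ q) (ha : a ∈ Set.Ioo (1 / (q : ℝ)) 1)
    (h0 : Dfun q (betaS q) a = 0) {r ρ : ℝ} (hr : 0 < r) (hρ : 0 < ρ) :
    ∃ η > 0, ∀ x ∈ Set.Icc (1 / (q : ℝ) + r) 1, ρ ≤ |x - a| → Dfun q (betaS q) x ≤ -η := by
  have hclosed : IsClosed {x : ℝ | ρ ≤ |x - a|} := isClosed_le continuous_const (by fun_prop)
  obtain ⟨η, hη, hfar⟩ := exists_pos_forall_le_neg_of_isCompact
    ((isCompact_Icc (a := 1 / (q : ℝ) + r) (b := 1)).inter_right hclosed)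
    (differentiable_Dfun (by omega : 1 < q) (betaS q)).continuous.continuousOn fun x hx => by
      refine Dfun_betaS_neg_of_ne hq ha h0 (by linarith [hx.1.1]) hx.1.2 ?_
      rintro rfl
      exact hρ.not_ge (by simpa using hx.2)
  exact ⟨η, hη, fun x hx hxa => hfar x ⟨hx, hxa⟩⟩

theorem exists_forall_Dfun_betaS_le (hq : 3 ≤ q) (ha : a ∈ Set.Ioo (1 / (q : ℝ)) 1)
    (h0 : Dfun q (betaS q) a = 0) :
    ∃ c > 0, ∀ x ∈ Set.Icc (1 / (q : ℝ)) 1,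
      Dfun q (betaS q) x ≤ -c * (x - a) ^ 2 * (x - 1 / q) := by
  have hq0 : 0 ≤ 1 / (q : ℝ) := by positivity
  obtain ⟨m, hm, hderiv⟩ := hasDerivAt_deriv_Dfun_betaS hq ha h0
  obtain ⟨ρ, hρ, hlocal⟩ := Metric.eventually_nhds_iff.mp (eventually_le_of_deriv_deriv_lt
    (m := -(m / 4)) (differentiable_Dfun (by omega) _) (deriv_Dfun_betaS_eq_zero hq ha h0) hderiv
    (by linarith))
  obtain ⟨_, hβ₁, c, hc, r, hr, hnear⟩ :=
    exists_forall_Dfun_le_neg_mul (by omega) (betaS_nonneg hq) (two_mul_betaS_lt hq)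
  obtain ⟨η, hη, hfar⟩ := exists_forall_Dfun_betaS_le_neg hq ha h0 hr hρ
  refine ⟨min (m / 4) (min c η), by positivity, fun x hx => ?_⟩
  have hdist0 : 0 ≤ x - 1 / q := by linarith [hx.1]
  have hdist1 : x - 1 / q ≤ 1 := by linarith [hx.2]
  have hsq : (x - a) ^ 2 ≤ 1 := by nlinarith [hx.1, hx.2, ha.1, ha.2]
  rcases le_or_gt x (1 / q + r) with hxr | hxr
  · have hcoef : min (m / 4) (min c η) * (x - a) ^ 2 * (x - 1 / q) ≤ c * 1 * (x - 1 / q) := by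
      gcongr
      exact (min_le_right _ _).trans (min_le_left _ _)
    linarith [hnear _ ⟨betaS_nonneg hq, hβ₁.le⟩ x ⟨hx.1, hxr⟩]
  rcases lt_or_ge |x - a| ρ with hxa | hxa
  · have hcoef : min (m / 4) (min c η) * (x - a) ^ 2 * (x - 1 / q) ≤ m / 4 * (x - a) ^ 2 * 1 := by
      gcongr
      exact min_le_left _ _
    linarith [hlocal (Real.dist_eq x a ▸ hxa)]
  · have hcoef : min (m / 4) (min c η) * (x - a) ^ 2 * (x - 1 / q) ≤ η * 1 * 1 := by
      gcongr
      exact (min_le_right _ _).trans (min_le_right _ _)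
    linarith [hfar x ⟨hxr.le, hx.2⟩ hxa]

end CriticalZero

section ColorSpread

open scoped Matrix

variable {q n : ℕ} {β : ℝ}

/-- The average proportion of the colors other than `k`. -/
noncomputable def otherMean (σ : Fin n → Fin q) (k : Fin q) : ℝ := (1 - colorFrac σ k) / (q - 1)

/-- The sum of the squared deviations of the proportions of the colors other than `k` from their
average. -/
noncomputable def colorSpread (k : Fin q) (σ : Fin n → Fin q) : ℝ :=
  ∑ j ∈ univ.erase k, (colorFrac σ j - otherMean σ k) ^ 2

theorem sum_erase_colorFrac_sub_otherMean (hq : 1 < q) (hn : 0 < n) (σ : Fin n → Fin q)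
    (k : Fin q) : ∑ j ∈ univ.erase k, (colorFrac σ j - otherMean σ k) = 0 := by
  have hq' : (1 : ℝ) < q := mod_cast hq
  have hsum := sum_colorFrac hn σ
  rw [← add_sum_erase _ _ (mem_univ k)] at hsum
  rw [sum_sub_distrib, sum_const, card_erase_of_mem (mem_univ k), card_univ, Fintype.card_fin,
    nsmul_eq_mul, Nat.cast_pred (by omega), otherMean, mul_div_cancel₀ _ (by linarith)]
  linarith

theorem otherMean_mem_Icc (hq : 1 < q) (σ : Fin n → Fin q) (k : Fin q) :
    otherMean σ k ∈ Set.Icc 0 1 := by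
  have hq' : (2 : ℝ) ≤ q := mod_cast hq
  exact ⟨div_nonneg (by linarith [colorFrac_le_one σ k]) (by linarith),
    (div_le_one (by linarith)).mpr (by linarith [colorFrac_nonneg σ k])⟩

theorem abs_colorFrac_sub_otherMean_le_one (hq : 1 < q) (σ : Fin n → Fin q) (j k : Fin q) :
    |colorFrac σ j - otherMean σ k| ≤ 1 := by
  obtain ⟨h0, h1⟩ := otherMean_mem_Icc hq σ k
  rw [abs_le]
  constructor <;> linarith [colorFrac_nonneg σ j, colorFrac_le_one σ j]

theorem colorSpread_nonneg (k : Fin q) (σ : Fin n → Fin q) : 0 ≤ colorSpread k σ :=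
  sum_nonneg fun _ _ => sq_nonneg _

theorem abs_colorFrac_sub_otherMean_le {k : Fin q} {σ : Fin n → Fin q} {η : ℝ} (hη : 0 ≤ η)
    (h : colorSpread k σ ≤ η ^ 2) {j : Fin q} (hj : j ≠ k) :
    |colorFrac σ j - otherMean σ k| ≤ η := by
  refine abs_le_of_sq_le_sq (le_trans ?_ h) hη
  exact single_le_sum (f := fun j => (colorFrac σ j - otherMean σ k) ^ 2)
    (fun _ _ => sq_nonneg _) (mem_erase.mpr ⟨hj, mem_univ j⟩)

theorem balancedProb_colorFrac (hq : 1 < q) (β : ℝ) (σ : Fin n → Fin q) (k : Fin q) :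
    balancedProb q β (colorFrac σ k)
      = (1 + Real.exp (2 * β * otherMean σ k - 2 * β * colorFrac σ k) * #(univ.erase k))⁻¹ := by
  have hq' : (1 : ℝ) < q := mod_cast hq
  have hq1 : (q : ℝ) - 1 ≠ 0 := by linarith
  rw [balancedProb_eq_inv hq, card_erase_of_mem (mem_univ k), card_univ, Fintype.card_fin,
    Nat.cast_pred (by omega), mul_comm (Real.exp _), otherMean]
  congr 4
  field_simp
  ring

theorem sum_erase_two_mul_colorFrac_sub (hq : 1 < q) (hn : 0 < n) (β : ℝ) (σ : Fin n → Fin q)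
    (k : Fin q) :
    ∑ j ∈ univ.erase k, (2 * β * colorFrac σ j - 2 * β * otherMean σ k) = 0 := by
  simp_rw [← mul_sub, ← mul_sum]
  rw [sum_erase_colorFrac_sub_otherMean hq hn, mul_zero]

theorem meanFieldProb_le_balancedProb (hq : 1 < q) (hn : 0 < n) (β : ℝ) (σ : Fin n → Fin q)
    (k : Fin q) : meanFieldProb β σ k ≤ balancedProb q β (colorFrac σ k) := by
  rw [balancedProb_colorFrac hq]
  exact softmax_le_inv_of_sum_eq_zero (sum_erase_two_mul_colorFrac_sub hq hn β σ k)

theorem balancedProb_sub_le_meanFieldProb (hq : 1 < q) (hn : 0 < n) (hβ : 0 ≤ β)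
    (hβq : 2 * β ≤ q) {σ : Fin n → Fin q} {k : Fin q} (h : colorSpread k σ ≤ (1 / q) ^ 2) :
    balancedProb q β (colorFrac σ k) - q ^ 2 * colorSpread k σ ≤ meanFieldProb β σ k := by
  have : Nontrivial (Fin q) := Fin.nontrivial_iff_two_le.mpr hq
  have hq0 : (q : ℝ) ≠ 0 := by positivity
  have hsoftmax := inv_sub_le_softmax_of_sum_eq_zero
    (sum_erase_two_mul_colorFrac_sub hq hn β σ k) fun j hj => by
      rw [← mul_sub, abs_mul, abs_of_nonneg (by linarith)]
      calc 2 * β * |colorFrac σ j - otherMean σ k| ≤ q * (1 / q) := by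
            gcongr
            exact abs_colorFrac_sub_otherMean_le (by positivity) h hj
        _ = 1 := by field_simp
  have hspread : ∑ j ∈ univ.erase k, (2 * β * colorFrac σ j - 2 * β * otherMean σ k) ^ 2
      ≤ q ^ 2 * colorSpread k σ := by
    simp_rw [← mul_sub, mul_pow, ← mul_sum]
    rw [← mul_pow]
    gcongr
    exact le_rfl
  rw [balancedProb_colorFrac hq]
  exact (by linarith : _ - _ ≤ _).trans hsoftmax

theorem otherMean_update (σ : Fin n → Fin q) (k : Fin q) (m : Fin n × Fin q) :
    otherMean (Function.update σ m.1 m.2) k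
      = otherMean σ k - moveIncr σ k m / (q - 1) / n := by
  rw [otherMean, otherMean, colorFrac_update]
  ring

theorem colorSpread_update_le (hq : 1 < q) (hn : 0 < n) (k : Fin q) (σ : Fin n → Fin q)
    (m : Fin n × Fin q) :
    colorSpread k (Function.update σ m.1 m.2)
      ≤ (∑ j ∈ univ.erase k, (2 / n * (colorFrac σ j - otherMean σ k)) • moveIncr σ j) m
        + (colorSpread k σ + 4 * q / n ^ 2) := by
  have hq' : (2 : ℝ) ≤ q := mod_cast hq
  set c := moveIncr σ k m / ((q : ℝ) - 1) with hc
  have hc1 : |c| ≤ 1 := by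
    rw [hc, abs_div, abs_of_pos (by linarith : 0 < (q : ℝ) - 1), div_le_one (by linarith)]
    linarith [abs_moveIncr_le_one σ k m]
  have hsq (j : Fin q) : (moveIncr σ j m + c) ^ 2 / (n : ℝ) ^ 2 ≤ 4 / n ^ 2 := by
    gcongr
    calc (moveIncr σ j m + c) ^ 2 = |moveIncr σ j m + c| ^ 2 := (sq_abs _).symm
      _ ≤ (1 + 1) ^ 2 := by
        gcongr
        exact (abs_add_le _ _).trans (add_le_add (abs_moveIncr_le_one σ j m) hc1)
      _ = 4 := by norm_num
  have hsum : ∑ j ∈ univ.erase k, (moveIncr σ j m + c) ^ 2 / (n : ℝ) ^ 2 ≤ 4 * q / n ^ 2 :=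
    calc _ ≤ ∑ j, (moveIncr σ j m + c) ^ 2 / (n : ℝ) ^ 2 :=
          sum_le_univ_sum_of_nonneg fun j => by positivity
      _ ≤ ∑ _j : Fin q, 4 / (n : ℝ) ^ 2 := sum_le_sum fun j _ => hsq j
      _ = _ := by simp; ring
  have hexpand (j : Fin q) : (colorFrac σ j + moveIncr σ j m / n - (otherMean σ k - c / n)) ^ 2
      = (colorFrac σ j - otherMean σ k) ^ 2
        + 2 / n * (colorFrac σ j - otherMean σ k) * moveIncr σ j m
        + 2 * c / n * (colorFrac σ j - otherMean σ k) + (moveIncr σ j m + c) ^ 2 / n ^ 2 := by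
    field_simp
    ring
  simp only [colorSpread, otherMean_update, colorFrac_update, ← hc, hexpand, sum_add_distrib,
    ← mul_sum, sum_erase_colorFrac_sub_otherMean hq hn, Finset.sum_apply, Pi.smul_apply,
    smul_eq_mul]
  linarith

theorem glauberKernel_mulVec_colorSpread_le_meanIncr (hq : 1 < q) (hn : 0 < n) (β : ℝ)
    (σ : Fin n → Fin q) (k : Fin q) :
    (glauberKernel q n β *ᵥ colorSpread k) σ ≤ colorSpread k σ
      + 2 / n * ∑ j ∈ univ.erase k, (colorFrac σ j - otherMean σ k) * meanIncr β σ j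
      + 4 * q / n ^ 2 := by
  have hstep := stepProb_mem_stdSimplex hn β σ
  rw [glauberKernel_mulVec_apply]
  refine (dotProduct_mono_of_mem_stdSimplex hstep (colorSpread_update_le hq hn k σ)).trans_eq ?_
  rw [dotProduct_add_const_of_mem_stdSimplex hstep, dotProduct_sum, mul_sum]
  simp_rw [dotProduct_smul, smul_eq_mul, meanIncr, mul_assoc]
  ring

theorem glauberKernel_mulVec_colorSpread_le (hq : 1 < q) (hn0 : 0 < n) (hn : 2 * q ≤ n)
    (hβ : 0 ≤ β) (hβq : 2 * β ≤ q) (σ : Fin n → Fin q) (k : Fin q) :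
    (glauberKernel q n β *ᵥ colorSpread k) σ ≤ colorSpread k σ
      + 2 / n * ∑ j ∈ univ.erase k,
          (colorFrac σ j - otherMean σ k) * (meanFieldProb β σ j - colorFrac σ j)
      + 12 * q ^ 2 / n ^ 2 := by
  have hq' : (1 : ℝ) ≤ q := by exact_mod_cast hq.le
  have hterm (j : Fin q) : (colorFrac σ j - otherMean σ k) * meanIncr β σ j
      ≤ (colorFrac σ j - otherMean σ k) * (meanFieldProb β σ j - colorFrac σ j)
        + 4 * q / n := by
    have herr := mul_le_mul (abs_colorFrac_sub_otherMean_le_one hq σ j k)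
      (abs_meanIncr_sub_le hβ hβq hn hn0 σ j) (abs_nonneg _) zero_le_one
    rw [← abs_mul] at herr
    linarith [le_abs_self ((colorFrac σ j - otherMean σ k)
      * (meanIncr β σ j - (meanFieldProb β σ j - colorFrac σ j)))]
  have hsum : ∑ j ∈ univ.erase k, (colorFrac σ j - otherMean σ k) * meanIncr β σ j
      ≤ ∑ j ∈ univ.erase k,
          (colorFrac σ j - otherMean σ k) * (meanFieldProb β σ j - colorFrac σ j)
        + q * (4 * q / n) := by
    refine (sum_le_sum fun j _ => hterm j).trans ?_
    rw [sum_add_distrib, sum_const, nsmul_eq_mul]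
    gcongr
    simp
  have hscaled := mul_le_mul_of_nonneg_left hsum (by positivity : 0 ≤ 2 / (n : ℝ))
  have hlin : 4 * (q : ℝ) / n ^ 2 ≤ 4 * q ^ 2 / n ^ 2 := by
    gcongr
    exact le_self_pow₀ hq' two_ne_zero
  have hsplit : 2 / (n : ℝ) * (q * (4 * q / n)) + 4 * q ^ 2 / n ^ 2 = 12 * q ^ 2 / n ^ 2 := by
    field_simp
    ring
  linarith [glauberKernel_mulVec_colorSpread_le_meanIncr hq hn0 β σ k]

end ColorSpread

section CubeRoot

/-- The scale `n^(1/3)` of the critical window: the proportion of the dominant color has to pass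
a region of width `n^(-1/3)`. -/
noncomputable def cubeRoot (n : ℕ) : ℝ := (n : ℝ) ^ (1 / 3 : ℝ)

theorem cubeRoot_pow (n m : ℕ) : cubeRoot n ^ m = (n : ℝ) ^ (m / 3 : ℝ) := by
  rw [cubeRoot, ← Real.rpow_natCast, ← Real.rpow_mul n.cast_nonneg, one_div_mul_eq_div]

theorem cubeRoot_pow_three (n : ℕ) : cubeRoot n ^ 3 = n := by
  rw [cubeRoot_pow, Nat.cast_ofNat, div_self three_ne_zero, Real.rpow_one]

theorem tendsto_cubeRoot_atTop : Tendsto cubeRoot atTop atTop :=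
  (tendsto_rpow_atTop (by norm_num)).comp tendsto_natCast_atTop_atTop

end CubeRoot

section DominantColor

open scoped Matrix

variable {q n : ℕ} {β : ℝ}

theorem meanIncr_le_Dfun_betaS_add (hq : 3 ≤ q) (hn0 : 0 < n) (hn : 2 * q ≤ n) (hβ : 0 ≤ β)
    (hβs : β ≤ betaS q) {σ : Fin n → Fin q} {k : Fin q} (hx : 1 / (q : ℝ) ≤ colorFrac σ k) :
    meanIncr β σ k ≤ Dfun q (betaS q) (colorFrac σ k) + 4 * q / n := by
  have hq1 : 1 < q := by omega
  have hβq : 2 * β ≤ q := by linarith [two_mul_betaS_lt hq]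
  have happrox := (abs_le.mp (abs_meanIncr_sub_le hβ hβq hn hn0 σ k)).2
  have hmean := meanFieldProb_le_balancedProb hq1 hn0 β σ k
  have hmono := Dfun_mono_left hq1 hβs hx
  rw [Dfun_eq_balancedProb_sub hq1 β] at hmono
  linarith

theorem Dfun_betaS_sub_le_meanIncr (hq : 3 ≤ q) (hn0 : 0 < n) (hn : 2 * q ≤ n) (hβ : 0 ≤ β)
    (hβs : β ≤ betaS q) {σ : Fin n → Fin q} {k : Fin q} (hx : 1 / (q : ℝ) ≤ colorFrac σ k)
    (hspread : colorSpread k σ ≤ (1 / q) ^ 2) :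
    Dfun q (betaS q) (colorFrac σ k) - 2 * (betaS q - β) - q ^ 2 * colorSpread k σ - 4 * q / n
      ≤ meanIncr β σ k := by
  have hq1 : 1 < q := by omega
  have hβq : 2 * β ≤ q := by linarith [two_mul_betaS_lt hq]
  have happrox := (abs_le.mp (abs_meanIncr_sub_le hβ hβq hn hn0 σ k)).1
  have hmean := balancedProb_sub_le_meanFieldProb hq1 hn0 hβ hβq hspread
  have hlip := Dfun_sub_le hq1 hβs hx (colorFrac_le_one σ k)
  rw [Dfun_eq_balancedProb_sub hq1 β] at hlip
  linarith

theorem abs_glauberKernel_mulVec_arctan_sub_le (hn : 0 < n) (β : ℝ) (σ : Fin n → Fin q)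
    (k : Fin q) {s a L u : ℝ} (hs : 0 ≤ s) (hu : s * (colorFrac σ k - a) + L = u) :
    |(glauberKernel q n β *ᵥ fun τ => Real.arctan (s * (colorFrac τ k - a) + L)) σ
        - (Real.arctan u + s / (1 + u ^ 2) * meanIncr β σ k / n
          - u * s ^ 2 / (1 + u ^ 2) ^ 2 * meanSqIncr β σ k / n ^ 2)| ≤ 7 * (s / n) ^ 3 := by
  have htaylor (h : ℝ) (hh : |h| ≤ 1 / n) :
      |Real.arctan (s * (colorFrac σ k + h - a) + L) - (Real.arctan u + s / (1 + u ^ 2) * h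
        + -(u * s ^ 2 / (1 + u ^ 2) ^ 2) * h ^ 2)| ≤ 7 * (s / n) ^ 3 := by
    have hmove : s * (colorFrac σ k + h - a) + L = u + s * h := by rw [← hu]; ring
    rw [hmove]
    calc _ = |Real.arctan (u + s * h) - Real.arctan u - s * h / (1 + u ^ 2)
            + u * (s * h) ^ 2 / (1 + u ^ 2) ^ 2| := by congr 1; ring
      _ ≤ 7 * |s * h| ^ 3 := abs_arctan_add_sub_le u (s * h)
      _ ≤ 7 * (s / n) ^ 3 := by
          rw [abs_mul, abs_of_nonneg hs, div_eq_mul_one_div]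
          gcongr
  have hupper := glauberKernel_mulVec_comp_colorFrac_le hn β σ k
    (φ := fun x => Real.arctan (s * (x - a) + L)) fun h hh => by
      rw [hu]
      exact sub_le_iff_le_add'.1 (abs_le.1 (htaylor h hh)).2
  have hlower := le_glauberKernel_mulVec_comp_colorFrac hn β σ k
    (φ := fun x => Real.arctan (s * (x - a) + L)) fun h hh => by
      rw [hu]
      exact sub_le_iff_le_add.2 (neg_le_sub_iff_le_add.1 (abs_le.1 (htaylor h hh)).1)
  rw [hu, neg_mul, neg_div] at hupper hlower
  exact abs_le.2 ⟨by linarith, by linarith⟩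

theorem max_add_sq_le (x h : ℝ) :
    max (x + h) 0 ^ 2 ≤ max x 0 ^ 2 + 2 * max x 0 * h + 1 * h ^ 2 := by
  calc max (x + h) 0 ^ 2 ≤ |max x 0 + h| ^ 2 := by
        gcongr
        refine max_le (le_trans ?_ (le_abs_self _)) (abs_nonneg _)
        gcongr
        exact le_max_left _ _
    _ = _ := by rw [sq_abs]; ring

theorem glauberKernel_mulVec_sq_max_le (hn : 0 < n) (β : ℝ) (σ : Fin n → Fin q) (k : Fin q)
    (b : ℝ) :
    (glauberKernel q n β *ᵥ fun τ => max (colorFrac τ k - b) 0 ^ 2) σ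
      ≤ max (colorFrac σ k - b) 0 ^ 2
        + 2 * (max (colorFrac σ k - b) 0 * meanIncr β σ k) / n + 1 / n ^ 2 := by
  have hmove := glauberKernel_mulVec_comp_colorFrac_le hn β σ k
    (φ := fun x => max (x - b) 0 ^ 2) (A := 2 * max (colorFrac σ k - b) 0) (B := 1) (R := 0)
    fun h _ => by
      rw [add_sub_right_comm, add_zero]
      exact max_add_sq_le _ _
  rw [add_zero, one_mul, mul_assoc] at hmove
  refine hmove.trans ?_
  gcongr
  exact meanSqIncr_le_one hn β σ k

theorem exists_forall_le_sq_div_add_mul_div {c₁ c₀ : ℝ} (h₁ : 0 < c₁) (h₀ : 0 < c₀) :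
    ∃ L, ∃ c₂ > 0, ∀ u, ∀ v ∈ Set.Icc c₀ 1,
      c₂ ≤ c₁ * (u - L) ^ 2 / (1 + u ^ 2) + u * v / (1 + u ^ 2) ^ 2 := by
  set L : ℝ := 1 + 1 / c₁ with hL
  have hL1 : 1 ≤ L := by rw [hL]; linarith [one_div_pos.2 h₁]
  have hc₁L : c₁ * L = c₁ + 1 := by rw [hL]; field_simp
  refine ⟨L, min (c₁ / 13) (c₀ * (L / 2) / (1 + (3 * L / 2) ^ 2) ^ 2), by positivity,
    fun u v ⟨hv0, hv1⟩ => ?_⟩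
  have hv : 0 < v := h₀.trans_le hv0
  rcases le_or_gt u 0 with hu | hu
  · refine (min_le_left _ _).trans ?_
    have hquad : c₁ * (1 + u ^ 2) + 1 ≤ c₁ * (u - L) ^ 2 := by
      nlinarith [mul_nonneg h₁.le (mul_nonneg (neg_nonneg.mpr hu) (by linarith : 0 ≤ L))]
    have hneg : -1 / (1 + u ^ 2) ≤ u * v / (1 + u ^ 2) ^ 2 := by
      rw [show -1 / (1 + u ^ 2) = -(1 + u ^ 2) / (1 + u ^ 2) ^ 2 by field_simp]
      gcongr
      nlinarith [sq_nonneg (u + 1), mul_nonneg (neg_nonneg.2 hu) (sub_nonneg.2 hv1)]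
    calc c₁ / 13 ≤ c₁ := by linarith
      _ = (c₁ * (1 + u ^ 2) + 1) / (1 + u ^ 2) + -1 / (1 + u ^ 2) := by field_simp; ring
      _ ≤ _ := by gcongr
  rcases le_or_gt (L / 2) |u - L| with hfar | hnear
  · refine (min_le_left _ _).trans (le_add_of_le_of_nonneg ?_ (by positivity))
    rw [div_le_div_iff₀ (by positivity) (by positivity), mul_assoc]
    gcongr
    have habs : u ≤ 3 * |u - L| := by linarith [le_abs_self (u - L)]
    have : 1 ≤ 2 * |u - L| := by linarith
    nlinarith [sq_abs (u - L)]
  · refine (min_le_right _ _).trans (le_add_of_nonneg_of_le (by positivity) ?_)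
    rw [abs_lt] at hnear
    rw [mul_comm u v]
    gcongr <;> linarith

theorem glauberKernel_mulVec_arctan_le (hq : 2 ≤ q) (hn : 0 < n) (hβ : 0 ≤ β) (hβq : 2 * β ≤ q)
    {σ : Fin n → Fin q} {k : Fin q} {ν a L c₁ c₂ : ℝ} (hν : 1 ≤ ν) (hνn : ν ^ 3 = n)
    (hmean : meanIncr β σ k ≤ -c₁ * (colorFrac σ k - a) ^ 2 + 4 * q / n)
    (hgain : ∀ u, ∀ v ∈ Set.Icc (Real.exp (-(2 * q)) / q) 1,
      c₂ ≤ c₁ * (u - L) ^ 2 / (1 + u ^ 2) + u * v / (1 + u ^ 2) ^ 2) :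
    (glauberKernel q n β *ᵥ fun τ => Real.arctan (ν * (colorFrac τ k - a) + L)) σ
      ≤ Real.arctan (ν * (colorFrac σ k - a) + L) - c₂ / ν ^ 4 + (4 * q + 7) / ν ^ 5 := by
  set u := ν * (colorFrac σ k - a) + L with hu
  have hν0 : 0 < ν := by linarith
  have hstep := (abs_le.1 (abs_glauberKernel_mulVec_arctan_sub_le hn β σ k hν0.le hu.symm)).2
  have hdist : colorFrac σ k - a = (u - L) / ν := by rw [hu]; field_simp; ring
  have hdrift : ν / (1 + u ^ 2) * meanIncr β σ k / n
      ≤ -(c₁ * (u - L) ^ 2 / (1 + u ^ 2) / ν ^ 4) + 4 * q / ν ^ 5 := by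
    calc ν / (1 + u ^ 2) * meanIncr β σ k / n
        ≤ ν / (1 + u ^ 2) * (-c₁ * (colorFrac σ k - a) ^ 2 + 4 * q / n) / n := by gcongr
      _ = -(c₁ * (u - L) ^ 2 / (1 + u ^ 2) / ν ^ 4) + 4 * q / ν ^ 5 / (1 + u ^ 2) := by
          rw [hdist, ← hνn]; field_simp
      _ ≤ _ := add_le_add le_rfl (div_le_self (by positivity)
          (le_add_of_nonneg_right (sq_nonneg u)))
  have hdiff : u * ν ^ 2 / (1 + u ^ 2) ^ 2 * meanSqIncr β σ k / n ^ 2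
      = u * meanSqIncr β σ k / (1 + u ^ 2) ^ 2 / ν ^ 4 := by rw [← hνn]; field_simp
  have herr : 7 * (ν / n) ^ 3 ≤ 7 / ν ^ 5 := by
    rw [← hνn, show 7 * (ν / ν ^ 3) ^ 3 = 7 / ν ^ 6 by field_simp]
    gcongr
    norm_num
  have hgainσ := div_le_div_of_nonneg_right (hgain u (meanSqIncr β σ k)
    ⟨exp_neg_div_le_meanSqIncr hq hβ hβq hn σ k, meanSqIncr_le_one hn β σ k⟩)
    (by positivity : 0 ≤ ν ^ 4)
  rw [add_div] at hgainσ
  rw [add_div]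
  linarith

theorem glauberKernel_mulVec_sq_max_le_of_meanIncr_le (hn : 0 < n) {σ : Fin n → Fin q}
    {k : Fin q} {c : ℝ} (hmean : 1 / (q : ℝ) ≤ colorFrac σ k →
      meanIncr β σ k ≤ -c * (colorFrac σ k - 1 / q) + 4 * q / n) :
    (glauberKernel q n β *ᵥ fun τ => max (colorFrac τ k - 1 / q) 0 ^ 2) σ
      ≤ (1 - 2 * c / n) * max (colorFrac σ k - 1 / q) 0 ^ 2 + (8 * q + 1) / n ^ 2 := by
  set z := max (colorFrac σ k - 1 / (q : ℝ)) 0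
  have hz1 : z ≤ 1 := max_le
    ((sub_le_self _ (by positivity)).trans (colorFrac_le_one σ k)) zero_le_one
  have hzmean : z * meanIncr β σ k ≤ -c * z ^ 2 + 4 * q / n := by
    rcases le_or_gt (1 / (q : ℝ)) (colorFrac σ k) with hx | hx
    · have hzx : z = colorFrac σ k - 1 / q := max_eq_left (sub_nonneg.2 hx)
      calc z * meanIncr β σ k ≤ z * (-c * z + 4 * q / n) := by
            rw [hzx]
            exact mul_le_mul_of_nonneg_left (hmean hx) (sub_nonneg.2 hx)
        _ = -c * z ^ 2 + z * (4 * q / n) := by ring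
        _ ≤ _ := by gcongr; exact mul_le_of_le_one_left (by positivity) hz1
    · have hz0 : z = 0 := max_eq_right (by linarith)
      rw [hz0]
      simp only [zero_mul, ne_eq, OfNat.ofNat_ne_zero, not_false_eq_true, zero_pow, mul_zero,
        zero_add]
      positivity
  calc (glauberKernel q n β *ᵥ fun τ => max (colorFrac τ k - 1 / q) 0 ^ 2) σ
      ≤ z ^ 2 + 2 * (z * meanIncr β σ k) / n + 1 / n ^ 2 :=
        glauberKernel_mulVec_sq_max_le hn β σ k _
    _ ≤ z ^ 2 + 2 * (-c * z ^ 2 + 4 * q / n) / n + 1 / n ^ 2 := by gcongr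
    _ = _ := by field_simp; ring

/-- Lyapunov function of the descent to the balanced phase: the squared excess of the proportion
of the color `k` over `1 / q`, in units of `r`. -/
noncomputable def excessLyapunov (r : ℝ) (k : Fin q) (σ : Fin n → Fin q) : ℝ :=
  max (colorFrac σ k - 1 / q) 0 ^ 2 / r ^ 2

/-- Lyapunov function of the passage of the proportion of the color `k` through the degenerate
zero `a` of the drift, in a window of width `1 / ν`. The shift `L` moves the concave part of the
arctangent over `a`, so that the diffusion helps where the drift vanishes. -/
noncomputable def passageLyapunov (ν a L : ℝ) (k : Fin q) (σ : Fin n → Fin q) : ℝ :=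
  Real.arctan (ν * (colorFrac σ k - a) + L) + (1 + Real.pi / 2)

theorem excessLyapunov_nonneg (r : ℝ) (k : Fin q) (σ : Fin n → Fin q) :
    0 ≤ excessLyapunov r k σ := by
  rw [excessLyapunov]
  positivity

theorem one_le_passageLyapunov (ν a L : ℝ) (k : Fin q) (σ : Fin n → Fin q) :
    1 ≤ passageLyapunov ν a L k σ := by
  rw [passageLyapunov]
  linarith [Real.neg_pi_div_two_lt_arctan (ν * (colorFrac σ k - a) + L)]

theorem passageLyapunov_le_five (ν a L : ℝ) (k : Fin q) (σ : Fin n → Fin q) :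
    passageLyapunov ν a L k σ ≤ 5 := by
  rw [passageLyapunov]
  linarith [Real.arctan_lt_pi_div_two (ν * (colorFrac σ k - a) + L), Real.pi_le_four]

theorem one_le_excessLyapunov {r : ℝ} (hr : 0 < r) {k : Fin q} {σ : Fin n → Fin q}
    (h : 1 / q + r ≤ colorFrac σ k) : 1 ≤ excessLyapunov r k σ := by
  rw [excessLyapunov, one_le_div (by positivity)]
  gcongr
  exact le_max_of_le_left (by linarith)

theorem lt_colorFrac_of_one_lt_excessLyapunov {r : ℝ} (hr : 0 < r) {k : Fin q}
    {σ : Fin n → Fin q} (h : 1 < excessLyapunov r k σ) : 1 / q + r < colorFrac σ k := by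
  rw [excessLyapunov, one_lt_div (by positivity)] at h
  have hmax := lt_of_pow_lt_pow_left₀ 2 (le_max_right _ _) h
  linarith [(lt_max_iff.1 hmax).resolve_right hr.not_gt]

theorem colorFrac_le_of_excessLyapunov_le_five {r : ℝ} (hr : 0 < r) {k : Fin q}
    {σ : Fin n → Fin q} (h : excessLyapunov r k σ ≤ 5) : colorFrac σ k ≤ 1 / q + 3 * r := by
  rw [excessLyapunov, div_le_iff₀ (by positivity)] at h
  have hmax : max (colorFrac σ k - 1 / q) 0 ≤ 3 * r :=
    le_of_sq_le_sq (by nlinarith) (by positivity)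
  linarith [le_max_left (colorFrac σ k - 1 / (q : ℝ)) 0]

theorem glauberKernel_mulVec_excessLyapunov_le (hn : 0 < n) (r : ℝ) {σ : Fin n → Fin q}
    {k : Fin q} {c : ℝ} (hmean : 1 / (q : ℝ) ≤ colorFrac σ k →
      meanIncr β σ k ≤ -c * (colorFrac σ k - 1 / q) + 4 * q / n) :
    (glauberKernel q n β *ᵥ excessLyapunov r k) σ
      ≤ (1 - 2 * c / n) * excessLyapunov r k σ + (8 * q + 1) / r ^ 2 / n ^ 2 := by
  have hsmul : (excessLyapunov r k : (Fin n → Fin q) → ℝ)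
      = (r ^ 2)⁻¹ • fun τ => max (colorFrac τ k - 1 / q) 0 ^ 2 := by
    ext τ
    rw [excessLyapunov, Pi.smul_apply, smul_eq_mul, div_eq_inv_mul]
  rw [hsmul, Matrix.mulVec_smul, Pi.smul_apply, Pi.smul_apply, smul_eq_mul, smul_eq_mul]
  calc _ ≤ (r ^ 2)⁻¹ * _ := mul_le_mul_of_nonneg_left
        (glauberKernel_mulVec_sq_max_le_of_meanIncr_le hn hmean) (by positivity)
    _ = _ := by ring

theorem glauberKernel_mulVec_passageLyapunov_le (hq : 2 ≤ q) (hn : 0 < n) (hβ : 0 ≤ β)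
    (hβq : 2 * β ≤ q) {σ : Fin n → Fin q} {k : Fin q} {ν a L c₁ c₂ : ℝ} (hν : 1 ≤ ν)
    (hνn : ν ^ 3 = n) (hν₂ : 2 * (4 * q + 7) ≤ c₂ * ν)
    (hmean : meanIncr β σ k ≤ -c₁ * (colorFrac σ k - a) ^ 2 + 4 * q / n)
    (hgain : ∀ u, ∀ v ∈ Set.Icc (Real.exp (-(2 * q)) / q) 1,
      c₂ ≤ c₁ * (u - L) ^ 2 / (1 + u ^ 2) + u * v / (1 + u ^ 2) ^ 2) :
    (glauberKernel q n β *ᵥ passageLyapunov ν a L k) σ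
      ≤ (1 - c₂ / 10 / ν ^ 4) * passageLyapunov ν a L k σ := by
  have hν0 : 0 < ν := by linarith
  have hc₂ : 0 ≤ c₂ := nonneg_of_mul_nonneg_left (le_trans (by positivity) hν₂) hν0
  have herr : (4 * q + 7) / ν ^ 5 ≤ c₂ / 2 / ν ^ 4 := by
    rw [div_le_div_iff₀ (by positivity) (by positivity)]
    nlinarith [pow_pos hν0 4]
  have hfive : c₂ / 10 / ν ^ 4 * passageLyapunov ν a L k σ ≤ c₂ / 10 / ν ^ 4 * 5 := by
    gcongr
    exact passageLyapunov_le_five ν a L k σ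
  have hconst : (glauberKernel q n β *ᵥ passageLyapunov ν a L k) σ
      = (glauberKernel q n β *ᵥ fun τ => Real.arctan (ν * (colorFrac τ k - a) + L)) σ
        + (1 + Real.pi / 2) := dotProduct_add_const_of_mem_stdSimplex
    (row_mem_stdSimplex_of_mem_rowStochastic (glauberKernel_mem_rowStochastic hn β) σ) _ _
  have hstep := glauberKernel_mulVec_arctan_le hq hn hβ hβq hν hνn hmean hgain
  rw [sub_mul, one_mul, hconst]
  nth_rw 1 [passageLyapunov]
  have hsplit : c₂ / ν ^ 4 = c₂ / 2 / ν ^ 4 + c₂ / 10 / ν ^ 4 * 5 := by ring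
  linarith

theorem excessLyapunov_inf_passageLyapunov_drift (hq : 3 ≤ q) {n : ℕ} (hn : 2 * q ≤ n)
    (hβ : β ∈ Set.Icc 0 (betaS q)) {ν a L c r c₂ θ : ℝ} (hν : 1 ≤ ν)
    (hνn : ν ^ 3 = n) (hν₂ : 2 * (4 * q + 7) ≤ c₂ * ν) (hc : 0 ≤ c) (hr : 0 < r)
    (hra : 6 * r ≤ a - 1 / q)
    (hD : ∀ x ∈ Set.Icc (1 / (q : ℝ)) 1, Dfun q (betaS q) x ≤ -c * (x - a) ^ 2 * (x - 1 / q))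
    (hgain : ∀ u, ∀ v ∈ Set.Icc (Real.exp (-(2 * q)) / q) 1,
      c₂ ≤ c * r * (u - L) ^ 2 / (1 + u ^ 2) + u * v / (1 + u ^ 2) ^ 2)
    (hθ : θ ≤ c₂ / 10) (hθ' : θ ≤ 2 * (c * (3 * r) ^ 2)) (k : Fin q) (σ : Fin n → Fin q) :
    (glauberKernel q n β *ᵥ (excessLyapunov r k ⊓ passageLyapunov ν a L k)) σ
      ≤ (1 - θ / ν ^ 4) * (excessLyapunov r k ⊓ passageLyapunov ν a L k) σ
        + (8 * q + 1) / r ^ 2 / ν ^ 6 := by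
  have hn0 : 0 < n := by omega
  have hdrift (hx : 1 / (q : ℝ) ≤ colorFrac σ k) : meanIncr β σ k
      ≤ -c * (colorFrac σ k - a) ^ 2 * (colorFrac σ k - 1 / q) + 4 * q / n :=
    (meanIncr_le_Dfun_betaS_add hq hn0 hn hβ.1 hβ.2 hx).trans
      (add_le_add_left (hD _ ⟨hx, colorFrac_le_one σ k⟩) _)
  refine mulVec_inf_le_of_drift (glauberKernel_mem_rowStochastic hn0 β) (fun h => ?_) fun h => ?_
  · have hx := colorFrac_le_of_excessLyapunov_le_five hr (h.trans (passageLyapunov_le_five ..))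
    refine (glauberKernel_mulVec_excessLyapunov_le hn0 r (c := c * (3 * r) ^ 2) fun hx0 =>
      (hdrift hx0).trans ?_).trans ?_
    · gcongr
      rw [neg_mul, neg_le_neg_iff]
      gcongr c * ?_
      nlinarith
    · rw [← hνn, ← pow_mul]
      gcongr
      · exact excessLyapunov_nonneg r k σ
      · norm_num
  · have hx := lt_colorFrac_of_one_lt_excessLyapunov hr ((one_le_passageLyapunov ..).trans_lt h)
    refine (glauberKernel_mulVec_passageLyapunov_le (c₁ := c * r) (by omega) hn0 hβ.1
      (by linarith [two_mul_betaS_lt hq, hβ.2]) hν hνn hν₂ ((hdrift (by linarith)).trans ?_)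
      hgain).trans ?_
    · refine add_le_add_left ?_ _
      nlinarith [mul_nonneg hc (sq_nonneg (colorFrac σ k - a))]
    · refine le_add_of_le_of_nonneg ?_ (by positivity)
      gcongr
      linarith [one_le_passageLyapunov ν a L k σ]

theorem exists_lyapunov (hq : 3 ≤ q) {ρ : ℝ} (hρ : 0 < ρ) :
    ∃ θ > 0, ∃ C > 0, ∀ᶠ n : ℕ in atTop, ∀ β ∈ Set.Icc 0 (betaS q), ∀ k : Fin q,
      ∃ Ψ : (Fin n → Fin q) → ℝ, (∀ σ, Ψ σ ∈ Set.Icc 0 5) ∧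
        (∀ σ, (glauberKernel q n β *ᵥ Ψ) σ
          ≤ (1 - θ / cubeRoot n ^ 4) * Ψ σ + C / cubeRoot n ^ 6) ∧
        ∀ σ, 1 / (q : ℝ) + ρ ≤ colorFrac σ k → 1 ≤ Ψ σ := by
  obtain ⟨a, ha, h0⟩ := exists_Dfun_betaS_eq_zero hq
  obtain ⟨c, hc, hD⟩ := exists_forall_Dfun_betaS_le hq ha h0
  set r := min ρ ((a - 1 / q) / 6)
  have hr : 0 < r := lt_min hρ (by linarith [ha.1])
  have hra : r ≤ (a - 1 / q) / 6 := min_le_right _ _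
  obtain ⟨L, c₂, hc₂, hgain⟩ := exists_forall_le_sq_div_add_mul_div (mul_pos hc hr)
    (by positivity : 0 < Real.exp (-(2 * q)) / q)
  refine ⟨min (c₂ / 10) (2 * (c * (3 * r) ^ 2)), by positivity, (8 * q + 1) / r ^ 2,
    by positivity, ?_⟩
  filter_upwards [eventually_ge_atTop (2 * q), tendsto_cubeRoot_atTop.eventually_ge_atTop 1,
    (tendsto_cubeRoot_atTop.const_mul_atTop hc₂).eventually_ge_atTop (2 * (4 * q + 7))]
    with n hn hν hν₂ β hβ k
  refine ⟨excessLyapunov r k ⊓ passageLyapunov (cubeRoot n) a L k, fun σ => ⟨?_, ?_⟩, fun σ => ?_,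
    fun σ hσ => ?_⟩
  · exact le_inf (excessLyapunov_nonneg r k σ) (zero_le_one.trans (one_le_passageLyapunov ..))
  · exact inf_le_right.trans (passageLyapunov_le_five ..)
  · exact excessLyapunov_inf_passageLyapunov_drift hq hn hβ hν (cubeRoot_pow_three n) hν₂ hc.le hr
      (by linarith) hD hgain (min_le_left _ _) (min_le_right _ _) k σ
  · refine le_inf (one_le_excessLyapunov hr (le_trans ?_ hσ)) (one_le_passageLyapunov ..)
    gcongr
    exact min_le_left _ _

end DominantColor

section HammingCoupling

open scoped Matrix

variable {q n : ℕ} {β : ℝ}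

section HammingDistance

variable {ι α : Type*} [Fintype ι] [DecidableEq α]

theorem sum_ite_eq_hammingDist (x y : ι → α) :
    ∑ i, (if x i = y i then 0 else 1 : ℝ) = hammingDist x y := by
  simp_rw [hammingDist, card_filter, Nat.cast_sum, Nat.cast_ite, ite_not, Nat.cast_zero,
    Nat.cast_one]

theorem hammingDist_update [DecidableEq ι] (x y : ι → α) (i : ι) (a b : α) :
    (hammingDist (Function.update x i a) (Function.update y i b) : ℝ)
      = hammingDist x y - (if x i = y i then 0 else 1) + (if a = b then 0 else 1) := by
  simp_rw [← sum_ite_eq_hammingDist, ← sum_erase_add univ _ (mem_univ i), Function.update_self]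
  rw [sum_congr rfl fun j hj => by
    rw [Function.update_of_ne (ne_of_mem_erase hj), Function.update_of_ne (ne_of_mem_erase hj)]]
  ring

end HammingDistance

theorem sum_abs_single_sub_single_le {ι : Type*} [Fintype ι] [DecidableEq ι] (i j : ι) :
    ∑ k, |(Pi.single j 1 : ι → ℝ) k - (Pi.single i 1 : ι → ℝ) k| ≤ 2 := by
  calc ∑ k, |(Pi.single j 1 : ι → ℝ) k - (Pi.single i 1 : ι → ℝ) k|
      ≤ ∑ k, ((Pi.single j 1 : ι → ℝ) k + (Pi.single i 1 : ι → ℝ) k) := by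
        gcongr with k
        rw [abs_le]
        constructor <;>
          linarith [(single_one_apply_mem_Icc i k).1, (single_one_apply_mem_Icc j k).1]
    _ = 2 := by
        simp only [sum_add_distrib, Pi.single_apply, sum_ite_eq', mem_univ, if_true]
        norm_num

theorem sum_abs_colorCount_sub_le (s : Finset (Fin n)) (σ τ : Fin n → Fin q) :
    ∑ k, |colorCount s τ k - colorCount s σ k| ≤ 2 * hammingDist σ τ := by
  have hvertex : ∀ v, ∑ k, |(Pi.single (τ v) 1 : Fin q → ℝ) k - (Pi.single (σ v) 1 : Fin q → ℝ) k|
      ≤ 2 * (if σ v = τ v then 0 else 1) := fun v => by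
    split_ifs with h
    · simp [h]
    · simpa using sum_abs_single_sub_single_le (σ v) (τ v)
  calc ∑ k, |colorCount s τ k - colorCount s σ k|
      ≤ ∑ k, ∑ v, |(Pi.single (τ v) 1 : Fin q → ℝ) k - (Pi.single (σ v) 1 : Fin q → ℝ) k| := by
        gcongr with k
        rw [colorCount_apply, colorCount_apply, ← sum_sub_distrib]
        exact (abs_sum_le_sum_abs _ _).trans
          (sum_le_sum_of_subset_of_nonneg (subset_univ s) fun _ _ _ => abs_nonneg _)
    _ ≤ ∑ v, 2 * (if σ v = τ v then 0 else 1) := by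
        rw [sum_comm]
        exact sum_le_sum fun v _ => hvertex v
    _ = 2 * hammingDist σ τ := by rw [← mul_sum, sum_ite_eq_hammingDist]

theorem inv_sub_le_colorFrac (hn : 0 < n) {ρ : ℝ} (hρ : 0 ≤ ρ) {σ : Fin n → Fin q}
    (h : ∀ k, colorFrac σ k ≤ 1 / q + ρ) (k : Fin q) : 1 / q - q * ρ ≤ colorFrac σ k := by
  have hq : 0 < q := k.pos
  have hothers : ∑ j ∈ univ.erase k, colorFrac σ j ≤ ((q : ℝ) - 1) * (1 / q + ρ) := by
    refine (sum_le_card_nsmul _ _ _ fun j _ => h j).trans_eq ?_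
    rw [card_erase_of_mem (mem_univ k), card_univ, Fintype.card_fin, nsmul_eq_mul,
      Nat.cast_pred hq]
  have hsum := sum_erase_add univ (colorFrac σ) (mem_univ k)
  rw [sum_colorFrac hn] at hsum
  have hexpand : ((q : ℝ) - 1) * (1 / q + ρ) = 1 - 1 / q + (q - 1) * ρ := by
    field_simp
  linarith

theorem abs_mul_colorCount_erase_sub_le (hn : 0 < n) {ρ : ℝ} (hnρ : 1 / n ≤ ρ) (hβ : 0 ≤ β)
    (hβq : 2 * β ≤ q) {σ : Fin n → Fin q} (h : ∀ k, colorFrac σ k ≤ 1 / q + ρ) (u : Fin n)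
    (k : Fin q) :
    |2 * β / n * colorCount (univ.erase u) σ k - 2 * β / q| ≤ 2 * q ^ 2 * ρ := by
  have hq : (1 : ℝ) ≤ q := by exact_mod_cast k.pos
  have hρ : 0 ≤ ρ := le_trans (by positivity) hnρ
  have herase : colorCount (univ.erase u) σ k
      = n * colorFrac σ k - (Pi.single (σ u) 1 : Fin q → ℝ) k := by
    rw [colorFrac, mul_div_cancel₀ _ (by positivity), ← colorCount_erase_add σ u, Pi.add_apply,
      add_sub_cancel_right]
  have hdev : |colorFrac σ k - 1 / q - (Pi.single (σ u) 1 : Fin q → ℝ) k * (1 / n)|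
      ≤ 2 * q * ρ := by
    obtain ⟨hs0, hs1⟩ := single_one_apply_mem_Icc (σ u) k
    have hlow := inv_sub_le_colorFrac hn hρ h k
    have hself0 : 0 ≤ (Pi.single (σ u) 1 : Fin q → ℝ) k * (1 / n) := by positivity
    have hself : (Pi.single (σ u) 1 : Fin q → ℝ) k * (1 / n) ≤ 1 * ρ := by gcongr
    rw [abs_le]
    constructor <;> nlinarith [h k]
  calc |2 * β / n * colorCount (univ.erase u) σ k - 2 * β / q|
      = 2 * β * |colorFrac σ k - 1 / q - (Pi.single (σ u) 1 : Fin q → ℝ) k * (1 / n)| := by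
        rw [herase, ← abs_of_nonneg (by positivity : 0 ≤ 2 * β), ← abs_mul,
          abs_of_nonneg (by positivity : 0 ≤ 2 * β)]
        congr 1
        field_simp
        ring
    _ ≤ q * (2 * q * ρ) := by gcongr
    _ = 2 * q ^ 2 * ρ := by ring

theorem excessMass_resampleProb_le (hn : 0 < n) {ρ : ℝ} (hnρ : 1 / n ≤ ρ) (hβ : 0 ≤ β)
    (hβq : 2 * β ≤ q) (hρ : 4 * q ^ 2 * ρ ≤ 1) {σ τ : Fin n → Fin q}
    (hσ : ∀ k, colorFrac σ k ≤ 1 / q + ρ) (hτ : ∀ k, colorFrac τ k ≤ 1 / q + ρ) (u : Fin n) :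
    excessMass (resampleProb β σ u) (resampleProb β τ u)
      ≤ (2 * β / q + 32 * q ^ 3 * ρ) * hammingDist σ τ / n := by
  have hq : 0 < q := (σ u).pos
  have hρ0 : 0 ≤ ρ := le_trans (by positivity) hnρ
  refine (excessMass_softmax_le (by linarith)
    (abs_mul_colorCount_erase_sub_le hn hnρ hβ hβq hσ u)
    (abs_mul_colorCount_erase_sub_le hn hnρ hβ hβq hτ u) ?_).trans ?_
  · simp_rw [← mul_sub, ← mul_sum, sum_sub_distrib, sum_colorCount, sub_self, mul_zero]
  simp_rw [← mul_sub, abs_mul, ← mul_sum, abs_of_nonneg (by positivity : 0 ≤ 2 * β / n)]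
  rw [Fintype.card_fin]
  calc (1 / (2 * (q : ℝ)) + 8 * (2 * q ^ 2 * ρ)) * (2 * β / n *
        ∑ j, |colorCount (univ.erase u) τ j - colorCount (univ.erase u) σ j|)
      ≤ (1 / (2 * (q : ℝ)) + 8 * (2 * q ^ 2 * ρ)) * (2 * β / n * (2 * hammingDist σ τ)) := by
        gcongr
        exact sum_abs_colorCount_sub_le _ σ τ
    _ = (2 * β / q + 32 * q ^ 2 * (2 * β) * ρ) * hammingDist σ τ / n := by
        field_simp
        ring
    _ ≤ (2 * β / q + 32 * q ^ 2 * q * ρ) * hammingDist σ τ / n := by gcongr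
    _ = (2 * β / q + 32 * q ^ 3 * ρ) * hammingDist σ τ / n := by ring

theorem resampleProb_dotProduct_sub_le {σ τ : Fin n → Fin q} {r K : ℝ} (hr : 0 ≤ r)
    {f g : (Fin n → Fin q) → ℝ} (h : ∀ σ τ, f σ - g τ ≤ r * hammingDist σ τ + K) (u : Fin n) :
    (resampleProb β σ u ⬝ᵥ fun k => f (Function.update σ u k))
        - (resampleProb β τ u ⬝ᵥ fun k => g (Function.update τ u k))
      ≤ r * hammingDist σ τ + K - r * (if σ u = τ u then 0 else 1)
        + r * excessMass (resampleProb β σ u) (resampleProb β τ u) := by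
  refine dotProduct_sub_dotProduct_le_excessMass (resampleProb_mem_stdSimplex β σ u)
    (resampleProb_mem_stdSimplex β τ u) (fun k => ?_) fun k l => ?_
  · refine (h _ _).trans_eq ?_
    rw [hammingDist_update, if_pos rfl]
    ring
  · refine (h _ _).trans ?_
    have : r * (if k = l then 0 else 1) ≤ r * 1 := by gcongr; split_ifs <;> simp
    rw [hammingDist_update]
    linarith

theorem glauberKernel_mulVec_sub_le_of_excessMass_le (hn : 0 < n) {σ τ : Fin n → Fin q}
    {c r K : ℝ} (hr : 0 ≤ r)
    (hexcess : ∀ u, excessMass (resampleProb β σ u) (resampleProb β τ u)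
      ≤ (1 - c) * hammingDist σ τ / n)
    {f g : (Fin n → Fin q) → ℝ} (h : ∀ σ τ, f σ - g τ ≤ r * hammingDist σ τ + K) :
    (glauberKernel q n β *ᵥ f) σ - (glauberKernel q n β *ᵥ g) τ
      ≤ r * (1 - c / n) * hammingDist σ τ + K := by
  have hvertex : ∀ u, (resampleProb β σ u ⬝ᵥ fun k => f (Function.update σ u k))
      - (resampleProb β τ u ⬝ᵥ fun k => g (Function.update τ u k))
      ≤ r * hammingDist σ τ + K - r * (if σ u = τ u then 0 else 1)
        + r * ((1 - c) * hammingDist σ τ / n) := fun u =>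
    (resampleProb_dotProduct_sub_le hr h u).trans (by gcongr; exact hexcess u)
  rw [glauberKernel_mulVec_apply, glauberKernel_mulVec_apply, stepProb_dotProduct,
    stepProb_dotProduct, ← sub_div, ← sum_sub_distrib, div_le_iff₀ (by positivity)]
  refine (sum_le_sum fun u _ => hvertex u).trans_eq ?_
  rw [sum_add_distrib, sum_sub_distrib, ← mul_sum, sum_ite_eq_hammingDist]
  simp only [sum_const, card_univ, Fintype.card_fin, nsmul_eq_mul]
  field_simp
  ring

-- Where `B` is at least `1` the bound is trivial; elsewhere the coupled chains contract in one
-- step, and carrying `B` along pays for the probability of leaving that region.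
theorem glauberKernel_pow_mulVec_sub_le (hn : 0 < n) {c δ : ℝ} (hcn : c ≤ n)
    (hδ : 0 ≤ δ) {B : (Fin n → Fin q) → ℝ} (hB0 : ∀ σ, 0 ≤ B σ)
    (hB : ∀ σ, (glauberKernel q n β *ᵥ B) σ ≤ B σ + δ)
    (hcontr : ∀ σ τ, B σ < 1 → B τ < 1 → ∀ u,
      excessMass (resampleProb β σ u) (resampleProb β τ u) ≤ (1 - c) * hammingDist σ τ / n)
    {g : (Fin n → Fin q) → ℝ} (hg0 : 0 ≤ g) (hg1 : g ≤ 1) (t : ℕ) (σ τ : Fin n → Fin q) :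
    (glauberKernel q n β ^ t *ᵥ g) σ - (glauberKernel q n β ^ t *ᵥ g) τ
      ≤ (1 - c / n) ^ t * hammingDist σ τ + B σ + B τ + t * (2 * δ) := by
  set P := glauberKernel q n β
  have hP : ∀ t, P ^ t ∈ Matrix.rowStochastic ℝ (Fin n → Fin q) := fun t =>
    pow_mem (glauberKernel_mem_rowStochastic hn β) t
  have hc : 0 ≤ 1 - c / n := sub_nonneg.2 (div_le_one_of_le₀ hcn n.cast_nonneg)
  have htrivial : ∀ t : ℕ, ∀ σ τ, 1 ≤ (1 - c / n) ^ t * hammingDist σ τ + B σ + B τ →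
      (P ^ t *ᵥ g) σ - (P ^ t *ᵥ g) τ
        ≤ (1 - c / n) ^ t * hammingDist σ τ + B σ + B τ + t * (2 * δ) := fun t σ τ h =>
    (mulVec_sub_mulVec_le_one_of_mem_rowStochastic (hP t) hg0 hg1 σ τ).trans
      (h.trans (le_add_of_nonneg_right (by positivity)))
  have hdist : ∀ t : ℕ, ∀ σ τ : Fin n → Fin q, 0 ≤ (1 - c / n) ^ t * hammingDist σ τ :=
    fun t σ τ => by positivity
  induction t generalizing σ τ with
  | zero =>
    rcases eq_or_ne σ τ with rfl | hne
    · simpa using hB0 σ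
    · have : (1 : ℝ) ≤ hammingDist σ τ := by exact_mod_cast hammingDist_pos.2 hne
      exact htrivial 0 σ τ (by linarith [hB0 σ, hB0 τ, pow_zero (1 - c / n)])
  | succ t ih =>
    rcases le_or_gt 1 (B σ) with hσ | hσ
    · exact htrivial (t + 1) σ τ (by linarith [hB0 τ, hdist (t + 1) σ τ])
    rcases le_or_gt 1 (B τ) with hτ | hτ
    · exact htrivial (t + 1) σ τ (by linarith [hB0 σ, hdist (t + 1) σ τ])
    have hstep := glauberKernel_mulVec_sub_le_of_excessMass_le hn (r := (1 - c / n) ^ t)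
      (K := t * (2 * δ)) (by positivity) (hcontr σ τ hσ hτ) (f := P ^ t *ᵥ g - B)
      (g := P ^ t *ᵥ g + B) fun σ τ => by
        simp only [Pi.sub_apply, Pi.add_apply]
        linarith [ih σ τ]
    rw [Matrix.mulVec_sub, Matrix.mulVec_add, Matrix.mulVec_mulVec, ← pow_succ', ← pow_succ,
      Pi.sub_apply, Pi.add_apply] at hstep
    push_cast
    linarith [hB σ, hB τ]

end HammingCoupling

section UpperBound

open scoped Matrix Topology

variable {q n : ℕ} {β : ℝ}

theorem one_sub_pow_le_exp_neg_mul {x : ℝ} (hx : x ≤ 1) (t : ℕ) :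
    (1 - x) ^ t ≤ Real.exp (-(x * t)) := by
  calc (1 - x) ^ t ≤ Real.exp (-x) ^ t := by
        have : 0 ≤ 1 - x := sub_nonneg.2 hx
        gcongr
        exact Real.one_sub_le_exp_neg x
    _ = Real.exp (-(x * t)) := by
        rw [← Real.exp_nat_mul]
        ring_nf

theorem exists_excessMass_resampleProb_le (hq : 3 ≤ q) :
    ∃ ρ > 0, ∃ c ∈ Set.Ioc (0 : ℝ) 1, ∀ᶠ n : ℕ in atTop, ∀ β ∈ Set.Icc 0 (betaS q),
      ∀ σ τ : Fin n → Fin q, (∀ k, colorFrac σ k ≤ 1 / q + ρ) → (∀ k, colorFrac τ k ≤ 1 / q + ρ) →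
        ∀ u, excessMass (resampleProb β σ u) (resampleProb β τ u)
          ≤ (1 - c) * hammingDist σ τ / n := by
  have hQ : (3 : ℝ) ≤ q := by exact_mod_cast hq
  have hγ0 : 0 ≤ 2 * betaS q / q := by have := betaS_nonneg hq; positivity
  have hγ1 : 2 * betaS q / q < 1 := (div_lt_one (by linarith)).2 (two_mul_betaS_lt hq)
  set γ := 2 * betaS q / q with hγ
  set ρ := (1 - γ) / (64 * q ^ 3) with hρ
  have hρ0 : 0 < ρ := div_pos (by linarith) (by positivity)
  have hρq : 64 * q ^ 3 * ρ = 1 - γ := by rw [hρ]; field_simp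
  refine ⟨ρ, hρ0, (1 - γ) / 2, ⟨by linarith, by linarith⟩, ?_⟩
  filter_upwards [eventually_gt_atTop 0,
    tendsto_one_div_atTop_nhds_zero_nat.eventually_le_const hρ0] with n hn hnρ β hβ σ τ hσ hτ u
  have hβγ : 2 * β / q ≤ γ := by rw [hγ]; gcongr; exact hβ.2
  have hρ1 : 4 * q ^ 2 * ρ ≤ 1 := by
    have : (0 : ℝ) ≤ q ^ 2 * ρ := by positivity
    nlinarith
  refine (excessMass_resampleProb_le hn hnρ hβ.1 (by linarith [hβ.2, two_mul_betaS_lt hq]) hρ1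
    hσ hτ u).trans ?_
  gcongr
  linarith

theorem exists_lyapunov_sum (hq : 3 ≤ q) {ρ : ℝ} (hρ : 0 < ρ) :
    ∃ θ > 0, ∃ C > 0, ∀ᶠ n : ℕ in atTop, ∀ β ∈ Set.Icc 0 (betaS q),
      ∃ B : (Fin n → Fin q) → ℝ, (∀ σ, B σ ∈ Set.Icc 0 (5 * (q : ℝ))) ∧
        (∀ σ, (glauberKernel q n β *ᵥ B) σ
          ≤ (1 - θ / cubeRoot n ^ 4) * B σ + C / cubeRoot n ^ 6) ∧
        ∀ σ, B σ < 1 → ∀ k, colorFrac σ k ≤ 1 / q + ρ := by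
  obtain ⟨θ, hθ, C, hC, hev⟩ := exists_lyapunov hq hρ
  refine ⟨θ, hθ, q * C, by positivity, hev.mono fun n hn β hβ => ?_⟩
  choose Ψ hmem hdrift hone using hn β hβ
  have hnonneg : ∀ σ, ∀ k ∈ univ, 0 ≤ Ψ k σ := fun σ k _ => (hmem k σ).1
  refine ⟨∑ k, Ψ k, fun σ => ?_, fun σ => ?_, fun σ hσ k => ?_⟩
  · rw [Finset.sum_apply]
    refine ⟨sum_nonneg (hnonneg σ), (sum_le_card_nsmul _ _ 5 fun k _ => (hmem k σ).2).trans_eq ?_⟩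
    rw [card_univ, Fintype.card_fin, nsmul_eq_mul, mul_comm]
  · rw [Matrix.mulVec_sum, Finset.sum_apply, Finset.sum_apply, mul_sum]
    refine (sum_le_sum fun k _ => hdrift k σ).trans_eq ?_
    rw [sum_add_distrib, sum_const, card_univ, Fintype.card_fin, nsmul_eq_mul, mul_div_assoc]
  · by_contra! hk
    rw [Finset.sum_apply] at hσ
    exact hσ.not_ge ((hone k σ hk.le).trans (single_le_sum (hnonneg σ) (mem_univ k)))

theorem glauberDist_add_le_of_lyapunov (hq : 0 < q) (hn : 0 < n) {c θ δ M : ℝ} (hcn : c ≤ n)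
    (hθ0 : 0 < θ) (hθ1 : θ ≤ 1) (hδ : 0 ≤ δ) {B : (Fin n → Fin q) → ℝ}
    (hBM : ∀ σ, B σ ∈ Set.Icc 0 M)
    (hB : ∀ σ, (glauberKernel q n β *ᵥ B) σ ≤ (1 - θ) * B σ + δ)
    (hcontr : ∀ σ τ, B σ < 1 → B τ < 1 → ∀ u,
      excessMass (resampleProb β σ u) (resampleProb β τ u) ≤ (1 - c) * hammingDist σ τ / n)
    (s t : ℕ) :
    glauberDist q n β (s + t)
      ≤ n * (1 - c / n) ^ t + t * (2 * δ) + 2 * ((1 - θ) ^ s * M + δ / θ) := by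
  refine glauberDist_le hq hn fun g hg0 hg1 σ τ => ?_
  set P := glauberKernel q n β
  have hP := glauberKernel_mem_rowStochastic (q := q) hn β
  have hrow := row_mem_stdSimplex_of_mem_rowStochastic (pow_mem hP s)
  have hc : 0 ≤ 1 - c / n := sub_nonneg.2 (div_le_one_of_le₀ hcn n.cast_nonneg)
  have hcoupled : ∀ x y, (P ^ t *ᵥ g) x - (P ^ t *ᵥ g) y
      ≤ n * (1 - c / n) ^ t + t * (2 * δ) + B x + B y := fun x y => by
    have hdist : (hammingDist x y : ℝ) ≤ n := by
      exact_mod_cast hammingDist_le_card_fintype.trans_eq (Fintype.card_fin n)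
    have hpow : (1 - c / n) ^ t * hammingDist x y ≤ (1 - c / n) ^ t * n := by gcongr
    have hdrop : ∀ σ, (P *ᵥ B) σ ≤ B σ + δ := fun σ => by
      linarith [hB σ, mul_nonneg hθ0.le (hBM σ).1]
    linarith [glauberKernel_pow_mulVec_sub_le hn hcn hδ (fun σ => (hBM σ).1) hdrop hcontr hg0 hg1
      t x y]
  have hdecay : ∀ x, (P ^ s *ᵥ B) x ≤ (1 - θ) ^ s * M + δ / θ := fun x =>
    (pow_mulVec_le_of_drift hP hθ0 hθ1 hδ hB s x).trans <| by
      have : 0 ≤ 1 - θ := by linarith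
      gcongr
      exact (hBM x).2
  rw [pow_add, ← Matrix.mulVec_mulVec]
  have hsplit : (P ^ s *ᵥ P ^ t *ᵥ g) σ - (P ^ s *ᵥ P ^ t *ᵥ g) τ
      ≤ n * (1 - c / n) ^ t + t * (2 * δ) + (P ^ s *ᵥ B) σ + (P ^ s *ᵥ B) τ :=
    dotProduct_sub_dotProduct_le (hrow σ) (hrow τ) hcoupled
  linarith [hdecay σ, hdecay τ]

theorem mul_one_sub_div_pow_le {ν c : ℝ} (hν : 0 < ν) (hνn : ν ^ 3 = n) (hc : 0 < c)
    (hcn : c ≤ n) {t : ℕ} (ht : ν ^ 4 / c ≤ t) : n * (1 - c / n) ^ t ≤ ν ^ 3 * Real.exp (-ν) := by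
  rw [← hνn] at hcn ⊢
  gcongr
  refine (one_sub_pow_le_exp_neg_mul (div_le_one_of_le₀ hcn (by positivity)) t).trans ?_
  gcongr
  calc ν = c / ν ^ 3 * (ν ^ 4 / c) := by field_simp
    _ ≤ c / ν ^ 3 * t := by gcongr

theorem one_sub_div_pow_ceil_le {θ A w : ℝ} (hθ : 0 ≤ θ) (hw : 0 < w) (hθw : θ / w ≤ 1) :
    (1 - θ / w) ^ ⌈A * w⌉₊ ≤ Real.exp (-(θ * A)) := by
  refine (one_sub_pow_le_exp_neg_mul hθw _).trans (Real.exp_le_exp.2 (neg_le_neg ?_))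
  calc θ * A = θ / w * (A * w) := by field_simp
    _ ≤ θ / w * ⌈A * w⌉₊ := by gcongr; exact Nat.le_ceil _

theorem coupling_error_le {ν c θ C M : ℝ} (A : ℝ) (hν : 1 ≤ ν) (hνn : ν ^ 3 = n) (hc : 0 < c)
    (hcn : c ≤ n) (hθ : 0 < θ) (hθν : θ / ν ^ 4 ≤ 1) (hC : 0 ≤ C) (hM : 0 ≤ M) :
    n * (1 - c / n) ^ ⌈ν ^ 4 / c⌉₊ + ⌈ν ^ 4 / c⌉₊ * (2 * (C / ν ^ 6))
        + 2 * ((1 - θ / ν ^ 4) ^ ⌈A * ν ^ 4⌉₊ * M + C / ν ^ 6 / (θ / ν ^ 4))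
      ≤ ν ^ 3 * Real.exp (-ν) + (2 * (1 / c + 1) * C + 2 * (C / θ)) / ν ^ 2
        + 2 * M * Real.exp (-(θ * A)) := by
  have hν0 : 0 < ν := by linarith
  have hcontr := mul_one_sub_div_pow_le hν0 hνn hc hcn (Nat.le_ceil (ν ^ 4 / c))
  have hescape : (⌈ν ^ 4 / c⌉₊ : ℝ) * (2 * (C / ν ^ 6)) ≤ 2 * (1 / c + 1) * C / ν ^ 2 := by
    calc (⌈ν ^ 4 / c⌉₊ : ℝ) * (2 * (C / ν ^ 6))
        ≤ (ν ^ 4 / c + ν ^ 4) * (2 * (C / ν ^ 6)) := by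
          gcongr
          exact (Nat.ceil_lt_add_one (by positivity)).le.trans (by gcongr; exact one_le_pow₀ hν)
      _ = 2 * (1 / c + 1) * C / ν ^ 2 := by field_simp
  have hburnin : (1 - θ / ν ^ 4) ^ ⌈A * ν ^ 4⌉₊ * M ≤ Real.exp (-(θ * A)) * M := by
    gcongr
    exact one_sub_div_pow_ceil_le hθ.le (by positivity) hθν
  have hstat : C / ν ^ 6 / (θ / ν ^ 4) = C / θ / ν ^ 2 := by field_simp
  rw [hstat, add_div, mul_div_assoc 2 (C / θ)]
  linarith

theorem tendsto_pow_mul_exp_neg_add_div_sq_cubeRoot (K : ℝ) :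
    Tendsto (fun n => cubeRoot n ^ 3 * Real.exp (-cubeRoot n) + K / cubeRoot n ^ 2) atTop
      (𝓝 0) := by
  have hdiv : Tendsto (fun x : ℝ => K / x ^ 2) atTop (𝓝 0) :=
    tendsto_const_nhds.div_atTop (tendsto_pow_atTop two_ne_zero)
  simpa [Function.comp_def] using ((Real.tendsto_pow_mul_exp_neg_atTop_nhds_zero 3).add hdiv).comp
    tendsto_cubeRoot_atTop

theorem exists_forall_exists_glauberDist_le (hq : 3 ≤ q) {ε : ℝ} (hε : 0 < ε) :
    ∃ C > 0, ∀ᶠ n : ℕ in atTop, ∀ β ∈ Set.Icc 0 (betaS q),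
      ∃ t : ℕ, t ≤ C * cubeRoot n ^ 4 ∧ glauberDist q n β t ≤ ε := by
  obtain ⟨ρ, hρ, c, hc, hcontr⟩ := exists_excessMass_resampleProb_le hq
  obtain ⟨θ, hθ, C, hC, hlyap⟩ := exists_lyapunov_sum hq hρ
  obtain ⟨A, hA, hAε⟩ : ∃ A > 0, 10 * q * Real.exp (-(θ * A)) ≤ ε / 2 := by
    have hlim : Tendsto (fun A => 10 * q * Real.exp (-(θ * A))) atTop (𝓝 (10 * q * 0)) :=
      (Real.tendsto_exp_neg_atTop_nhds_zero.comp (tendsto_id.const_mul_atTop hθ)).const_mul _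
    rw [mul_zero] at hlim
    exact ((eventually_gt_atTop 0).and (hlim.eventually_le_const (half_pos hε))).exists
  have hc0 : 0 < c := hc.1
  refine ⟨A + 1 / c + 2, by positivity, ?_⟩
  filter_upwards [eventually_ge_atTop 1, hcontr, hlyap,
    tendsto_cubeRoot_atTop.eventually_ge_atTop 1,
    ((tendsto_pow_atTop four_ne_zero).comp tendsto_cubeRoot_atTop).eventually_ge_atTop θ,
    (tendsto_pow_mul_exp_neg_add_div_sq_cubeRoot
      (2 * (1 / c + 1) * C + 2 * (C / θ))).eventually_le_const (half_pos hε)]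
    with n hn1 hcontr hlyap hν hνθ herr β hβ
  have hνn := cubeRoot_pow_three n
  set ν := cubeRoot n
  have : 0 < ν := by linarith
  have hν4 : 1 ≤ ν ^ 4 := one_le_pow₀ hν
  have hcn : c ≤ n := hc.2.trans (by exact_mod_cast hn1)
  have hθν : θ / ν ^ 4 ≤ 1 := div_le_one_of_le₀ hνθ (by positivity)
  obtain ⟨B, hBM, hB, hbal⟩ := hlyap β hβ
  have hs := (Nat.ceil_lt_add_one (by positivity : 0 ≤ A * ν ^ 4)).le
  have ht := (Nat.ceil_lt_add_one (by positivity : 0 ≤ ν ^ 4 / c)).le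
  refine ⟨⌈A * ν ^ 4⌉₊ + ⌈ν ^ 4 / c⌉₊, ?_, ?_⟩
  · push_cast
    linarith [one_div_mul_eq_div c (ν ^ 4)]
  refine (glauberDist_add_le_of_lyapunov (by lia) hn1 hcn (by positivity) hθν (by positivity) hBM hB
    (fun σ τ hσ hτ => hcontr β hβ σ τ (hbal σ hσ) (hbal τ hτ)) _ _).trans ?_
  linarith [coupling_error_le A hν hνn hc0 hcn hθ hθν hC.le (by positivity : 0 ≤ 5 * (q : ℝ))]

end UpperBound

section SpreadContraction

open scoped Matrix

theorem mul_exp_mul_sub_one_le {b d s : ℝ} (hb : 0 ≤ b) (hs : s ≤ 1) (h : |b * d| ≤ s) :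
    d * (Real.exp (b * d) - 1) ≤ (1 + s) * b * d ^ 2 := by
  have hexp := Real.abs_exp_sub_one_sub_id_le (h.trans hs)
  calc d * (Real.exp (b * d) - 1)
      = b * d ^ 2 + d * (Real.exp (b * d) - 1 - b * d) := by ring
    _ ≤ b * d ^ 2 + |d| * |Real.exp (b * d) - 1 - b * d| := by
        rw [← abs_mul]
        gcongr
        exact le_abs_self _
    _ ≤ b * d ^ 2 + |d| * (|b * d| * s) := by
        have : (b * d) ^ 2 ≤ |b * d| * s := by
          rw [← sq_abs, sq]
          gcongr
        grw [hexp, this]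
    _ = (1 + s) * b * d ^ 2 := by
        rw [abs_mul, abs_of_nonneg hb, ← sq_abs d]
        ring

theorem exp_div_sum_exp_le_inv_card {ι : Type*} [Fintype ι] [DecidableEq ι] {a : ι → ℝ} {k : ι}
    {m : ℝ} (h : ∑ j ∈ univ.erase k, (a j - m) = 0) (hm : m ≤ a k) :
    Real.exp m / ∑ j, Real.exp (a j) ≤ (Fintype.card ι : ℝ)⁻¹ := by
  have : Nonempty ι := ⟨k⟩
  have hcard : (Fintype.card ι : ℝ) ≤ ∑ j, Real.exp (a j - m) := by
    rw [← card_univ, ← card_erase_add_one (mem_univ k), ← sum_erase_add _ _ (mem_univ k),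
      Nat.cast_add_one]
    gcongr
    · exact card_le_sum_exp_of_sum_eq_zero h
    · exact Real.one_le_exp (by linarith)
  simp_rw [Real.exp_sub, ← sum_div] at hcard
  rw [← inv_div]
  exact inv_anti₀ (mod_cast Fintype.card_pos) hcard

variable {q n : ℕ} {β γ : ℝ}

theorem otherMean_le_colorFrac (hq : 1 < q) {σ : Fin n → Fin q} {k : Fin q}
    (hx : 1 / (q : ℝ) ≤ colorFrac σ k) : otherMean σ k ≤ colorFrac σ k := by
  have hq' : (1 : ℝ) < q := mod_cast hq
  rw [div_le_iff₀ (by linarith)] at hx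
  rw [otherMean, div_le_iff₀ (by linarith)]
  linarith

theorem mul_gibbs_sub_le {d m g b : ℝ} (hb : 0 ≤ b) (hbγ : b ≤ q * γ) (hγ : γ < 1) (hq : 0 < q)
    (hg0 : 0 ≤ g) (hg : g ≤ (q : ℝ)⁻¹) (hd : |d| ≤ (1 - γ) / (2 * q)) :
    d * (g * Real.exp (b * d) - (d + m)) ≤ -((1 - γ) / 2) * d ^ 2 + d * (g - m) := by
  have hq' : (0 : ℝ) < q := mod_cast hq
  have hγ0 : 0 ≤ γ := (mul_nonneg_iff_of_pos_left hq').mp (hb.trans hbγ)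
  have hexponent : |b * d| ≤ (1 - γ) / 2 :=
    calc |b * d| = b * |d| := by rw [abs_mul, abs_of_nonneg hb]
      _ ≤ q * γ * ((1 - γ) / (2 * q)) := by gcongr
      _ = γ * ((1 - γ) / 2) := by field_simp
      _ ≤ (1 - γ) / 2 := mul_le_of_le_one_left (by linarith) hγ.le
  have hexp : d * (Real.exp (b * d) - 1) ≤ (1 + (1 - γ) / 2) * b * d ^ 2 :=
    mul_exp_mul_sub_one_le hb (by linarith) hexponent
  calc d * (g * Real.exp (b * d) - (d + m))
      = g * (d * (Real.exp (b * d) - 1)) - d ^ 2 + d * (g - m) := by ring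
    _ ≤ (q : ℝ)⁻¹ * ((1 + (1 - γ) / 2) * (q * γ) * d ^ 2) - d ^ 2 + d * (g - m) := by
        gcongr ?_ - _ + _
        have : 0 ≤ (1 + (1 - γ) / 2) * b * d ^ 2 := by
          have : 0 ≤ 1 - γ := by linarith
          positivity
        grw [hexp, hg, hbγ]
        linarith
    _ = -((1 - γ) / 2) * d ^ 2 - ((1 - γ) * d) ^ 2 / 2 + d * (g - m) := by
        field_simp
        ring
    _ ≤ -((1 - γ) / 2) * d ^ 2 + d * (g - m) := by
        linarith [sq_nonneg ((1 - γ) * d)]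

theorem sum_mul_meanFieldProb_sub_le (hq : 1 < q) (hn : 0 < n) (hβ : 0 ≤ β)
    (hβγ : 2 * β ≤ q * γ) (hγ : γ < 1) {σ : Fin n → Fin q} {k : Fin q}
    (hspread : colorSpread k σ ≤ ((1 - γ) / (2 * q)) ^ 2) (hx : 1 / (q : ℝ) ≤ colorFrac σ k) :
    ∑ j ∈ univ.erase k, (colorFrac σ j - otherMean σ k) * (meanFieldProb β σ j - colorFrac σ j)
      ≤ -((1 - γ) / 2) * colorSpread k σ := by
  set m := otherMean σ k with hm
  set g := Real.exp (2 * β * m) / ∑ j, Real.exp (2 * β * colorFrac σ j) with hg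
  have hg0 : 0 ≤ g := by positivity
  have hgq : g ≤ (q : ℝ)⁻¹ := by
    rw [← Fintype.card_fin q]
    refine exp_div_sum_exp_le_inv_card (sum_erase_two_mul_colorFrac_sub hq hn β σ k) ?_
    grw [hm, otherMean_le_colorFrac hq hx]
  have hprob (j : Fin q) : meanFieldProb β σ j = g * Real.exp (2 * β * (colorFrac σ j - m)) := by
    rw [hg, div_mul_eq_mul_div, ← Real.exp_add, mul_sub, add_sub_cancel]
    rfl
  calc ∑ j ∈ univ.erase k, (colorFrac σ j - m) * (meanFieldProb β σ j - colorFrac σ j)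
      = ∑ j ∈ univ.erase k, (colorFrac σ j - m) *
          (g * Real.exp (2 * β * (colorFrac σ j - m)) - (colorFrac σ j - m + m)) := by
        simp_rw [hprob, sub_add_cancel]
    _ ≤ ∑ j ∈ univ.erase k,
          (-((1 - γ) / 2) * (colorFrac σ j - m) ^ 2 + (colorFrac σ j - m) * (g - m)) :=
        sum_le_sum fun j hj => mul_gibbs_sub_le (by linarith) hβγ hγ (by omega) hg0 hgq
          (abs_colorFrac_sub_otherMean_le (div_nonneg (by linarith) (by positivity)) hspread
            (ne_of_mem_erase hj))
    _ = -((1 - γ) / 2) * colorSpread k σ := by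
        rw [sum_add_distrib, ← mul_sum, ← sum_mul, sum_erase_colorFrac_sub_otherMean hq hn,
          zero_mul, add_zero, colorSpread]

theorem glauberKernel_mulVec_colorSpread_le_of_le (hq : 1 < q) (hn0 : 0 < n) (hn : 2 * q ≤ n)
    (hβ : 0 ≤ β) (hβγ : 2 * β ≤ q * γ) (hγ : γ < 1) {σ : Fin n → Fin q} {k : Fin q}
    (hspread : colorSpread k σ ≤ ((1 - γ) / (2 * q)) ^ 2) (hx : 1 / (q : ℝ) ≤ colorFrac σ k) :
    (glauberKernel q n β *ᵥ colorSpread k) σ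
      ≤ colorSpread k σ - (1 - γ) / n * colorSpread k σ + 12 * q ^ 2 / n ^ 2 := by
  have hβq : 2 * β ≤ q := hβγ.trans (mul_le_of_le_one_right q.cast_nonneg hγ.le)
  calc (glauberKernel q n β *ᵥ colorSpread k) σ
      ≤ colorSpread k σ + 2 / n * (-((1 - γ) / 2) * colorSpread k σ) + 12 * q ^ 2 / n ^ 2 := by
        grw [glauberKernel_mulVec_colorSpread_le hq hn0 hn hβ hβq,
          sum_mul_meanFieldProb_sub_le hq hn0 hβ hβγ hγ hspread hx]
    _ = _ := by ring

end SpreadContraction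

section BottleneckFunction

open scoped Matrix

theorem arctan_add_pi_div_four_pos_iff {u : ℝ} : 0 < Real.arctan u + Real.pi / 4 ↔ -1 < u := by
  rw [← Real.arctan_strictMono.lt_iff_lt (a := -1), Real.arctan_neg, Real.arctan_one,
    neg_lt_iff_pos_add]

theorem mul_div_one_add_sq_sq_le_one {u v : ℝ} (hv0 : 0 ≤ v) (hv1 : v ≤ 1) :
    u * v / (1 + u ^ 2) ^ 2 ≤ 1 := by
  rw [div_le_one (by positivity)]
  calc u * v ≤ |u| * 1 := by
        gcongr
        exact le_abs_self u
    _ ≤ (1 + u ^ 2) ^ 2 := by nlinarith [sq_abs u, sq_nonneg (|u| - 1), sq_nonneg u]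

theorem mul_div_one_add_sq_sq_le_neg {u v c : ℝ} (hc : 0 ≤ c) (hv : c ≤ v) (hu : -1 ≤ u)
    (hu' : u ≤ -(1 / 2)) : u * v / (1 + u ^ 2) ^ 2 ≤ -(c / 8) := by
  have hden : (1 + u ^ 2) ^ 2 ≤ 4 := by
    have : u ^ 2 ≤ 1 := by nlinarith
    nlinarith
  rw [div_le_iff₀ (by positivity)]
  calc u * v ≤ -(1 / 2) * c := by nlinarith
    _ ≤ -(c / 8) * (1 + u ^ 2) ^ 2 := by nlinarith

theorem exists_generator_arctan_le {C M c : ℝ} (hC : 0 < C) (hM : 0 ≤ M) (hc : 0 < c) :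
    ∃ κ ≥ 1, ∃ Λ > 0, ∀ u > -1, ∀ v ∈ Set.Icc c 1,
      (C / κ * u ^ 2 + 2 * M * κ) / (1 + u ^ 2) + κ ^ 2 * (u * v / (1 + u ^ 2) ^ 2)
        ≤ Λ * (Real.arctan u + Real.pi / 4) := by
  obtain ⟨κ, hκ, hκ1⟩ : ∃ κ ≥ 8 * (C + 2 * M) / c, 1 ≤ κ :=
    ⟨max _ 1, le_max_left _ _, le_max_right _ _⟩
  have hκ0 : 0 < κ := by linarith
  have hκc : 8 * (C + 2 * M) ≤ κ * c := (div_le_iff₀ hc).mp hκ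
  have hη : 0 < Real.arctan (-(1 / 2)) + Real.pi / 4 :=
    arctan_add_pi_div_four_pos_iff.mpr (by norm_num)
  set η := Real.arctan (-(1 / 2)) + Real.pi / 4
  refine ⟨κ, hκ1, (C + 2 * M * κ + κ ^ 2) / η, by positivity, fun u hu v hv => ?_⟩
  have hdrift : (C / κ * u ^ 2 + 2 * M * κ) / (1 + u ^ 2) ≤ C + 2 * M * κ := by
    rw [div_le_iff₀ (by positivity)]
    have : C / κ ≤ C := div_le_self hC.le hκ1
    nlinarith [mul_nonneg (mul_nonneg hM hκ0.le) (sq_nonneg u),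
      mul_nonneg (sub_nonneg.mpr this) (sq_nonneg u)]
  rcases le_or_gt u (-(1 / 2)) with hu' | hu'
  · -- Here the diffusion term is negative and, for large `κ`, beats the drift term.
    calc _ ≤ C + 2 * M * κ + κ ^ 2 * -(c / 8) := by
          grw [hdrift, mul_div_one_add_sq_sq_le_neg hc.le hv.1 hu.le hu']
      _ ≤ 0 := by nlinarith
      _ ≤ _ := mul_nonneg (by positivity) (arctan_add_pi_div_four_pos_iff.mpr hu).le
  · calc _ ≤ C + 2 * M * κ + κ ^ 2 * 1 := by
          grw [hdrift, mul_div_one_add_sq_sq_le_one (hc.le.trans hv.1) hv.2]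
      _ = (C + 2 * M * κ + κ ^ 2) / η * η := by field_simp
      _ ≤ _ := by
          gcongr
          exact add_le_add_left (Real.arctan_mono hu'.le) _

variable {q n : ℕ} {β : ℝ}

theorem le_glauberKernel_mulVec_arctan (hn : 0 < n) {σ : Fin n → Fin q} {k : Fin q}
    {κ ν a C M E Λ u : ℝ} (hκ : 0 < κ) (hν : 0 < ν) (hνn : ν ^ 3 = n) (hE : 0 ≤ E)
    (hu : κ * ν * (colorFrac σ k - a) = u)
    (hmean : -C * (colorFrac σ k - a) ^ 2 - 2 * (M / ν ^ 2) - E ≤ meanIncr β σ k)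
    (hgen : (C / κ * u ^ 2 + 2 * M * κ) / (1 + u ^ 2)
      + κ ^ 2 * (u * meanSqIncr β σ k / (1 + u ^ 2) ^ 2) ≤ Λ * (Real.arctan u + Real.pi / 4)) :
    Real.arctan u - Λ / ν ^ 4 * (Real.arctan u + Real.pi / 4) - κ / ν ^ 2 * E - 7 * κ ^ 3 / ν ^ 6
      ≤ (glauberKernel q n β *ᵥ fun τ => Real.arctan (κ * ν * (colorFrac τ k - a))) σ := by
  have htaylor := (abs_le.1 (abs_glauberKernel_mulVec_arctan_sub_le hn β σ k
    (by positivity : 0 ≤ κ * ν) ((add_zero _).trans hu))).1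
  simp only [add_zero] at htaylor
  have hdist : colorFrac σ k - a = u / (κ * ν) := by rw [← hu]; field_simp
  have hdrift : -((C / κ * u ^ 2 + 2 * M * κ) / (1 + u ^ 2) / ν ^ 4) - κ / ν ^ 2 * E
      ≤ κ * ν / (1 + u ^ 2) * meanIncr β σ k / n := by
    calc _ ≤ -((C / κ * u ^ 2 + 2 * M * κ) / (1 + u ^ 2) / ν ^ 4)
          - κ / ν ^ 2 * E / (1 + u ^ 2) := by
          gcongr
          exact div_le_self (by positivity) (le_add_of_nonneg_right (sq_nonneg u))
      _ = κ * ν / (1 + u ^ 2)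
          * (-C * (colorFrac σ k - a) ^ 2 - 2 * (M / ν ^ 2) - E) / n := by
          rw [hdist, ← hνn]
          field_simp
          ring
      _ ≤ _ := by gcongr
  have hdiffusion : u * (κ * ν) ^ 2 / (1 + u ^ 2) ^ 2 * meanSqIncr β σ k / n ^ 2
      = κ ^ 2 * (u * meanSqIncr β σ k / (1 + u ^ 2) ^ 2) / ν ^ 4 := by
    rw [← hνn]
    field_simp
  have herr : 7 * (κ * ν / n) ^ 3 = 7 * κ ^ 3 / ν ^ 6 := by
    rw [← hνn]
    field_simp
  have hgenν := div_le_div_of_nonneg_right hgen (by positivity : 0 ≤ ν ^ 4)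
  rw [add_div, mul_div_right_comm Λ] at hgenν
  linarith

/-- A function that is large on configurations where color `k` has proportion above the degenerate
zero `a` of the critical drift and the other colors are balanced, used to bound from below the time
spent there; `s` is the inverse width of the transition at `a` and `A` penalizes imbalance. -/
noncomputable def bottleneckFun (s a A : ℝ) (k : Fin q) (σ : Fin n → Fin q) : ℝ :=
  Real.arctan (s * (colorFrac σ k - a)) + Real.pi / 4 - A * colorSpread k σ

section Basic

variable {s a A : ℝ} {σ : Fin n → Fin q} {k : Fin q}

theorem bottleneckFun_le (hA : 0 ≤ A) : bottleneckFun s a A k σ ≤ 3 * Real.pi / 4 := by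
  have := mul_nonneg hA (colorSpread_nonneg k σ)
  rw [bottleneckFun]
  linarith [Real.arctan_lt_pi_div_two (s * (colorFrac σ k - a))]

theorem neg_one_lt_of_bottleneckFun_pos (hA : 0 ≤ A) (h : 0 < bottleneckFun s a A k σ) :
    -1 < s * (colorFrac σ k - a) := by
  rw [bottleneckFun] at h
  exact arctan_add_pi_div_four_pos_iff.mp
    (by linarith [mul_nonneg hA (colorSpread_nonneg k σ)])

theorem sub_inv_lt_colorFrac_of_bottleneckFun_pos (hs : 0 < s) (hA : 0 ≤ A)
    (h : 0 < bottleneckFun s a A k σ) : a - s⁻¹ < colorFrac σ k := by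
  have := (div_lt_iff₀' hs).mpr (neg_one_lt_of_bottleneckFun_pos hA h)
  rw [neg_div, one_div] at this
  linarith

theorem colorSpread_le_of_bottleneckFun_pos (hA : 0 < A) (h : 0 < bottleneckFun s a A k σ) :
    colorSpread k σ ≤ 3 / A := by
  rw [bottleneckFun] at h
  rw [le_div_iff₀ hA]
  linarith [Real.arctan_lt_pi_div_two (s * (colorFrac σ k - a)), Real.pi_lt_four]

theorem colorFrac_const (hn : 0 < n) (k j : Fin q) :
    colorFrac (fun _ : Fin n => k) j = if k = j then 1 else 0 := by
  have hn' : (n : ℝ) ≠ 0 := by positivity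
  split_ifs with h <;> simp [colorFrac, colorCount_apply, h, hn']

theorem colorSpread_const (hn : 0 < n) (k : Fin q) : colorSpread k (fun _ : Fin n => k) = 0 :=
  sum_eq_zero fun j hj => by
    simp [otherMean, colorFrac_const hn, (ne_of_mem_erase hj).symm]

theorem le_bottleneckFun_const (hn : 0 < n) (hs : 0 < s) (ha : a < 1) (A : ℝ) (k : Fin q) :
    3 * Real.pi / 4 - (s * (1 - a))⁻¹ ≤ bottleneckFun s a A k (fun _ : Fin n => k) := by
  have hpos : 0 < s * (1 - a) := mul_pos hs (by linarith)
  have harctan : Real.arctan (s * (1 - a))⁻¹ ≤ (s * (1 - a))⁻¹ := by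
    refine (Real.le_tan (Real.arctan_nonneg.mpr (inv_nonneg.mpr hpos.le))
      (Real.arctan_lt_pi_div_two _)).trans_eq (Real.tan_arctan _)
  rw [Real.arctan_inv_of_pos hpos] at harctan
  rw [bottleneckFun, colorFrac_const hn, if_pos rfl, colorSpread_const hn]
  linarith

theorem glauberKernel_mulVec_bottleneckFun (hn : 0 < n) (β s a A : ℝ) (k : Fin q)
    (σ : Fin n → Fin q) :
    (glauberKernel q n β *ᵥ bottleneckFun s a A k) σ
      = (glauberKernel q n β *ᵥ fun τ => Real.arctan (s * (colorFrac τ k - a))) σ + Real.pi / 4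
        - A * (glauberKernel q n β *ᵥ colorSpread k) σ := by
  have hconst : glauberKernel q n β *ᵥ (fun _ => Real.pi / 4) = fun _ => Real.pi / 4 :=
    funext fun σ => dotProduct_const_of_mem_stdSimplex
      (row_mem_stdSimplex_of_mem_rowStochastic (glauberKernel_mem_rowStochastic hn β) σ) _
  have hfun : bottleneckFun (n := n) s a A k
      = (fun τ => Real.arctan (s * (colorFrac τ k - a))) + (fun _ => Real.pi / 4)
        - A • colorSpread k := rfl
  rw [hfun, Matrix.mulVec_sub, Matrix.mulVec_add, Matrix.mulVec_smul, hconst]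
  rfl

end Basic

theorem le_glauberKernel_mulVec_bottleneckFun (hn : 0 < n) {σ : Fin n → Fin q} {k : Fin q}
    {κ ν a A Λ c : ℝ} (hκ : 0 ≤ κ) (hν : 1 ≤ ν) (hνn : ν ^ 3 = n) (hA : 0 ≤ A)
    (hAc : A * c = 2 * κ * q ^ 2) (hΛ : Λ * A ≤ κ * q ^ 2 * ν)
    (harctan : Real.arctan (κ * ν * (colorFrac σ k - a))
        - Λ / ν ^ 4 * (Real.arctan (κ * ν * (colorFrac σ k - a)) + Real.pi / 4)
        - κ / ν ^ 2 * (q ^ 2 * colorSpread k σ + 4 * q / n) - 7 * κ ^ 3 / ν ^ 6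
      ≤ (glauberKernel q n β *ᵥ fun τ => Real.arctan (κ * ν * (colorFrac τ k - a))) σ)
    (hspread : (glauberKernel q n β *ᵥ colorSpread k) σ
      ≤ colorSpread k σ - c / n * colorSpread k σ + 12 * q ^ 2 / n ^ 2) :
    (1 - Λ / ν ^ 4) * bottleneckFun (κ * ν) a (A * ν) k σ
        - (4 * q * κ + 7 * κ ^ 3 + 12 * q ^ 2 * A) / ν ^ 5
      ≤ (glauberKernel q n β *ᵥ bottleneckFun (κ * ν) a (A * ν) k) σ := by
  have : 0 < ν := by linarith
  have hV := colorSpread_nonneg k σ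
  set V := colorSpread k σ with hVσ
  set y := Real.arctan (κ * ν * (colorFrac σ k - a)) + Real.pi / 4 with hy
  have hpenalty : Λ / ν ^ 4 * (A * ν * V) ≤ κ * q ^ 2 * V / ν ^ 2 :=
    calc Λ / ν ^ 4 * (A * ν * V) = Λ * A * V / ν ^ 3 := by field_simp
      _ ≤ κ * q ^ 2 * ν * V / ν ^ 3 := by gcongr
      _ = κ * q ^ 2 * V / ν ^ 2 := by field_simp
  have herr : 7 * κ ^ 3 / ν ^ 6 ≤ 7 * κ ^ 3 / ν ^ 5 := by
    gcongr
    norm_num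
  rw [glauberKernel_mulVec_bottleneckFun hn, bottleneckFun, ← hVσ, ← hy]
  calc (1 - Λ / ν ^ 4) * (y - A * ν * V)
        - (4 * q * κ + 7 * κ ^ 3 + 12 * q ^ 2 * A) / ν ^ 5
      = y - A * ν * V - Λ / ν ^ 4 * y + Λ / ν ^ 4 * (A * ν * V)
        - (4 * q * κ + 12 * q ^ 2 * A) / ν ^ 5 - 7 * κ ^ 3 / ν ^ 5 := by ring
    _ ≤ y - A * ν * V - Λ / ν ^ 4 * y + κ * q ^ 2 * V / ν ^ 2
        - (4 * q * κ + 12 * q ^ 2 * A) / ν ^ 5 - 7 * κ ^ 3 / ν ^ 6 := by gcongr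
    _ = y - Λ / ν ^ 4 * y - κ / ν ^ 2 * (q ^ 2 * V + 4 * q / n) - 7 * κ ^ 3 / ν ^ 6
        - A * ν * (V - c / n * V + 12 * q ^ 2 / n ^ 2) := by
        have hc : A * ν * (c / n * V) = 2 * κ * q ^ 2 * V / ν ^ 2 := by
          rw [← hAc, ← hνn]
          field_simp
        rw [mul_add (A * ν), mul_sub (A * ν), hc, ← hνn]
        field_simp
        ring
    _ ≤ _ := by
        grw [hspread]
        linarith

theorem le_glauberKernel_mulVec_bottleneckFun_of_pos (hq : 3 ≤ q) (hn0 : 0 < n) (hn : 2 * q ≤ n)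
    (hβ : 0 ≤ β) (hβs : β ≤ betaS q) {σ : Fin n → Fin q} {k : Fin q} {κ ν a A C M Λ : ℝ}
    (hκ : 0 < κ) (hν : 1 ≤ ν) (hνn : ν ^ 3 = n) (hA : 0 < A)
    (hAβ : A * (1 - 2 * betaS q / q) = 2 * κ * q ^ 2) (hΛ : Λ * A ≤ κ * q ^ 2 * ν)
    (hM : betaS q - β ≤ M / ν ^ 2) (hD : ∀ x ≤ 1, -C * (x - a) ^ 2 ≤ Dfun q (betaS q) x)
    (hgen : ∀ u > -1, ∀ v ∈ Set.Icc (Real.exp (-(2 * q)) / q) 1,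
      (C / κ * u ^ 2 + 2 * M * κ) / (1 + u ^ 2) + κ ^ 2 * (u * v / (1 + u ^ 2) ^ 2)
        ≤ Λ * (Real.arctan u + Real.pi / 4))
    (hAν : 3 / (A * ν) ≤ ((1 - 2 * betaS q / q) / (2 * q)) ^ 2) (ha : 1 / q + (κ * ν)⁻¹ ≤ a)
    (hpos : 0 < bottleneckFun (κ * ν) a (A * ν) k σ) :
    (1 - Λ / ν ^ 4) * bottleneckFun (κ * ν) a (A * ν) k σ
        - (4 * q * κ + 7 * κ ^ 3 + 12 * q ^ 2 * A) / ν ^ 5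
      ≤ (glauberKernel q n β *ᵥ bottleneckFun (κ * ν) a (A * ν) k) σ := by
  have hν0 : 0 < ν := by linarith
  have hq0 : (0 : ℝ) < q := by positivity
  have hβq : 2 * β ≤ q * (2 * betaS q / q) := by
    rw [mul_div_cancel₀ _ hq0.ne']
    linarith
  have hβsq := two_mul_betaS_lt hq
  have hγ : 2 * betaS q / q < 1 := (div_lt_one hq0).mpr hβsq
  have hu := neg_one_lt_of_bottleneckFun_pos (by positivity) hpos
  have hx : 1 / (q : ℝ) ≤ colorFrac σ k := by
    linarith [sub_inv_lt_colorFrac_of_bottleneckFun_pos (by positivity) (by positivity) hpos]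
  have hspread : colorSpread k σ ≤ ((1 - 2 * betaS q / q) / (2 * q)) ^ 2 :=
    (colorSpread_le_of_bottleneckFun_pos (by positivity) hpos).trans hAν
  have hspread' : colorSpread k σ ≤ (1 / q) ^ 2 := by
    refine hspread.trans (pow_le_pow_left₀ (by positivity) ?_ 2)
    have : 0 ≤ 2 * betaS q / q := div_nonneg (by linarith) hq0.le
    rw [div_le_div_iff₀ (by positivity) hq0]
    nlinarith
  have hmean := Dfun_betaS_sub_le_meanIncr hq hn0 hn hβ hβs hx hspread'
  have hV := colorSpread_nonneg k σ
  refine le_glauberKernel_mulVec_bottleneckFun hn0 hκ.le hν hνn hA.le hAβ hΛ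
    (le_glauberKernel_mulVec_arctan (C := C) (M := M) hn0 hκ hν0 hνn (by positivity) rfl ?_
      (hgen _ hu _ ⟨exp_neg_div_le_meanSqIncr (by lia) hβ (by linarith) hn0 σ k,
        meanSqIncr_le_one hn0 β σ k⟩))
    (glauberKernel_mulVec_colorSpread_le_of_le (by lia) hn0 hn hβ hβq hγ hspread hx)
  linarith [hD _ (colorFrac_le_one σ k)]

/-- The inverse temperatures below `betaS q` at distance at most `M * n ^ (-2/3)` from it, the scale
on which the mixing time is of order `n ^ (4/3)`. -/
def criticalWindow (q n : ℕ) (M : ℝ) : Set ℝ :=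
  {β ∈ Set.Icc 0 (betaS q) | betaS q - β ≤ M / cubeRoot n ^ 2}

theorem eventually_le_glauberKernel_mulVec_bottleneckFun (hq : 3 ≤ q) {κ a A C M Λ : ℝ}
    (hκ : 0 < κ) (hA : 0 < A) (hAβ : A * (1 - 2 * betaS q / q) = 2 * κ * q ^ 2)
    (ha : 1 / (q : ℝ) < a) (hD : ∀ x ≤ 1, -C * (x - a) ^ 2 ≤ Dfun q (betaS q) x)
    (hgen : ∀ u > -1, ∀ v ∈ Set.Icc (Real.exp (-(2 * q)) / q) 1,
      (C / κ * u ^ 2 + 2 * M * κ) / (1 + u ^ 2) + κ ^ 2 * (u * v / (1 + u ^ 2) ^ 2)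
        ≤ Λ * (Real.arctan u + Real.pi / 4)) :
    ∀ᶠ n : ℕ in atTop, ∀ β ∈ criticalWindow q n M, ∀ (k : Fin q) (σ : Fin n → Fin q),
        0 < bottleneckFun (κ * cubeRoot n) a (A * cubeRoot n) k σ →
        (1 - Λ / cubeRoot n ^ 4) * bottleneckFun (κ * cubeRoot n) a (A * cubeRoot n) k σ
            - (4 * q * κ + 7 * κ ^ 3 + 12 * q ^ 2 * A) / cubeRoot n ^ 5
          ≤ (glauberKernel q n β *ᵥ bottleneckFun (κ * cubeRoot n) a (A * cubeRoot n) k) σ := by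
  have hq0 : (0 : ℝ) < q := by positivity
  have hc : 0 < 1 - 2 * betaS q / q := sub_pos.mpr ((div_lt_one hq0).mpr (two_mul_betaS_lt hq))
  have hν := tendsto_cubeRoot_atTop
  filter_upwards [eventually_ge_atTop (2 * q), hν.eventually_ge_atTop 1,
    (hν.const_mul_atTop (by positivity : 0 < κ * q ^ 2)).eventually_ge_atTop (Λ * A),
    ((hν.const_mul_atTop hA).const_div_atTop 3).eventually_le_const
      (by positivity : 0 < ((1 - 2 * betaS q / q) / (2 * q)) ^ 2),
    (hν.const_mul_atTop hκ).inv_tendsto_atTop.eventually_le_const (sub_pos.mpr ha)]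
    with n hn hν1 hΛν hAν hκν β hβ k σ
  rw [Pi.inv_apply] at hκν
  exact le_glauberKernel_mulVec_bottleneckFun_of_pos hq (by lia) hn hβ.1.1 hβ.1.2 hκ
    hν1 (cubeRoot_pow_three n) hA hAβ hΛν hβ.2 hD hgen hAν (by linarith)

theorem exists_bottleneckFun (hq : 3 ≤ q) {M : ℝ} (hM : 0 ≤ M) :
    ∃ Λ > 0, ∃ C > 0, ∃ b > 1 / (q : ℝ), ∀ᶠ n : ℕ in atTop, ∀ β ∈ criticalWindow q n M,
      ∀ k : Fin q, ∃ Φ : (Fin n → Fin q) → ℝ,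
        (∀ σ, Φ σ ∈ Set.Icc 0 (3 * Real.pi / 4)) ∧
        (∀ σ, (1 - Λ / cubeRoot n ^ 4) * Φ σ - C / cubeRoot n ^ 5
          ≤ (glauberKernel q n β *ᵥ Φ) σ) ∧
        (∀ σ, 0 < Φ σ → b ≤ colorFrac σ k) ∧
        3 * Real.pi / 4 - C / cubeRoot n ≤ Φ fun _ => k := by
  obtain ⟨a, ha, h0⟩ := exists_Dfun_betaS_eq_zero hq
  obtain ⟨C, hC, hD⟩ := exists_forall_Dfun_betaS_ge hq ha h0
  have hq0 : (0 : ℝ) < q := by positivity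
  obtain ⟨κ, hκ1, Λ, hΛ, hgen⟩ :=
    exists_generator_arctan_le hC hM (by positivity : 0 < Real.exp (-(2 * q)) / q)
  have hκ : 0 < κ := by linarith
  have hc : 0 < 1 - 2 * betaS q / q := sub_pos.mpr ((div_lt_one hq0).mpr (two_mul_betaS_lt hq))
  obtain ⟨A, hA, hAβ⟩ : ∃ A > 0, A * (1 - 2 * betaS q / q) = 2 * κ * q ^ 2 :=
    ⟨2 * κ * q ^ 2 / (1 - 2 * betaS q / q), by positivity, div_mul_cancel₀ _ hc.ne'⟩
  have hdrift := eventually_le_glauberKernel_mulVec_bottleneckFun hq hκ hA hAβ ha.1 hD hgen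
  have hK : 0 < 4 * q * κ + 7 * κ ^ 3 + 12 * q ^ 2 * A := by positivity
  set K := 4 * q * κ + 7 * κ ^ 3 + 12 * q ^ 2 * A
  have ha1 : 0 < 1 - a := by linarith [ha.2]
  have hρ : 0 < (a - 1 / q) / 2 := by linarith [ha.1]
  have hν := tendsto_cubeRoot_atTop
  refine ⟨Λ, hΛ, K + (κ * (1 - a))⁻¹, by positivity, 1 / q + (a - 1 / q) / 2, by linarith, ?_⟩
  filter_upwards [hdrift, eventually_ge_atTop 1, hν.eventually_gt_atTop 0,
    (hν.const_mul_atTop hκ).inv_tendsto_atTop.eventually_le_const hρ]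
    with n hdrift hn hν0 hκν β hβ k
  rw [Pi.inv_apply] at hκν
  refine ⟨bottleneckFun (κ * cubeRoot n) a (A * cubeRoot n) k ⊔ 0, fun σ => ⟨le_sup_right,
    sup_le (bottleneckFun_le (by positivity)) (by positivity)⟩, fun σ => ?_, fun σ hσ => ?_, ?_⟩
  · grw [← le_mulVec_sup_zero_of_drift (glauberKernel_mem_rowStochastic hn β) (by positivity)
      (hdrift β hβ k σ), ← le_add_of_nonneg_right (by positivity : 0 ≤ (κ * (1 - a))⁻¹)]
  · have hpos := (lt_sup_iff.mp hσ).resolve_right (lt_irrefl _)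
    linarith [sub_inv_lt_colorFrac_of_bottleneckFun_pos (by positivity) (by positivity) hpos]
  · refine le_sup_left.trans' (le_trans ?_ (le_bottleneckFun_const hn (by positivity) ha.2 _ k))
    have hinv : (κ * cubeRoot n * (1 - a))⁻¹ = (κ * (1 - a))⁻¹ / cubeRoot n := by field_simp
    rw [hinv]
    gcongr
    exact le_add_of_nonneg_left hK.le

end BottleneckFunction

section LowerBound

open scoped Matrix

variable {q n : ℕ} {β : ℝ}

theorem exp_neg_two_mul_le_one_sub_pow {θ : ℝ} (hθ : 0 ≤ θ) (hθ1 : θ ≤ 1 / 2) (t : ℕ) :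
    Real.exp (-(2 * θ * t)) ≤ (1 - θ) ^ t := by
  have h : Real.exp (-(2 * θ)) ≤ 1 - θ := by
    rw [Real.exp_neg]
    refine inv_le_of_inv_le₀ (by linarith) (le_trans ?_ (Real.add_one_le_exp (2 * θ)))
    rw [inv_le_iff_one_le_mul₀ (by linarith)]
    nlinarith
  calc Real.exp (-(2 * θ * t)) = Real.exp (-(2 * θ)) ^ t := by rw [← Real.exp_nat_mul]; ring_nf
    _ ≤ (1 - θ) ^ t := pow_le_pow_left₀ (Real.exp_pos _).le h t

theorem le_glauberDist_of_drift (hq : 0 < q) (hn : 0 < n) {Φ Ψ : (Fin n → Fin q) → ℝ}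
    {R θ δ θ' δ' : ℝ} (hR : 1 ≤ R) (hθ : 0 ≤ θ) (hθ1 : θ ≤ 1) (hδ : 0 ≤ δ) (hθ' : 0 < θ')
    (hΦ : ∀ σ, Φ σ ∈ Set.Icc 0 R) (hΨ : ∀ σ, 0 ≤ Ψ σ) (hΦΨ : ∀ σ, 0 < Φ σ → 1 ≤ Ψ σ)
    (hΦP : ∀ σ, (1 - θ) * Φ σ - δ ≤ (glauberKernel q n β *ᵥ Φ) σ)
    (hΨP : ∀ σ, (glauberKernel q n β *ᵥ Ψ) σ ≤ (1 - θ') * Ψ σ + δ') {e : ℝ} (he : 0 ≤ e)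
    {σ : Fin n → Fin q} (hσ : R - e ≤ Φ σ) (t : ℕ) :
    (1 - θ) ^ t - e - t * δ - δ' / θ' ≤ glauberDist q n β t := by
  have hP := glauberKernel_mem_rowStochastic (q := q) hn β
  have hμ := pottsMeasure_mem_stdSimplex hq n β
  set A := {τ : Fin n → Fin q | 0 < Φ τ}
  have hΦA : Φ ≤ R • A.indicator 1 := fun τ => by
    by_cases h : 0 < Φ τ
    · simpa [A, h] using (hΦ τ).2
    · simpa [A, h] using not_lt.mp h
  have hAΨ : A.indicator 1 ≤ Ψ := fun τ => Set.indicator_apply_le' (hΦΨ τ) fun _ => hΨ τ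
  have hstat : pottsMeasure q n β ⬝ᵥ A.indicator 1 ≤ δ' / θ' :=
    (dotProduct_mono_of_mem_stdSimplex hμ hAΨ).trans
      (dotProduct_le_of_vecMul_eq_of_drift hμ (pottsMeasure_vecMul_glauberKernel hn β) hθ' hΨP)
  have hiter : (1 - θ) ^ t * Φ σ - t * δ ≤ R * (glauberKernel q n β ^ t *ᵥ A.indicator 1) σ :=
    (le_pow_mulVec_of_drift hP hθ hθ1 hδ hΦP t σ).trans
      ((mulVec_mono_of_mem_rowStochastic (pow_mem hP t) hΦA σ).trans_eq
        (congrFun (Matrix.mulVec_smul _ _ _) σ))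
  have hp0 : 0 ≤ (1 - θ) ^ t := pow_nonneg (by linarith) t
  have hmass : (1 - θ) ^ t - e - t * δ ≤ (glauberKernel q n β ^ t *ᵥ A.indicator 1) σ := by
    refine le_of_mul_le_mul_left ?_ (by linarith : 0 < R)
    have herr : e + t * δ ≤ R * (e + t * δ) := le_mul_of_one_le_left (by positivity) hR
    have hpe : (1 - θ) ^ t * e ≤ e :=
      mul_le_of_le_one_left he (pow_le_one₀ (by linarith) (by linarith))
    have := mul_le_mul_of_nonneg_left hσ hp0
    linarith
  linarith [indicator_sub_le_glauberDist β t σ A]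

theorem exists_forall_le_glauberDist (hq : 3 ≤ q) {M : ℝ} (hM : 0 ≤ M) :
    ∃ L > 0, ∀ T, ∀ η > 0, ∀ᶠ n : ℕ in atTop, ∀ β ∈ criticalWindow q n M,
      ∀ t : ℕ, t ≤ T * cubeRoot n ^ 4 → Real.exp (-(L * T)) - η ≤ glauberDist q n β t := by
  obtain ⟨Λ, hΛ, C, hC, b, hb, hbottle⟩ := exists_bottleneckFun hq hM
  obtain ⟨θ, hθ, C', hC', hlyap⟩ := exists_lyapunov hq (sub_pos.mpr hb)
  refine ⟨2 * Λ, by positivity, fun T η hη => ?_⟩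
  have hν := tendsto_cubeRoot_atTop
  filter_upwards [hbottle, hlyap, eventually_ge_atTop 1, hν.eventually_ge_atTop 1,
    hν.eventually_ge_atTop (2 * Λ), hν.eventually_ge_atTop ((C + T * C + C' / θ) / η)]
    with n hbottle hlyap hn hν1 hΛν hην β hβ t ht
  have hq0 : 0 < q := by lia
  obtain ⟨Φ, hΦ, hΦP, hΦpos, hΦconst⟩ := hbottle β hβ ⟨0, hq0⟩
  obtain ⟨Ψ, hΨ, hΨP, hΨ1⟩ := hlyap β hβ.1 ⟨0, hq0⟩
  set ν := cubeRoot n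
  have hν0 : 0 < ν := by linarith
  have hθν : Λ / ν ^ 4 ≤ 1 / 2 := by
    rw [div_le_iff₀ (by positivity)]
    linarith [le_self_pow₀ hν1 four_ne_zero]
  have hexp : Real.exp (-(2 * Λ * T)) ≤ (1 - Λ / ν ^ 4) ^ t := by
    refine le_trans (Real.exp_le_exp.mpr (neg_le_neg ?_))
      (exp_neg_two_mul_le_one_sub_pow (by positivity) hθν t)
    calc 2 * (Λ / ν ^ 4) * t ≤ 2 * (Λ / ν ^ 4) * (T * ν ^ 4) := by gcongr
      _ = 2 * Λ * T := by field_simp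
  have hescape : t * (C / ν ^ 5) ≤ T * C / ν :=
    calc t * (C / ν ^ 5) ≤ T * ν ^ 4 * (C / ν ^ 5) := by gcongr
      _ = T * C / ν := by field_simp
  have hstat : C' / ν ^ 6 / (θ / ν ^ 4) ≤ C' / θ / ν := by
    calc C' / ν ^ 6 / (θ / ν ^ 4) = C' / θ / ν ^ 2 := by field_simp
      _ ≤ C' / θ / ν := by gcongr; exact le_self_pow₀ hν1 two_ne_zero
  have herr : C / ν + T * C / ν + C' / θ / ν ≤ η := by
    rw [← add_div, ← add_div]
    exact (div_le_comm₀ hη hν0).mp hην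
  have hdist := le_glauberDist_of_drift hq0 hn (by linarith [Real.pi_gt_three]) (by positivity)
    (hθν.trans (by norm_num)) (by positivity) (by positivity) hΦ (fun σ => (hΨ σ).1)
    (fun σ hσ => hΨ1 σ (by linarith [hΦpos σ hσ])) hΦP hΨP (by positivity) hΦconst t
  linarith

end LowerBound

section MixingTime

variable {q : ℕ}

theorem exists_forall_mixingTime_le (hq : 3 ≤ q) {ε : ℝ} (hε : 0 < ε) :
    ∃ C > 0, ∀ᶠ n : ℕ in atTop, ∀ β ∈ Set.Icc 0 (betaS q),
      mixingTime q n β ε ≤ C * cubeRoot n ^ 4 ∧ glauberDist q n β (mixingTime q n β ε) ≤ ε := by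
  obtain ⟨C, hC, h⟩ := exists_forall_exists_glauberDist_le hq hε
  refine ⟨C, hC, h.mono fun n h β hβ => ?_⟩
  obtain ⟨t, ht, htε⟩ := h β hβ
  exact ⟨ht.trans' (Nat.cast_le.mpr (Nat.sInf_le htε)),
    Nat.sInf_mem (s := {t | glauberDist q n β t ≤ ε}) ⟨t, htε⟩⟩

theorem exists_forall_le_mixingTime (hq : 3 ≤ q) {M : ℝ} (hM : 0 ≤ M) :
    ∃ L > 0, ∀ T, ∀ ε > 0, ε < Real.exp (-(L * T)) →
      ∀ᶠ n : ℕ in atTop, ∀ β ∈ criticalWindow q n M, T * cubeRoot n ^ 4 ≤ mixingTime q n β ε := by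
  obtain ⟨L, hL, hlow⟩ := exists_forall_le_glauberDist hq hM
  refine ⟨L, hL, fun T ε hε hT => ?_⟩
  obtain ⟨_, -, hup⟩ := exists_forall_mixingTime_le hq hε
  filter_upwards [hlow T _ (half_pos (sub_pos.mpr hT)), hup] with n hlow hup β hβ
  by_contra! hlt
  linarith [hlow β hβ _ hlt.le, (hup β hβ.1).2]

theorem exists_eventually_mixingTime_mem_Icc (hq : 3 ≤ q) {M : ℝ} (hM : 0 ≤ M) {β : ℕ → ℝ}
    (hβ : ∀ᶠ n in atTop, β n ∈ criticalWindow q n M) {ε : ℝ} (hε : ε ∈ Set.Ioo 0 1) :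
    ∃ c > 0, ∃ C > 0, ∀ᶠ n : ℕ in atTop, (mixingTime q n (β n) ε : ℝ)
      ∈ Set.Icc (c * (n : ℝ) ^ (4 / 3 : ℝ)) (C * (n : ℝ) ^ (4 / 3 : ℝ)) := by
  obtain ⟨C, hC, hup⟩ := exists_forall_mixingTime_le hq hε.1
  obtain ⟨L, hL, hlow⟩ := exists_forall_le_mixingTime hq hM
  have hlog : Real.log ε < 0 := Real.log_neg hε.1 hε.2
  have hc : 0 < -Real.log ε / (2 * L) := div_pos (neg_pos.mpr hlog) (by positivity)
  have hεc : ε < Real.exp (-(L * (-Real.log ε / (2 * L)))) := by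
    have : L * (-Real.log ε / (2 * L)) = -Real.log ε / 2 := by field_simp
    rw [← Real.log_lt_iff_lt_exp hε.1]
    linarith
  refine ⟨_, hc, C, hC, ?_⟩
  filter_upwards [hlow _ ε hε.1 hεc, hup, hβ] with n hlow hup hβ
  exact cubeRoot_pow n 4 ▸ ⟨hlow _ hβ, (hup _ hβ.1).1⟩

theorem exists_eventually_two_mul_mixingTime_le (hq : 3 ≤ q) {M : ℝ} (hM : 0 ≤ M) {β : ℕ → ℝ}
    (hβ : ∀ᶠ n in atTop, β n ∈ criticalWindow q n M) {ε : ℝ} (hε : 0 < ε) :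
    ∃ δ > 0, δ < ε ∧ ∀ᶠ n : ℕ in atTop,
      2 * (mixingTime q n (β n) ε : ℝ) ≤ mixingTime q n (β n) δ := by
  obtain ⟨C, -, hup⟩ := exists_forall_mixingTime_le hq hε
  obtain ⟨L, -, hlow⟩ := exists_forall_le_mixingTime hq hM
  obtain ⟨δ, hδ, hδ'⟩ := exists_between (lt_min hε (Real.exp_pos (-(L * (2 * C)))))
  obtain ⟨hδε, hδL⟩ := lt_min_iff.mp hδ'
  refine ⟨δ, hδ, hδε, ?_⟩
  filter_upwards [hlow _ δ hδ hδL, hup, hβ] with n hlow hup hβ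
  linarith [hlow _ hβ, (hup _ hβ.1).1]

theorem eventually_betaS_sub_mem_criticalWindow (hq : 3 ≤ q) {ξ : ℕ → ℝ} {M : ℝ}
    (hξ : ∀ n, 0 ≤ ξ n) (hM : ∀ᶠ n : ℕ in atTop, (n : ℝ) ^ (2 / 3 : ℝ) * ξ n ≤ M) :
    ∀ᶠ n in atTop, betaS q - ξ n ∈ criticalWindow q n M := by
  have hlim : Tendsto (fun n => M / cubeRoot n ^ 2) atTop (nhds 0) :=
    ((tendsto_pow_atTop two_ne_zero).comp tendsto_cubeRoot_atTop).const_div_atTop M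
  filter_upwards [hM, tendsto_cubeRoot_atTop.eventually_gt_atTop 0,
    hlim.eventually_le_const (betaS_pos hq)] with n hM hν hn
  have hξM : ξ n ≤ M / cubeRoot n ^ 2 := by
    rw [le_div_iff₀' (by positivity), cubeRoot_pow]
    exact hM
  exact ⟨⟨by linarith, by linarith [hξ n]⟩, by linarith⟩

theorem two_le_limsup_div {f g h : ℕ → ℝ} {c C : ℝ} (hc : 0 < c) (hC : 0 ≤ C)
    (hh : ∀ᶠ n in atTop, 0 < h n)
    (hfg : ∀ᶠ n in atTop, 2 * g n ≤ f n) (hg : ∀ᶠ n in atTop, c * h n ≤ g n)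
    (hf : ∀ᶠ n in atTop, f n ≤ C * h n) : 2 ≤ limsup (fun n => f n / g n) atTop := by
  have hgpos : ∀ᶠ n in atTop, 0 < g n := by
    filter_upwards [hh, hg] with n hh hg
    exact hg.trans_lt' (by positivity)
  refine le_limsup_of_frequently_le (Eventually.frequently ?_)
    (isBoundedUnder_of_eventually_le (a := C / c) ?_)
  · filter_upwards [hgpos, hfg] with n hgpos hfg
    exact (le_div_iff₀ hgpos).mpr hfg
  · filter_upwards [hgpos, hg, hf] with n hgpos hg hf
    rw [div_le_div_iff₀ hgpos hc]
    calc f n * c ≤ C * h n * c := by gcongr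
      _ = C * (c * h n) := by ring
      _ ≤ C * g n := by gcongr

end MixingTime

/-- **Theorem B, part 2 (critical window: power-law mixing, no cutoff).**
Let `q ≥ 3` and `β(n) = β_s(q) − ξ(n)` with `ξ(n) ≥ 0` and
`limsup n^{2/3} ξ(n) < ∞`. Then for every `ε ∈ (0,1)` the mixing time is of
order `n^{4/3}`, and the family of chains does not exhibit cutoff. -/
theorem critical_window_mixing (q : ℕ) (hq : 3 ≤ q) (ξ : ℕ → ℝ)
    (hξnonneg : ∀ n, 0 ≤ ξ n)
    (hξbdd : ∃ M : ℝ, ∀ᶠ n : ℕ in atTop, (n : ℝ) ^ ((2 : ℝ) / 3) * ξ n ≤ M) :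
    (∀ ε ∈ Set.Ioo (0 : ℝ) 1, ∃ c C : ℝ, 0 < c ∧ 0 < C ∧
        ∀ᶠ n : ℕ in atTop,
          c * (n : ℝ) ^ ((4 : ℝ) / 3) ≤ (mixingTime q n (betaS q - ξ n) ε : ℝ) ∧
          (mixingTime q n (betaS q - ξ n) ε : ℝ) ≤ C * (n : ℝ) ^ ((4 : ℝ) / 3)) ∧
      ∃ δ ε : ℝ, 0 < δ ∧ δ < ε ∧ ε < 1 ∧
        1 < limsup (fun n : ℕ =>
              (mixingTime q n (betaS q - ξ n) δ : ℝ) /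
                (mixingTime q n (betaS q - ξ n) ε : ℝ)) atTop := by
  obtain ⟨M, hM⟩ := hξbdd
  have hM0 : 0 ≤ M := by
    obtain ⟨n, hn⟩ := hM.exists
    exact (mul_nonneg (by positivity) (hξnonneg n)).trans hn
  have hβ := eventually_betaS_sub_mem_criticalWindow hq hξnonneg hM
  refine ⟨fun ε hε => ?_, ?_⟩
  · obtain ⟨c, hc, C, hC, h⟩ := exists_eventually_mixingTime_mem_Icc hq hM0 hβ hε
    exact ⟨c, C, hc, hC, h⟩
  have hhalf : (1 / 2 : ℝ) ∈ Set.Ioo 0 1 := ⟨one_half_pos, one_half_lt_one⟩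
  obtain ⟨δ, hδ, hδε, hgap⟩ := exists_eventually_two_mul_mixingTime_le hq hM0 hβ hhalf.1
  obtain ⟨c, hc, _, -, hlow⟩ := exists_eventually_mixingTime_mem_Icc hq hM0 hβ hhalf
  obtain ⟨_, -, C, hC, hup⟩ :=
    exists_eventually_mixingTime_mem_Icc hq hM0 hβ ⟨hδ, hδε.trans hhalf.2⟩
  have hscale : ∀ᶠ n : ℕ in atTop, 0 < (n : ℝ) ^ (4 / 3 : ℝ) :=
    (eventually_gt_atTop 0).mono fun n hn => by positivity
  exact ⟨δ, 1 / 2, hδ, hδε, hhalf.2, one_lt_two.trans_le <| two_le_limsup_div hc hC.le hscale hgap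
    (hlow.mono fun n hn => hn.1) (hup.mono fun n hn => hn.2)⟩
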